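/- arXiv:1906.04773 — 3 statements merged into one kernel-verified Lean document; each statement's English description precedes it below -/
import Mathlib

section
/- Let φ : X → X' and ψ : Y → Y' be weak equivalences of retractive spaces over B, where all four retractive spaces are f-cofibrant and the projections p_X : X → B and p_{X'} : X' → B are Serre fibrations. Then the induced map of internal smash products φ ∧_B ψ : X ∧_B Y → X' ∧_B Y' is a weak equivalence. -/
open unitInterval Topology

/-- A continuous map `p : X → B` is a *Hurewicz fibration* if the map
`C([0,1],X) → X ×_B C([0,1],B)`, `γ ↦ (γ 0, p ∘ γ)`, admits a continuous section, i.e. there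
is a continuous path-lifting function. -/
def IsHurewiczFibration {X B : Type*} [TopologicalSpace X] [TopologicalSpace B]
    (p : C(X, B)) : Prop :=
  ∃ s : C({q : X × C(I, B) // p q.1 = q.2 0}, C(I, X)),
    ∀ q : {q : X × C(I, B) // p q.1 = q.2 0},
      s q 0 = q.1.1 ∧ ∀ t : I, p (s q t) = q.1.2 t

/-- A continuous map `i : X → Y` is an *h-cofibration* if it is a closed embedding and
`(Y × {0}) ∪ (i(X) × [0,1])` is a retract of `Y × [0,1]`. -/
def IsHCofibration {X Y : Type*} [TopologicalSpace X] [TopologicalSpace Y]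
    (i : C(X, Y)) : Prop :=
  IsClosedEmbedding (⇑i) ∧
  ∃ r : C(Y × I, Y × I),
    (∀ z : Y × I, (r z).2 = 0 ∨ (r z).1 ∈ Set.range ⇑i) ∧
    ∀ z : Y × I, (z.2 = 0 ∨ z.1 ∈ Set.range ⇑i) → r z = z

/-- A map `i : X → Y` of spaces over `B` (where `pY : Y → B` is the structure map of `Y`)
is an *f-cofibration over `B`* if it is a closed embedding and `(Y × {0}) ∪ (i(X) × [0,1])`
is a retract of `Y × [0,1]` via a retraction commuting with the projections to `B`. -/
def IsFCofibration {X Y B : Type*} [TopologicalSpace X] [TopologicalSpace Y]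
    [TopologicalSpace B] (i : C(X, Y)) (pY : C(Y, B)) : Prop :=
  IsClosedEmbedding (⇑i) ∧
  ∃ r : C(Y × I, Y × I),
    (∀ z : Y × I, (r z).2 = 0 ∨ (r z).1 ∈ Set.range ⇑i) ∧
    (∀ z : Y × I, (z.2 = 0 ∨ z.1 ∈ Set.range ⇑i) → r z = z) ∧
    ∀ z : Y × I, pY (r z).1 = pY z.1

/-- The map induced by `f` on path components. -/
def inducedZerothHomotopy {X Y : Type*} [TopologicalSpace X] [TopologicalSpace Y]
    (f : C(X, Y)) : ZerothHomotopy X → ZerothHomotopy Y :=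
  Quotient.map' f (fun _ _ h => Nonempty.map (fun p => p.map f.continuous) h)

/-- The map induced by `f` on generalized loops. -/
def inducedGenLoop {N : Type*} {X Y : Type*} [TopologicalSpace X] [TopologicalSpace Y]
    (f : C(X, Y)) {x : X} (p : GenLoop N X x) : GenLoop N Y (f x) :=
  ⟨f.comp p.1, fun y hy => by
    simp only [ContinuousMap.comp_apply]
    rw [p.2 y hy]⟩

/-- The map induced by `f : X → Y` on homotopy groups `π_N(X, x) → π_N(Y, f x)`. -/
def inducedHomotopyGroup (N : Type*) {X Y : Type*} [TopologicalSpace X] [TopologicalSpace Y]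
    (f : C(X, Y)) (x : X) : HomotopyGroup N X x → HomotopyGroup N Y (f x) :=
  Quotient.map' (inducedGenLoop f)
    (fun p q h => by
      obtain ⟨H⟩ := h
      exact ⟨{ toContinuousMap := f.comp H.toContinuousMap
               map_zero_left := fun y => congrArg f (H.map_zero_left y)
               map_one_left := fun y => congrArg f (H.map_one_left y)
               prop' := fun t y hy => congrArg f (H.prop' t y hy) }⟩)

/-- A continuous map is a *weak homotopy equivalence* if it induces a bijection on path
components and bijections on all homotopy groups at every basepoint. -/
def IsWeakHomotopyEquiv {X Y : Type*} [TopologicalSpace X] [TopologicalSpace Y]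
    (f : C(X, Y)) : Prop :=
  Function.Bijective (inducedZerothHomotopy f) ∧
  ∀ (n : ℕ) (x : X), Function.Bijective (inducedHomotopyGroup (Fin n) f x)

/-- A continuous map is a *Serre fibration* if it has the homotopy lifting property with
respect to the inclusions `Dⁿ × {0} → Dⁿ × [0,1]` for all `n ≥ 0`. -/
def IsSerreFibration {X B : Type*} [TopologicalSpace X] [TopologicalSpace B]
    (p : C(X, B)) : Prop :=
  ∀ (n : ℕ)
    (u : C((Metric.closedBall (0 : EuclideanSpace ℝ (Fin n)) 1 : Set _), X))
    (v : C((Metric.closedBall (0 : EuclideanSpace ℝ (Fin n)) 1 : Set _) × I, B)),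
    (∀ y, v (y, 0) = p (u y)) →
    ∃ w : C((Metric.closedBall (0 : EuclideanSpace ℝ (Fin n)) 1 : Set _) × I, X),
      (∀ y, w (y, 0) = u y) ∧ ∀ z, p (w z) = v z

section InternalSmash

variable {B X Y X' Y' : Type*} [TopologicalSpace B] [TopologicalSpace X]
  [TopologicalSpace Y] [TopologicalSpace X'] [TopologicalSpace Y']

/-- The relation generating the internal smash product `X ∧_B Y` on the fiber product
`X ×_B Y`:  `(x, i_Y (p_X x)) ∼ (i_X (p_X x), i_Y (p_X x))` and
`(i_X (p_Y y), y) ∼ (i_X (p_Y y), i_Y (p_Y y))`. -/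
def ISmashRel (iX : C(B, X)) (pX : C(X, B)) (iY : C(B, Y)) (pY : C(Y, B)) :
    {z : X × Y // pX z.1 = pY z.2} → {z : X × Y // pX z.1 = pY z.2} → Prop := fun z w =>
  (∃ x, z.1 = (x, iY (pX x)) ∧ w.1 = (iX (pX x), iY (pX x))) ∨
  (∃ y, z.1 = (iX (pY y), y) ∧ w.1 = (iX (pY y), iY (pY y)))

/-- The total space of the internal smash product `X ∧_B Y`. -/
abbrev ISmash (iX : C(B, X)) (pX : C(X, B)) (iY : C(B, Y)) (pY : C(Y, B)) : Type _ :=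
  Quot (ISmashRel iX pX iY pY)

/-- The map `φ ∧_B ψ` induced on internal smash products by maps `φ : X → X'` and
`ψ : Y → Y'` of retractive spaces over `B`. -/
def iSmashMap (iX : C(B, X)) (pX : C(X, B)) (iY : C(B, Y)) (pY : C(Y, B))
    (iX' : C(B, X')) (pX' : C(X', B)) (iY' : C(B, Y')) (pY' : C(Y', B))
    (φ : C(X, X')) (ψ : C(Y, Y'))
    (hφi : ∀ b, φ (iX b) = iX' b) (hφp : ∀ x, pX' (φ x) = pX x)
    (hψi : ∀ b, ψ (iY b) = iY' b) (hψp : ∀ y, pY' (ψ y) = pY y) :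
    C(ISmash iX pX iY pY, ISmash iX' pX' iY' pY') :=
  ⟨Quot.lift
      (fun z => Quot.mk _ ⟨(φ z.1.1, ψ z.1.2), by rw [hφp, hψp]; exact z.2⟩)
      (by
        rintro ⟨z, hzp⟩ ⟨w, hwp⟩ (⟨x, hz, hw⟩ | ⟨y, hz, hw⟩) <;> apply Quot.sound <;>
          simp only at hz hw <;> subst hz <;> subst hw
        · exact Or.inl ⟨φ x, by simp [hψi, hφp], by simp [hψi, hφi, hφp]⟩
        · exact Or.inr ⟨ψ y, by simp [hφi, hψp], by simp [hψi, hφi, hψp]⟩),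
    continuous_quot_lift _ (continuous_quot_mk.comp (by fun_prop))⟩

/-- Scaling factor of the radial projection of `[0,1]ⁿ × [0,1]` from the point `(centre, 2)`
onto the bottom and the sides. It equals `1` exactly on the bottom and the sides. -/
noncomputable def cubeRadius {n : ℕ} (k : (Fin n → I) × I) : ℝ :=
  max ‖fun i => 2 * (k.1 i : ℝ) - 1‖ ((2 - k.2) / 2)

/-- The radial projection of `[0,1]ⁿ × [0,1]` onto the bottom and the sides. -/
noncomputable def cubeRetract {n : ℕ} (k : (Fin n → I) × I) : (Fin n → I) × I :=
  (fun i => Set.projIcc 0 1 zero_le_one ((1 + (2 * (k.1 i : ℝ) - 1) / cubeRadius k) / 2),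
    Set.projIcc 0 1 zero_le_one (2 - (2 - k.2) / cubeRadius k))

/-- Contraction of `[0,1]ⁿ × [0,1]` towards the point `(centre, 2)`. -/
noncomputable def cubeContract {n : ℕ} (k : (Fin n → I) × I) (s : I) : (Fin n → I) × I :=
  (fun i => Set.projIcc 0 1 zero_le_one ((1 + (2 * (k.1 i : ℝ) - 1) * (1 - s)) / 2),
    Set.projIcc 0 1 zero_le_one (2 - (2 - k.2) * (1 - s)))

lemma half_le_cubeRadius {n : ℕ} (k : (Fin n → I) × I) : 1 / 2 ≤ cubeRadius k :=
  le_max_of_le_right (by linarith [k.2.2.2])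

lemma norm_centred_le {n : ℕ} (z : Fin n → I) : ‖fun i => 2 * (z i : ℝ) - 1‖ ≤ 1 := by
  refine (pi_norm_le_iff_of_nonneg zero_le_one).2 fun i => ?_
  rw [Real.norm_eq_abs, abs_le]
  constructor <;> linarith [(z i).2.1, (z i).2.2]

lemma cubeRadius_le_one {n : ℕ} (k : (Fin n → I) × I) : cubeRadius k ≤ 1 :=
  max_le (norm_centred_le _) (by linarith [k.2.2.1])

@[fun_prop]
lemma continuous_cubeRadius {n : ℕ} : Continuous (cubeRadius (n := n)) := by
  unfold cubeRadius; fun_prop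

@[fun_prop]
lemma continuous_cubeRetract {n : ℕ} : Continuous (cubeRetract (n := n)) := by
  have h : ∀ k : (Fin n → I) × I, cubeRadius k ≠ 0 := fun k => by
    linarith [half_le_cubeRadius k]
  unfold cubeRetract
  refine Continuous.prodMk (continuous_pi fun i => continuous_projIcc.comp ?_)
    (continuous_projIcc.comp ?_)
  · fun_prop (disch := exact h _)
  · fun_prop (disch := exact h _)

lemma continuous_cubeContract {n : ℕ} :
    Continuous fun p : ((Fin n → I) × I) × I => cubeContract p.1 p.2 := by
  unfold cubeContract
  refine Continuous.prodMk (continuous_pi fun i => continuous_projIcc.comp ?_)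
    (continuous_projIcc.comp ?_) <;> fun_prop

lemma projIcc_eq_of_val {x : ℝ} {y : I} (h : x = y) :
    Set.projIcc 0 1 zero_le_one x = y := by
  subst h; exact Set.projIcc_val _ y

lemma cubeRadius_eq_one {n : ℕ} {k : (Fin n → I) × I}
    (hk : k.1 ∈ Cube.boundary (Fin n) ∨ k.2 = 0) : cubeRadius k = 1 := by
  refine le_antisymm (cubeRadius_le_one k) ?_
  rcases hk with ⟨i, hi⟩ | h
  · refine le_max_of_le_left ?_
    refine le_trans ?_ (norm_le_pi_norm _ i)
    rcases hi with hi | hi <;> simp [hi]; norm_num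
  · exact le_max_of_le_right (by simp [h])

lemma cubeRetract_eq_self {n : ℕ} {k : (Fin n → I) × I}
    (hk : k.1 ∈ Cube.boundary (Fin n) ∨ k.2 = 0) : cubeRetract k = k := by
  have h := cubeRadius_eq_one hk
  refine Prod.ext (funext fun i => projIcc_eq_of_val ?_) (projIcc_eq_of_val ?_)
  · rw [h]; ring
  · rw [h]; ring

lemma cubeRetract_mem {n : ℕ} (k : (Fin n → I) × I) :
    (cubeRetract k).1 ∈ Cube.boundary (Fin n) ∨ (cubeRetract k).2 = 0 := by
  have hr := half_le_cubeRadius k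
  rcases max_choice ‖fun i => 2 * (k.1 i : ℝ) - 1‖ ((2 - k.2) / 2 : ℝ) with h | h
  · left
    change cubeRadius k = _ at h
    have hn : Nonempty (Fin n) := by
      by_contra hn
      rw [not_nonempty_iff] at hn
      have : ‖fun i => 2 * (k.1 i : ℝ) - 1‖ = 0 := by
        rw [Subsingleton.elim (fun i => 2 * (k.1 i : ℝ) - 1) 0, norm_zero]
      linarith
    obtain ⟨i, hi⟩ := (IsGreatest.pi_norm fun i => 2 * (k.1 i : ℝ) - 1).1
    refine ⟨i, ?_⟩
    rw [← h] at hi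
    change |2 * (k.1 i : ℝ) - 1| = _ at hi
    rcases abs_choice (2 * (k.1 i : ℝ) - 1) with h' | h'
    · right
      refine projIcc_eq_of_val ?_
      rw [← h', hi, div_self (by linarith)]; norm_num
    · left
      refine projIcc_eq_of_val ?_
      have : 2 * (k.1 i : ℝ) - 1 = - cubeRadius k := by linarith
      rw [this, neg_div, div_self (by linarith)]; norm_num
  · right
    change cubeRadius k = _ at h
    refine projIcc_eq_of_val ?_
    have : (2 - k.2 : ℝ) = 2 * cubeRadius k := by linarith
    rw [this, mul_div_assoc, div_self (by linarith)]; norm_num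

lemma cubeRetract_fst_val {n : ℕ} (k : (Fin n → I) × I) (i : Fin n) :
    ((cubeRetract k).1 i : ℝ) = (1 + (2 * (k.1 i : ℝ) - 1) / cubeRadius k) / 2 := by
  have hr := half_le_cubeRadius k
  have h1 : |2 * (k.1 i : ℝ) - 1| ≤ cubeRadius k :=
    le_max_of_le_left (norm_le_pi_norm (fun i => 2 * (k.1 i : ℝ) - 1) i)
  have h2 : |(2 * (k.1 i : ℝ) - 1) / cubeRadius k| ≤ 1 := by
    rw [abs_div, abs_of_pos (by linarith : 0 < cubeRadius k)]
    exact (div_le_one (by linarith)).2 h1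
  rw [abs_le] at h2
  exact congrArg Subtype.val (Set.projIcc_of_mem zero_le_one (⟨by linarith, by linarith⟩ :
    (1 + (2 * (k.1 i : ℝ) - 1) / cubeRadius k) / 2 ∈ Set.Icc (0 : ℝ) 1))

lemma cubeRetract_snd_val {n : ℕ} (k : (Fin n → I) × I) :
    ((cubeRetract k).2 : ℝ) = 2 - (2 - k.2) / cubeRadius k := by
  have hr := half_le_cubeRadius k
  have h1 : (2 - k.2 : ℝ) ≤ 2 * cubeRadius k := by
    have : (2 - k.2 : ℝ) / 2 ≤ cubeRadius k := le_max_right _ _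
    linarith
  have h2 : (2 - k.2 : ℝ) / cubeRadius k ≤ 2 := (div_le_iff₀ (by linarith)).2 h1
  have h3 : 1 ≤ (2 - k.2 : ℝ) / cubeRadius k :=
    (le_div_iff₀ (by linarith)).2 (by linarith [cubeRadius_le_one k, k.2.2.2])
  exact congrArg Subtype.val (Set.projIcc_of_mem zero_le_one (⟨by linarith, by linarith⟩ :
    (2 - (2 - k.2) / cubeRadius k : ℝ) ∈ Set.Icc (0 : ℝ) 1))

/-- How far a point lies from the bottom and the sides along the radial projection. -/
noncomputable def cubeDepth {n : ℕ} (k : (Fin n → I) × I) : I :=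
  ⟨1 - cubeRadius k, by linarith [cubeRadius_le_one k], by linarith [half_le_cubeRadius k]⟩

@[fun_prop]
lemma continuous_cubeDepth {n : ℕ} : Continuous (cubeDepth (n := n)) :=
  Continuous.subtype_mk (by fun_prop) _

lemma cubeContract_cubeRetract {n : ℕ} (k : (Fin n → I) × I) :
    cubeContract (cubeRetract k) (cubeDepth k) = k := by
  have hr := half_le_cubeRadius k
  have hr' : cubeRadius k ≠ 0 := by linarith
  refine Prod.ext (funext fun i => projIcc_eq_of_val ?_) (projIcc_eq_of_val ?_)
  · rw [cubeRetract_fst_val, cubeDepth]; field_simp; ring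
  · rw [cubeRetract_snd_val, cubeDepth]; field_simp; ring

lemma cubeContract_zero {n : ℕ} (k : (Fin n → I) × I) : cubeContract k 0 = k :=
  Prod.ext (funext fun i => projIcc_eq_of_val (by simp)) (projIcc_eq_of_val (by simp))

/-- A pair of spaces homeomorphic to some `([0,1]ⁿ, ∂[0,1]ⁿ)`. -/
def IsCubePair {K : Type} [TopologicalSpace K] (A : Set K) : Prop :=
  ∃ (n : ℕ) (e : K ≃ₜ (Fin n → I)), ∀ k, k ∈ A ↔ e k ∈ Cube.boundary (Fin n)

/-- The boundary `A × [0,1] ∪ K × {0,1}` of the cylinder on `(K, A)`. -/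
def cylinderBoundary {K : Type} (A : Set K) : Set (K × I) :=
  {p | p.1 ∈ A ∨ p.2 = 0 ∨ p.2 = 1}

lemma isCubePair_boundary (ι : Type) [Finite ι] : IsCubePair (Cube.boundary ι) := by
  obtain ⟨n, ⟨e⟩⟩ := Finite.exists_equiv_fin ι
  refine ⟨n, Homeomorph.piCongrLeft (Y := fun _ => I) e, fun k => ?_⟩
  have h : ∀ i, Homeomorph.piCongrLeft (Y := fun _ => I) e k (e i) = k i := fun i =>
    Equiv.piCongrLeft_apply_apply (fun _ => I) e k i
  constructor
  · rintro ⟨i, hi⟩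
    exact ⟨e i, by rwa [h]⟩
  · rintro ⟨i, hi⟩
    refine ⟨e.symm i, ?_⟩
    rw [← h, e.apply_symm_apply]; exact hi

lemma exists_homeomorph_cylinder (n : ℕ) : ∃ c : (Fin n → I) × I ≃ₜ (Fin (n + 1) → I),
    ∀ k, k ∈ cylinderBoundary (Cube.boundary (Fin n)) ↔ c k ∈ Cube.boundary (Fin (n + 1)) := by
  let c : (Fin n → I) × I ≃ₜ (Fin (n + 1) → I) :=
    { toFun := fun p => Fin.cons p.2 p.1
      invFun := fun z => (fun i => z i.succ, z 0)
      left_inv := fun p => by simp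
      right_inv := fun z => by
        ext i; refine Fin.cases ?_ (fun j => ?_) i <;> simp
      continuous_toFun := continuous_pi fun i => by
        refine Fin.cases ?_ (fun j => ?_) i <;> simp <;> fun_prop
      continuous_invFun := by fun_prop }
  refine ⟨c, fun k => ?_⟩
  have : ∀ z, z ∈ Cube.boundary (Fin (n + 1)) ↔
      (z 0 = 0 ∨ z 0 = 1) ∨ (fun i => z (Fin.succ i)) ∈ Cube.boundary (Fin n) := fun z =>
    Fin.exists_fin_succ
  rw [this]
  change _ ↔ (k.2 = 0 ∨ k.2 = 1) ∨ k.1 ∈ _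
  rw [or_comm]
  rfl

lemma IsCubePair.cylinder {K : Type} [TopologicalSpace K] {A : Set K} (h : IsCubePair A) :
    IsCubePair (cylinderBoundary A) := by
  obtain ⟨n, e, he⟩ := h
  obtain ⟨c, hc⟩ := exists_homeomorph_cylinder n
  refine ⟨n + 1, (e.prodCongr (Homeomorph.refl I)).trans c, fun k => ?_⟩
  refine Iff.trans ?_ (hc _)
  simp [cylinderBoundary, he]

lemma IsCubePair.isClosed {K : Type} [TopologicalSpace K] {A : Set K} (h : IsCubePair A) :
    IsClosed A := by
  obtain ⟨n, e, he⟩ := h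
  have : A = ⋃ i, {k | e k i = 0} ∪ {k | e k i = 1} := by
    ext k; rw [he]; simp [Cube.boundary]
  rw [this]
  exact isClosed_iUnion_of_finite fun i =>
    (isClosed_eq (by fun_prop) continuous_const).union (isClosed_eq (by fun_prop) continuous_const)

lemma IsCubePair.nonempty {K : Type} [TopologicalSpace K] {A : Set K} (h : IsCubePair A) :
    Nonempty K := by
  obtain ⟨n, e, -⟩ := h
  exact ⟨e.symm 0⟩

/-- `[0,1]` with its endpoints. -/
lemma isCubePair_unitInterval : IsCubePair ({0, 1} : Set I) := by
  refine ⟨1, (Homeomorph.funUnique (Fin 1) I).symm, fun k => ?_⟩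
  simp [Cube.boundary]

/-- The retraction of the cylinder onto its bottom and sides. -/
lemma IsCubePair.exists_retraction {K : Type} [TopologicalSpace K] {A : Set K}
    (h : IsCubePair A) : ∃ r : K × I → K × I, Continuous r ∧
      (∀ p, (r p).1 ∈ A ∨ (r p).2 = 0) ∧ ∀ p, p.1 ∈ A ∨ p.2 = 0 → r p = p := by
  obtain ⟨n, e, he⟩ := h
  refine ⟨fun p => ((e.prodCongr (Homeomorph.refl I)).symm
    (cubeRetract (e.prodCongr (Homeomorph.refl I) p))), by fun_prop, fun p => ?_, fun p hp => ?_⟩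
  · rw [he]
    simpa using cubeRetract_mem (e.prodCongr (Homeomorph.refl I) p)
  · rw [he] at hp
    have : cubeRetract (e.prodCongr (Homeomorph.refl I) p) = e.prodCongr (Homeomorph.refl I) p :=
      cubeRetract_eq_self hp
    simp only [this, Homeomorph.symm_apply_apply]

lemma continuousOn_ite_of_isClosed {Z E : Type*} [TopologicalSpace Z] [TopologicalSpace E]
    {P : Z → Prop} [DecidablePred P] {t : Set Z} {f g : Z → E} (hP : IsClosed {z | P z})
    (ht : IsClosed t) (hf : ContinuousOn f {z | P z}) (hg : ContinuousOn g t)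
    (hfg : ∀ z ∈ t, P z → f z = g z) :
    ContinuousOn (fun z => if P z then f z else g z) ({z | P z} ∪ t) := by
  refine ContinuousOn.union_of_isClosed (hf.congr fun z hz => if_pos hz) (hg.congr fun z hz => ?_)
    hP ht
  by_cases h : P z
  · simp [h, hfg z hz h]
  · simp [h]

/-- Homotopy extension for cubes, with control of the values. -/
lemma IsCubePair.exists_homotopy_extension {K : Type} [TopologicalSpace K] {A : Set K}
    (h : IsCubePair A) {X : Type*} [TopologicalSpace X] {x : K → X} {a : K × I → X}
    (hx : Continuous x) (ha : ContinuousOn a {p | p.1 ∈ A}) (hax : ∀ k ∈ A, a (k, 0) = x k)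
    {S : Set X} (hxS : ∀ k, x k ∈ S) (haS : ∀ k ∈ A, ∀ t, a (k, t) ∈ S) :
    ∃ G : K × I → X, Continuous G ∧ (∀ k, G (k, 0) = x k) ∧
      (∀ k ∈ A, ∀ t, G (k, t) = a (k, t)) ∧ ∀ p, G p ∈ S := by
  obtain ⟨r, hr, hrm, hrs⟩ := h.exists_retraction
  classical
  let g : K × I → X := fun p => if p.2 = 0 then x p.1 else a p
  have hg : ContinuousOn g ({p | p.2 = 0} ∪ {p | p.1 ∈ A}) :=
    continuousOn_ite_of_isClosed (isClosed_eq continuous_snd continuous_const)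
      (h.isClosed.preimage continuous_fst) (by fun_prop) ha
      (by rintro ⟨k, t⟩ hk (ht : t = 0); subst ht; exact (hax k hk).symm)
  have hgA : ∀ k ∈ A, ∀ t, g (k, t) = a (k, t) := fun k hk t => by
    by_cases ht : t = 0
    · subst ht; simp [g, hax k hk]
    · simp [g, ht]
  refine ⟨fun p => g (r p), hg.comp_continuous hr fun p => (hrm p).symm, fun k => ?_,
    fun k hk t => ?_, fun p => ?_⟩
  · simp only [hrs (k, 0) (Or.inr rfl), g, if_true]
  · simp only [hrs (k, t) (Or.inl hk), hgA k hk t]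
  · rcases hrm p with hp | hp
    · have := hgA _ hp (r p).2
      simp only [Prod.mk.eta] at this ⊢
      rw [this]; exact haS _ hp _
    · simp only [g, hp, if_true]; exact hxS _

/-- The lifting problem with boundary values `a` upstairs and prescribed map `b` downstairs has a
solution up to a homotopy relative to `A` inside `O`. -/
def LiftsUpToHomotopy {K : Type} [TopologicalSpace K] {X Y : Type*} [TopologicalSpace X]
    [TopologicalSpace Y] (f : X → Y) (O : Set Y) (A : Set K) (a : K → X) (b : K → Y) : Prop :=
  ∃ (x : K → X) (H : K × I → Y), Continuous x ∧ Continuous H ∧ (∀ k ∈ A, x k = a k) ∧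
    (∀ k, H (k, 0) = f (x k)) ∧ (∀ k, H (k, 1) = b k) ∧ (∀ k ∈ A, ∀ t, H (k, t) = b k) ∧
    ∀ p, H p ∈ O

/-- Every lifting problem for a cube and its boundary over the subset `O` of the target can be
solved up to homotopy in `O` relative to the boundary. -/
def HasCubeLiftingOn {X Y : Type*} [TopologicalSpace X] [TopologicalSpace Y]
    (f : X → Y) (O : Set Y) : Prop :=
  (O.Nonempty → Nonempty X) ∧
  ∀ (K : Type) [TopologicalSpace K] (A : Set K), IsCubePair A → ∀ (a : K → X) (b : K → Y),
    ContinuousOn a A → Continuous b → (∀ k, b k ∈ O) → (∀ k ∈ A, f (a k) = b k) →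
    LiftsUpToHomotopy f O A a b

/-- The characterisation of weak homotopy equivalences by lifting up to homotopy. -/
abbrev HasCubeLifting {X Y : Type*} [TopologicalSpace X] [TopologicalSpace Y] (f : X → Y) : Prop :=
  HasCubeLiftingOn f Set.univ

section Basic

variable {X Y Z : Type*} [TopologicalSpace X] [TopologicalSpace Y] [TopologicalSpace Z]

lemma HasCubeLifting.nonempty {f : X → Y} (h : HasCubeLifting f) [Nonempty Y] : Nonempty X :=
  h.1 Set.univ_nonempty

lemma HasCubeLifting.lifts {f : X → Y} (h : HasCubeLifting f) {K : Type} [TopologicalSpace K]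
    {A : Set K} (hK : IsCubePair A) {a : K → X} {b : K → Y} (ha : ContinuousOn a A)
    (hb : Continuous b) (hab : ∀ k ∈ A, f (a k) = b k) : LiftsUpToHomotopy f Set.univ A a b :=
  h.2 K A hK a b ha hb (fun _ => Set.mem_univ _) hab

/-- Solvability of lifting problems only depends on the homotopy class of the problem. -/
lemma LiftsUpToHomotopy.of_homotopy {K : Type} [TopologicalSpace K] {A : Set K} {f : X → Y}
    (hf : Continuous f) (hK : IsCubePair A) {a : K × I → X} {β : K × I → Y}
    (ha : ContinuousOn a {p | p.1 ∈ A}) (hβ : Continuous β)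
    (hab : ∀ k ∈ A, ∀ t, f (a (k, t)) = β (k, t))
    (h : LiftsUpToHomotopy f Set.univ A (fun k => a (k, 0)) (fun k => β (k, 0))) :
    LiftsUpToHomotopy f Set.univ A (fun k => a (k, 1)) (fun k => β (k, 1)) := by
  classical
  obtain ⟨x, N, hx, hN, hxa, hN0, hN1, hNA, -⟩ := h
  obtain ⟨x', hx', hx'0, hx'A, -⟩ := hK.exists_homotopy_extension hx ha
    (fun k hk => (hxa k hk).symm) (fun _ => Set.mem_univ _) (fun _ _ _ => Set.mem_univ _)
  let D : (K × I) × I → Y := fun p => if p.1.2 = 0 then f (x' (p.1.1, p.2)) else β (p.1.1, p.2)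
  have hD1 : ∀ k t, D ((k, 0), t) = f (x' (k, t)) := fun k t => if_pos rfl
  have hD2 : ∀ k s t, (k ∈ A ∨ s = 1) → D ((k, s), t) = β (k, t) := fun k s t hks => by
    by_cases hs : s = 0
    · subst hs
      rcases hks with hk | hk
      · rw [hD1, hx'A k hk, hab k hk]
      · exact absurd hk zero_ne_one
    · exact if_neg hs
  have hD : ContinuousOn D {p | p.1 ∈ cylinderBoundary A} := by
    have : ContinuousOn D ({p | p.1.2 = 0} ∪ {p | p.1.1 ∈ A ∨ p.1.2 = 1}) := by
      refine continuousOn_ite_of_isClosed (isClosed_eq (by fun_prop) continuous_const)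
        ((hK.isClosed.preimage (by fun_prop)).union (isClosed_eq (by fun_prop) continuous_const))
        (by fun_prop) (by fun_prop) ?_
      rintro ⟨⟨k, s⟩, t⟩ h1 h2
      rw [← hD2 k s t h1]
      exact (if_pos h2).symm
    refine this.mono ?_
    rintro ⟨⟨k, s⟩, t⟩ (h | h | h)
    exacts [Or.inr (Or.inl h), Or.inl h, Or.inr (Or.inr h)]
  obtain ⟨G, hG, hG0, hGA, -⟩ := hK.cylinder.exists_homotopy_extension hN hD
    (by
      rintro ⟨k, s⟩ (h | h | h)
      · rw [hD2 k s 0 (Or.inl h), hNA k h]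
      · change s = 0 at h
        rw [h, hD1, hN0, hx'0]
      · change s = 1 at h
        rw [hD2 k s 0 (Or.inr h), h, hN1])
    (fun _ => Set.mem_univ _) (fun _ _ _ => Set.mem_univ _)
  refine ⟨fun k => x' (k, 1), fun p => G (p, 1), by fun_prop, by fun_prop,
    fun k hk => hx'A k hk 1, fun k => ?_, fun k => ?_, fun k hk t => ?_, fun _ => Set.mem_univ _⟩
  · exact (hGA (k, 0) (Or.inr (Or.inl rfl)) 1).trans (hD1 _ _)
  · exact (hGA (k, 1) (Or.inr (Or.inr rfl)) 1).trans (hD2 _ _ _ (Or.inr rfl))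
  · exact (hGA (k, t) (Or.inl hk) 1).trans (hD2 _ _ _ (Or.inl hk))

/-- Lifting problems whose boundary values match only up to a prescribed homotopy. -/
lemma HasCubeLiftingOn.exists_rel {f : X → Y} (hf : Continuous f) {O : Set Y}
    (h : HasCubeLiftingOn f O)
    {K : Type} [TopologicalSpace K] {A : Set K} (hK : IsCubePair A)
    {a : K → X} {b : K → Y} {η : K × I → Y} (ha : ContinuousOn a A) (hb : Continuous b)
    (hη : ContinuousOn η {p | p.1 ∈ A}) (hbO : ∀ k, b k ∈ O) (hηO : ∀ k ∈ A, ∀ t, η (k, t) ∈ O)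
    (hη0 : ∀ k ∈ A, η (k, 0) = f (a k)) (hη1 : ∀ k ∈ A, η (k, 1) = b k) :
    ∃ (x : K → X) (H : K × I → Y), Continuous x ∧ Continuous H ∧ (∀ k ∈ A, x k = a k) ∧
      (∀ k, H (k, 0) = f (x k)) ∧ (∀ k, H (k, 1) = b k) ∧
      (∀ k ∈ A, ∀ t, H (k, t) = η (k, t)) ∧ ∀ p, H p ∈ O := by
  classical
  obtain ⟨M, hM, hM0, hMA, hMO⟩ := hK.exists_homotopy_extension (a := fun p => η (p.1, σ p.2)) hb
    (hη.comp (f := fun p : K × I => (p.1, σ p.2)) (by fun_prop) fun p hp => hp)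
    (fun k hk => by simpa using hη1 k hk) hbO
    (fun k hk t => hηO k hk _)
  obtain ⟨x, N, hx, hN, hxa, hN0, hN1, hNA, hNO⟩ := h.2 K A hK a (fun k => M (k, 1)) ha
    (by fun_prop) (fun k => hMO _) (fun k hk => by rw [hMA k hk, ← hη0 k hk]; simp)
  let D : (K × I) × I → Y := fun p =>
    if p.1.2 = 0 then f (x p.1.1) else if p.1.2 = 1 then M (p.1.1, σ p.2)
      else η (p.1.1, p.1.2 * p.2)
  have hD0 : ∀ k t, D ((k, 0), t) = f (x k) := fun k t => if_pos rfl
  have hD1 : ∀ k t, D ((k, 1), t) = M (k, σ t) := fun k t => by simp [D]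
  have hDA : ∀ k ∈ A, ∀ s t, D ((k, s), t) = η (k, s * t) := fun k hk s t => by
    by_cases hs : s = 0
    · subst hs; rw [hD0, zero_mul, hη0 k hk, hxa k hk]
    by_cases hs' : s = 1
    · subst hs'; rw [hD1, hMA k hk]; simp
    · simp [D, hs, hs']
  have hD : ContinuousOn D {p | p.1 ∈ cylinderBoundary A} := by
    have e : {p : (K × I) × I | p.1 ∈ cylinderBoundary A} =
      ({p | p.1.1 ∈ A} ∪ {p | p.1.2 = 0}) ∪ {p | p.1.2 = 1} := by
      ext p; simp [cylinderBoundary, or_assoc]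
    have c1 : IsClosed {p : (K × I) × I | p.1.1 ∈ A} := hK.isClosed.preimage (by fun_prop)
    have c2 : IsClosed {p : (K × I) × I | p.1.2 = 0} :=
      isClosed_eq (by fun_prop) continuous_const
    have c3 : IsClosed {p : (K × I) × I | p.1.2 = 1} :=
      isClosed_eq (by fun_prop) continuous_const
    rw [e]
    refine ContinuousOn.union_of_isClosed (ContinuousOn.union_of_isClosed ?_ ?_ c1 c2) ?_
      (c1.union c2) c3
    · refine ContinuousOn.congr (f := fun p => η (p.1.1, p.1.2 * p.2))
        (hη.comp (f := fun p : (K × I) × I => (p.1.1, p.1.2 * p.2)) (by fun_prop)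
          fun p hp => hp) ?_
      rintro ⟨⟨k, s⟩, t⟩ hk
      exact hDA k hk s t
    · refine ContinuousOn.congr (f := fun p => f (x p.1.1)) (by fun_prop) ?_
      rintro ⟨⟨k, s⟩, t⟩ (rfl : s = 0)
      exact hD0 k t
    · refine ContinuousOn.congr (f := fun p => M (p.1.1, σ p.2)) (by fun_prop) ?_
      rintro ⟨⟨k, s⟩, t⟩ (rfl : s = 1)
      exact hD1 k t
  obtain ⟨G, hG, hG0, hGA, hGO⟩ := hK.cylinder.exists_homotopy_extension hN hD
    (by
      rintro ⟨k, s⟩ (h | h | h)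
      · change k ∈ A at h
        rw [hDA k h, hNA k h, mul_zero]; simp [hMA k h]
      · change s = 0 at h
        rw [h, hD0, hN0]
      · change s = 1 at h
        rw [h, hD1, hN1, symm_zero])
    (S := O) hNO
    (by
      rintro ⟨k, s⟩ (h | h | h) t
      · rw [hDA k h]; exact hηO k h _
      · change s = 0 at h
        rw [h, hD0, ← hN0]; exact hNO _
      · change s = 1 at h
        rw [h, hD1]; exact hMO _)
  refine ⟨x, fun p => G (p, 1), hx, by fun_prop, hxa, fun k => ?_, fun k => ?_, fun k hk t => ?_,
    fun p => hGO _⟩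
  · exact (hGA (k, 0) (Or.inr (Or.inl rfl)) 1).trans (hD0 _ _)
  · refine (hGA (k, 1) (Or.inr (Or.inr rfl)) 1).trans ?_
    rw [hD1, symm_one, hM0]
  · refine (hGA (k, t) (Or.inl hk) 1).trans ?_
    rw [hDA k hk, mul_one]

lemma HasCubeLifting.comp {f : X → Y} {g : Y → Z} (hg : HasCubeLifting g) (hf : HasCubeLifting f)
    (hgc : Continuous g) (hfc : Continuous f) : HasCubeLifting (g ∘ f) := by
  refine ⟨fun h => hf.1 (@Set.univ_nonempty _ (hg.1 h)), fun K _ A hK a b ha hb _ hab => ?_⟩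
  obtain ⟨y, H, hy, hH, hyA, hH0, hH1, hHA, -⟩ :=
    hg.lifts hK (a := fun k => f (a k)) (hfc.comp_continuousOn ha) hb hab
  obtain ⟨x, N, hx, hN, hxA, hN0, hN1, hNA, -⟩ := hf.lifts hK ha hy fun k hk => (hyA k hk).symm
  have key := LiftsUpToHomotopy.of_homotopy (f := g ∘ f) (hgc.comp hfc) hK
    (a := fun p => a p.1) (β := H)
    (ha.comp continuousOn_fst fun p hp => hp) hH
    (fun k hk t => by rw [hHA k hk, ← hab k hk])
    ⟨x, fun p => g (N p), hx, by fun_prop, hxA, fun k => congrArg g (hN0 k),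
      fun k => by simp [hN1, hH0], fun k hk t => by simp [hNA k hk, hH0], fun _ => Set.mem_univ _⟩
  simpa only [hH1] using key

/-- Two out of three: a map is a weak equivalence when its composite with a weak equivalence
is one. -/
lemma HasCubeLifting.of_comp {f : X → Y} {g : Y → Z} (hg : HasCubeLifting g)
    (hgf : HasCubeLifting (g ∘ f)) (hgc : Continuous g) (hfc : Continuous f) :
    HasCubeLifting f := by
  classical
  refine ⟨fun ⟨y, _⟩ => hgf.1 ⟨g y, Set.mem_univ _⟩, fun K _ A hK a b ha hb _ hab => ?_⟩
  obtain ⟨x, L, hx, hL, hxA, hL0, hL1, hLA, -⟩ :=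
    hgf.lifts hK (b := fun k => g (b k)) ha (by fun_prop) fun k hk => congrArg g (hab k hk)
  let D : K × I → Y := fun p => if p.2 = 0 then f (x p.1) else b p.1
  have hD0 : ∀ k, D (k, 0) = f (x k) := fun k => if_pos rfl
  have hD1 : ∀ k t, k ∈ A ∨ t = 1 → D (k, t) = b k := fun k t h => by
    by_cases ht : t = 0
    · subst ht
      rcases h with h | h
      · rw [hD0, hxA k h, hab k h]
      · exact absurd h zero_ne_one
    · exact if_neg ht
  have hD : ContinuousOn D (cylinderBoundary A) := by
    have : ContinuousOn D ({p | p.2 = 0} ∪ {p | p.1 ∈ A ∨ p.2 = 1}) := by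
      refine continuousOn_ite_of_isClosed (isClosed_eq (by fun_prop) continuous_const)
        ((hK.isClosed.preimage (by fun_prop)).union (isClosed_eq (by fun_prop) continuous_const))
        (by fun_prop) (by fun_prop) ?_
      rintro ⟨k, t⟩ h1 h2
      rw [← hD1 k t h1]
      exact (if_pos h2).symm
    refine this.mono ?_
    rintro ⟨k, s⟩ (h | h | h)
    exacts [Or.inr (Or.inl h), Or.inl h, Or.inr (Or.inr h)]
  obtain ⟨y, -, hy, -, hyA, -⟩ := hg.lifts hK.cylinder hD hL (by
    rintro ⟨k, s⟩ (h | h | h)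
    · rw [hD1 k s (Or.inl h), hLA k h]
    · change s = 0 at h
      rw [h, hD0, hL0]; rfl
    · change s = 1 at h
      rw [hD1 k s (Or.inr h), h, hL1])
  refine ⟨x, y, hx, hy, hxA, fun k => ?_, fun k => ?_, fun k hk t => ?_, fun _ => Set.mem_univ _⟩
  · rw [hyA (k, 0) (Or.inr (Or.inl rfl)), hD0]
  · rw [hyA (k, 1) (Or.inr (Or.inr rfl)), hD1 _ _ (Or.inr rfl)]
  · rw [hyA (k, t) (Or.inl hk), hD1 _ _ (Or.inl hk)]

/-- A homotopy equivalence whose two homotopies are compatible lifts cubes. -/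
lemma hasCubeLifting_of_homotopyInverse {e : X → Y} {g : Y → X} (he : Continuous e)
    (hg : Continuous g) {κ : Y × I → Y} {l : X × I → X} (hκ : Continuous κ) (hl : Continuous l)
    (hκ0 : ∀ y, κ (y, 0) = y) (hκ1 : ∀ y, κ (y, 1) = e (g y))
    (hl0 : ∀ x, l (x, 0) = x) (hl1 : ∀ x, l (x, 1) = g (e x))
    (h : ∀ x t, e (l (x, t)) = κ (e x, t)) : HasCubeLifting e := by
  refine ⟨fun ⟨y, _⟩ => ⟨g y⟩, fun K _ A hK a b ha hb _ hab => ?_⟩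
  have key := LiftsUpToHomotopy.of_homotopy (f := e) he hK
    (a := fun p => l (a p.1, σ p.2)) (β := fun p => κ (b p.1, σ p.2))
    (hl.comp_continuousOn ((ha.comp continuousOn_fst fun p hp => hp).prodMk (by fun_prop)))
    (by fun_prop) (fun k hk t => by rw [h, hab k hk])
    ⟨fun k => g (b k), fun p => e (g (b p.1)), by fun_prop, by fun_prop,
      fun k hk => by simp [hl1, hab k hk], fun k => rfl, fun k => by simp [hκ1],
      fun k hk t => by simp [hκ1], fun _ => Set.mem_univ _⟩
  simpa [hl0, hκ0] using key

/-- A map with a section which is fibrewise homotopy inverse lifts cubes. -/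
lemma hasCubeLifting_of_shrinkable {p : X → Y} {i : Y → X} (hp : Continuous p)
    (hi : Continuous i) (hpi : ∀ y, p (i y) = y) {l : X × I → X} (hl : Continuous l)
    (hl0 : ∀ x, l (x, 0) = x) (hl1 : ∀ x, l (x, 1) = i (p x))
    (h : ∀ x t, p (l (x, t)) = p x) : HasCubeLifting p :=
  hasCubeLifting_of_homotopyInverse hp hi (κ := Prod.fst) continuous_fst hl (fun _ => rfl)
    (fun y => (hpi y).symm) hl0 hl1 h

/-- A map is a weak equivalence when its composite with a map admitting a homotopy section is. -/
lemma HasCubeLifting.of_comp_right {e : X → Y} {g : Y → X} {m : Y → Z}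
    (h : HasCubeLifting (m ∘ e)) (he : Continuous e) (hg : Continuous g) (hm : Continuous m)
    {κ : Y × I → Y} (hκ : Continuous κ) (hκ0 : ∀ y, κ (y, 0) = y)
    (hκ1 : ∀ y, κ (y, 1) = e (g y)) : HasCubeLifting m := by
  refine ⟨fun hZ => (h.1 hZ).map e, fun K _ A hK a b ha hb _ hab => ?_⟩
  have haκ : ContinuousOn (fun p : K × I => κ (a p.1, p.2)) {p | p.1 ∈ A} :=
    hκ.comp_continuousOn ((ha.comp continuousOn_fst fun p hp => hp).prodMk (by fun_prop))
  obtain ⟨b', hb', hb'0, hb'A, -⟩ := hK.exists_homotopy_extension hb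
    (a := fun p => m (κ (a p.1, p.2))) (hm.comp_continuousOn haκ)
    (fun k hk => by rw [← hab k hk, hκ0]) (fun _ => Set.mem_univ _) (fun _ _ _ => Set.mem_univ _)
  obtain ⟨c, H, hc, hH, hcA, hH0, hH1, hHA, -⟩ := h.lifts hK (a := fun k => g (a k))
    (b := fun k => b' (k, 1)) (hg.comp_continuousOn ha) (by fun_prop)
    (fun k hk => by rw [hb'A k hk, hκ1]; rfl)
  have key := LiftsUpToHomotopy.of_homotopy (f := m) hm hK
    (a := fun p => κ (a p.1, σ p.2)) (β := fun p => b' (p.1, σ p.2))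
    (hκ.comp_continuousOn ((ha.comp continuousOn_fst fun p hp => hp).prodMk (by fun_prop)))
    (by fun_prop) (fun k hk t => by rw [hb'A k hk])
    ⟨fun k => e (c k), H, by fun_prop, hH, fun k hk => by simp [hκ1, hcA k hk],
      hH0, fun k => by simp [hH1], fun k hk t => by simp [hHA k hk],
      fun _ => Set.mem_univ _⟩
  simpa [hb'0, hκ0] using key

end Basic

section WeakEquiv

variable {X Y : Type*} [TopologicalSpace X] [TopologicalSpace Y]

lemma LiftsUpToHomotopy.congr {K : Type} [TopologicalSpace K] {f : X → Y} {O : Set Y} {A : Set K}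
    {a a' : K → X} {b : K → Y} (h : LiftsUpToHomotopy f O A a b) (ha : ∀ k ∈ A, a k = a' k) :
    LiftsUpToHomotopy f O A a' b := by
  obtain ⟨x, H, hx, hH, hxA, hr⟩ := h
  exact ⟨x, H, hx, hH, fun k hk => (hxA k hk).trans (ha k hk), hr⟩

lemma LiftsUpToHomotopy.of_homeomorph {K L : Type} [TopologicalSpace K] [TopologicalSpace L]
    {f : X → Y} {O : Set Y} {A : Set K} {A' : Set L} (e : K ≃ₜ L) (he : ∀ k, k ∈ A ↔ e k ∈ A')
    {a : K → X} {b : K → Y}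
    (h : LiftsUpToHomotopy f O A' (fun l => a (e.symm l)) (fun l => b (e.symm l))) :
    LiftsUpToHomotopy f O A a b := by
  obtain ⟨x, H, hx, hH, hxA, hH0, hH1, hHA, hHO⟩ := h
  exact ⟨fun k => x (e k), fun p => H (e p.1, p.2), by fun_prop, by fun_prop,
    fun k hk => by simp [hxA _ ((he k).1 hk)], fun k => hH0 _, fun k => by simp [hH1],
    fun k hk t => by simp [hHA _ ((he k).1 hk)], fun p => hHO _⟩

/-- It suffices to solve lifting problems on one model of each cube. -/
lemma hasCubeLiftingOn_of_cubes {f : X → Y} {O : Set Y} (h0 : O.Nonempty → Nonempty X)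
    (h : ∀ (n : ℕ) (a : (Fin n → I) → X) (b : (Fin n → I) → Y),
      ContinuousOn a (Cube.boundary (Fin n)) → Continuous b → (∀ k, b k ∈ O) →
      (∀ k ∈ Cube.boundary (Fin n), f (a k) = b k) →
      LiftsUpToHomotopy f O (Cube.boundary (Fin n)) a b) : HasCubeLiftingOn f O := by
  refine ⟨h0, fun K _ A ⟨n, e, he⟩ a b ha hb hbO hab => LiftsUpToHomotopy.of_homeomorph e he ?_⟩
  refine h n _ _ (ha.comp (by fun_prop) fun k hk => ?_) (by fun_prop) (fun _ => hbO _)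
    fun k hk => hab _ ?_
  all_goals rw [he]; simpa using hk

/-- Gluing maps on the bottom, the top and the sides of a cylinder. -/
lemma exists_continuousOn_cylinderBoundary {K : Type} [TopologicalSpace K] {A : Set K}
    (hA : IsClosed A) {a₀ a₁ : K → X} {s : K × I → X} (h₀ : Continuous a₀) (h₁ : Continuous a₁)
    (hs : ContinuousOn s {p | p.1 ∈ A}) (hs₀ : ∀ k ∈ A, s (k, 0) = a₀ k)
    (hs₁ : ∀ k ∈ A, s (k, 1) = a₁ k) :
    ∃ D : K × I → X, ContinuousOn D (cylinderBoundary A) ∧ (∀ k, D (k, 0) = a₀ k) ∧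
      (∀ k, D (k, 1) = a₁ k) ∧ ∀ k ∈ A, ∀ t, D (k, t) = s (k, t) := by
  classical
  let D : K × I → X := fun p => if p.2 = 0 then a₀ p.1 else if p.2 = 1 then a₁ p.1 else s p
  have hD0 : ∀ k, D (k, 0) = a₀ k := fun k => if_pos rfl
  have hD1 : ∀ k, D (k, 1) = a₁ k := fun k => by simp [D]
  have hDA : ∀ k ∈ A, ∀ t, D (k, t) = s (k, t) := fun k hk t => by
    by_cases ht : t = 0
    · subst ht; rw [hD0, hs₀ k hk]
    by_cases ht' : t = 1
    · subst ht'; rw [hD1, hs₁ k hk]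
    · simp [D, ht, ht']
  refine ⟨D, ?_, hD0, hD1, hDA⟩
  have e : cylinderBoundary A = ({p | p.1 ∈ A} ∪ {p | p.2 = 0}) ∪ {p | p.2 = 1} := by
    ext p; simp [cylinderBoundary, or_assoc]
  have c1 : IsClosed {p : K × I | p.1 ∈ A} := hA.preimage (by fun_prop)
  have c2 : IsClosed {p : K × I | p.2 = 0} := isClosed_eq (by fun_prop) continuous_const
  have c3 : IsClosed {p : K × I | p.2 = 1} := isClosed_eq (by fun_prop) continuous_const
  rw [e]
  refine ContinuousOn.union_of_isClosed (ContinuousOn.union_of_isClosed ?_ ?_ c1 c2) ?_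
    (c1.union c2) c3
  · refine hs.congr ?_
    rintro ⟨k, t⟩ hk
    exact hDA k hk t
  · refine ContinuousOn.congr (f := fun p => a₀ p.1) (by fun_prop) ?_
    rintro ⟨k, t⟩ (rfl : t = 0)
    exact hD0 k
  · refine ContinuousOn.congr (f := fun p => a₁ p.1) (by fun_prop) ?_
    rintro ⟨k, t⟩ (rfl : t = 1)
    exact hD1 k

lemma HasCubeLifting.isWeakHomotopyEquiv {f : C(X, Y)} (h : HasCubeLifting f) :
    IsWeakHomotopyEquiv f := by
  classical
  refine ⟨⟨?_, ?_⟩, fun n x => ⟨?_, ?_⟩⟩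
  · rintro ⟨x⟩ ⟨x'⟩ hxx'
    obtain ⟨γ⟩ : Joined (f x) (f x') := Quotient.exact hxx'
    obtain ⟨c, -, hc, -, hcA, -⟩ := h.lifts isCubePair_unitInterval
      (a := fun k => if k = 0 then x else x') (b := γ)
      (Set.Finite.continuousOn (Set.toFinite _) _) γ.continuous (by simp +contextual)
    exact Quotient.sound ⟨⟨⟨c, hc⟩, by simp [hcA 0], by simp [hcA 1]⟩⟩
  · rintro ⟨y⟩
    have : Nonempty X := h.1 ⟨y, Set.mem_univ _⟩
    obtain ⟨c, H, hc, hH, -, hH0, hH1, -⟩ := h.lifts (isCubePair_boundary (Fin 0))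
      (a := fun _ => Classical.arbitrary X) (b := fun _ => y) continuousOn_const continuous_const
      (fun k hk => hk.elim fun i => i.elim0)
    exact ⟨Quotient.mk _ (c 0), Quotient.sound
      ⟨⟨⟨fun t => H (0, t), by fun_prop⟩, hH0 0, hH1 0⟩⟩⟩
  · rintro ⟨p⟩ ⟨q⟩ hpq
    obtain ⟨F⟩ : GenLoop.Homotopic (inducedGenLoop f p) (inducedGenLoop f q) := Quotient.exact hpq
    obtain ⟨D, hD, hD0, hD1, hDA⟩ := exists_continuousOn_cylinderBoundary
      (isCubePair_boundary (Fin n)).isClosed p.1.continuous q.1.continuous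
      (s := fun _ => x) continuousOn_const (fun k hk => (p.2 k hk).symm)
      (fun k hk => (q.2 k hk).symm)
    obtain ⟨c, -, hc, -, hcA, -⟩ := h.lifts (isCubePair_boundary (Fin n)).cylinder
      (b := fun k => F (k.2, k.1)) hD (by fun_prop) (by
        rintro ⟨k, t⟩ (hk | hk | hk)
        · change k ∈ _ at hk
          rw [hDA k hk]
          exact ((F.prop t k hk).trans (congrArg f (p.2 k hk))).symm
        · change t = 0 at hk
          subst hk
          rw [hD0]; exact (F.map_zero_left k).symm
        · change t = 1 at hk
          subst hk
          rw [hD1]; exact (F.map_one_left k).symm)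
    refine Quotient.sound ⟨⟨⟨⟨fun k => c (k.2, k.1), by fun_prop⟩, fun k => ?_, fun k => ?_⟩,
      fun t k hk => ?_⟩⟩
    · exact (hcA (k, 0) (Or.inr (Or.inl rfl))).trans (hD0 k)
    · exact (hcA (k, 1) (Or.inr (Or.inr rfl))).trans (hD1 k)
    · exact ((hcA (k, t) (Or.inl hk)).trans (hDA k hk t)).trans (p.2 k hk).symm
  · rintro ⟨q⟩
    obtain ⟨c, H, hc, hH, hcA, hH0, hH1, hHA, -⟩ := h.lifts (isCubePair_boundary (Fin n))
      (a := fun _ => x) (b := q.1) continuousOn_const q.1.continuous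
      (fun k hk => (q.2 k hk).symm)
    refine ⟨Quotient.mk _ ⟨⟨c, hc⟩, hcA⟩, Quotient.sound
      ⟨⟨⟨⟨fun k => H (k.2, k.1), by fun_prop⟩, hH0, hH1⟩, fun t k hk => ?_⟩⟩⟩
    exact ((hHA k hk t).trans (q.2 k hk)).trans (congrArg f (hcA k hk)).symm

/-- Surjectivity on homotopy groups solves lifting problems with constant boundary values. -/
lemma IsWeakHomotopyEquiv.lifts_const {f : C(X, Y)} (h : IsWeakHomotopyEquiv f) {K : Type}
    [TopologicalSpace K] {A : Set K} (hK : IsCubePair A) {x : X} {b : K → Y} (hb : Continuous b)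
    (hbA : ∀ k ∈ A, b k = f x) : LiftsUpToHomotopy f Set.univ A (fun _ => x) b := by
  obtain ⟨n, e, he⟩ := hK
  refine LiftsUpToHomotopy.of_homeomorph e he ?_
  obtain ⟨⟨p⟩, hp⟩ := (h.2 n x).2 (Quotient.mk _ ⟨⟨fun l => b (e.symm l), by fun_prop⟩,
    fun l hl => hbA _ ((he _).2 (by simpa using hl))⟩)
  obtain ⟨F⟩ : GenLoop.Homotopic (inducedGenLoop f p) _ := Quotient.exact hp
  refine ⟨p.1, fun k => F (k.2, k.1), p.1.continuous, by fun_prop, p.2, fun k => F.map_zero_left k,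
    fun k => F.map_one_left k, fun k hk t => ?_, fun _ => Set.mem_univ _⟩
  refine ((F.prop t k hk).trans (congrArg f (p.2 k hk))).trans (hbA _ ?_).symm
  exact (he _).2 (by simpa using hk)

end WeakEquiv

section OfWeakEquiv

variable {X Y : Type*} [TopologicalSpace X] [TopologicalSpace Y]

/-- Lifting problems on a cylinder which are constant on the bottom and the sides. -/
lemma IsWeakHomotopyEquiv.lifts_of_const_sides {f : C(X, Y)} (h : IsWeakHomotopyEquiv f) {n : ℕ}
    {x : X} {α : (Fin n → I) → X} {a : (Fin n → I) × I → X} {b : (Fin n → I) × I → Y}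
    (hα : Continuous α) (hb : Continuous b) (haα : ∀ k, a (k, 1) = α k)
    (hax : ∀ k t, k ∈ Cube.boundary (Fin n) ∨ t = 0 → a (k, t) = x)
    (hab : ∀ p ∈ cylinderBoundary (Cube.boundary (Fin n)), f (a p) = b p) :
    LiftsUpToHomotopy f Set.univ (cylinderBoundary (Cube.boundary (Fin n))) a b := by
  have hK := isCubePair_boundary (Fin n)
  have hα' : ∀ k ∈ Cube.boundary (Fin n), α k = x := fun k hk => by
    rw [← haα, hax k 1 (Or.inl hk)]
  have hbx : ∀ k t, k ∈ Cube.boundary (Fin n) ∨ t = 0 → b (k, t) = f x := fun k t hkt => by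
    rw [← hax k t hkt, hab]
    rcases hkt with hk | hk
    exacts [Or.inl hk, Or.inr (Or.inl hk)]
  have hb1 : ∀ k, b (k, 1) = f (α k) := fun k => by
    rw [← haα, hab _ (Or.inr (Or.inr rfl))]
  obtain ⟨F⟩ : GenLoop.Homotopic (GenLoop.const : GenLoop (Fin n) X x) ⟨⟨α, hα⟩, hα'⟩ := by
    refine Quotient.exact ((h.2 n x).1 (a₁ := Quotient.mk _ GenLoop.const)
      (a₂ := Quotient.mk _ ⟨⟨α, hα⟩, hα'⟩)
      (Quotient.sound ⟨⟨⟨⟨fun k => b (k.2, k.1), by fun_prop⟩, fun k => hbx _ _ (Or.inr rfl), hb1⟩,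
        fun t k hk => hbx _ _ (Or.inl hk)⟩⟩))
  let Γ : (Fin n → I) × ℝ → Y := fun p => if p.2 ≤ 1 then
    b (p.1, Set.projIcc 0 1 zero_le_one p.2) else
    f (F (Set.projIcc 0 1 zero_le_one (2 - p.2), p.1))
  have hF1 : ∀ k, F (1, k) = α k := fun k => F.map_one_left k
  have hF0 : ∀ k, F (0, k) = x := fun k => F.map_zero_left k
  have hFA : ∀ k ∈ Cube.boundary (Fin n), ∀ t, F (t, k) = x := fun k hk t => F.prop t k hk
  have hΓ : Continuous Γ := by
    refine Continuous.if_le ?_ ?_ continuous_snd continuous_const ?_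
    · exact hb.comp (continuous_fst.prodMk (continuous_projIcc.comp continuous_snd))
    · exact f.continuous.comp (F.continuous.comp
        ((continuous_projIcc.comp (by fun_prop)).prodMk continuous_fst))
    · rintro ⟨k, t⟩ (rfl : t = 1)
      have e : (2 - 1 : ℝ) = 1 := by norm_num
      simp only [e, Set.projIcc_right]
      exact (hb1 k).trans (congrArg f (hF1 k)).symm
  have hΓ1 : ∀ k (t : I), Γ (k, t) = b (k, t) := fun k t => by
    simp [Γ, t.2.2]
  have hΓ2 : ∀ k (t : I), Γ (k, 2 - t) = f (F (t, k)) := fun k t => by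
    by_cases ht : t = 1
    · have : (2 - (t : ℝ)) = (1 : I) := by rw [ht]; norm_num
      rw [this, hΓ1, hb1, ht, hF1]
    · have : ¬ (2 - (t : ℝ) ≤ 1) := fun h' => ht (Subtype.ext (by
        have := t.2.2; simp only [Set.Icc.coe_one]; linarith))
      simp [Γ, this]
  have hΓA : ∀ k ∈ Cube.boundary (Fin n), ∀ t, Γ (k, t) = f x := fun k hk t => by
    simp only [Γ]
    split_ifs
    · exact hbx _ _ (Or.inl hk)
    · rw [hFA k hk]
  have key := LiftsUpToHomotopy.of_homotopy (f := f) f.continuous hK.cylinder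
    (a := fun p => F (p.2 * p.1.2, p.1.1))
    (β := fun p => Γ (p.1.1, (p.1.2 : ℝ) * (2 - p.2))) (by fun_prop) (by fun_prop)
    (by
      rintro ⟨k, t⟩ (hk | hk | hk) s
      · exact (congrArg f (hFA k hk _)).trans (hΓA k hk _).symm
      · change t = 0 at hk
        subst hk
        have := hΓ1 k 0
        simp only [Set.Icc.coe_zero] at this
        simp [hF0, this, hbx k 0]
      · change t = 1 at hk
        subst hk
        have := hΓ2 k s
        simp [this])
    (LiftsUpToHomotopy.congr (h.lifts_const hK.cylinder (x := x) (by fun_prop) (by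
      rintro ⟨k, t⟩ (hk | hk | hk)
      · exact hΓA k hk _
      · change t = 0 at hk
        subst hk
        have := hΓ1 k 0
        simp only [Set.Icc.coe_zero] at this
        simp [this, hbx k 0]
      · change t = 1 at hk
        subst hk
        have := hΓ2 k 0
        simp only [Set.Icc.coe_zero] at this
        simpa [hF0] using this)) fun k _ => by simp [hF0])
  have e : (2 - 1 : ℝ) = 1 := by norm_num
  simp only [Set.Icc.coe_one, e, mul_one, hΓ1, one_mul] at key
  refine key.congr ?_
  rintro ⟨k, t⟩ (hk | hk | hk)
  · exact (hFA k hk t).trans (hax _ _ (Or.inl hk)).symm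
  · change t = 0 at hk
    subst hk
    exact (hF0 k).trans (hax _ _ (Or.inr rfl)).symm
  · change t = 1 at hk
    subst hk
    exact (hF1 k).trans (haα k).symm

lemma IsWeakHomotopyEquiv.lifts_cylinder {f : C(X, Y)} (h : IsWeakHomotopyEquiv f) {n : ℕ}
    {a : (Fin n → I) × I → X} {b : (Fin n → I) × I → Y}
    (ha : ContinuousOn a (cylinderBoundary (Cube.boundary (Fin n)))) (hb : Continuous b)
    (hab : ∀ p ∈ cylinderBoundary (Cube.boundary (Fin n)), f (a p) = b p) :
    LiftsUpToHomotopy f Set.univ (cylinderBoundary (Cube.boundary (Fin n))) a b := by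
  classical
  have hK := isCubePair_boundary (Fin n)
  let aR : (Fin n → I) × I → X := fun p => a (cubeRetract p)
  have haR : Continuous aR := ha.comp_continuous (by fun_prop) fun p => by
    rcases cubeRetract_mem p with h | h
    exacts [Or.inl h, Or.inr (Or.inl h)]
  have haR' : ∀ k t, k ∈ Cube.boundary (Fin n) ∨ t = 0 → aR (k, t) = a (k, t) := fun k t hkt =>
    congrArg a (cubeRetract_eq_self hkt)
  let aC : ((Fin n → I) × I) × I → X := fun p =>
    aR (fun i => σ p.2 * p.1.1 i, σ p.2 * p.1.2)
  have haC : Continuous aC := by fun_prop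
  obtain ⟨G, hG, hG0, hGA, -⟩ := hK.exists_homotopy_extension (x := fun k => a (k, 1))
    (a := fun p => aC ((p.1, 1), p.2))
    (ha.comp_continuous (by fun_prop) fun k => Or.inr (Or.inr rfl)) (by fun_prop)
    (fun k hk => by simp [aC, haR' k 1 (Or.inl hk)]) (fun _ => Set.mem_univ _)
    (fun _ _ _ => Set.mem_univ _)
  let aG : ((Fin n → I) × I) × I → X := fun p => if p.1.2 = 1 then G (p.1.1, p.2) else aC p
  have haG1 : ∀ k s, aG ((k, 1), s) = G (k, s) := fun k s => if_pos rfl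
  have haG2 : ∀ k t s, k ∈ Cube.boundary (Fin n) ∨ t = 0 → aG ((k, t), s) = aC ((k, t), s) :=
    fun k t s hkt => by
      by_cases ht : t = 1
      · subst ht
        rw [haG1]
        rcases hkt with hk | hk
        · exact hGA k hk s
        · exact absurd hk one_ne_zero
      · exact if_neg ht
  have haG : ContinuousOn aG {p | p.1 ∈ cylinderBoundary (Cube.boundary (Fin n))} := by
    have : ContinuousOn aG ({p | p.1.2 = 1} ∪ {p | p.1.1 ∈ Cube.boundary (Fin n) ∨ p.1.2 = 0}) := by
      refine continuousOn_ite_of_isClosed (isClosed_eq (by fun_prop) continuous_const)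
        ((hK.isClosed.preimage (by fun_prop)).union (isClosed_eq (by fun_prop) continuous_const))
        (by fun_prop) (by fun_prop) ?_
      rintro ⟨⟨k, t⟩, s⟩ h1 (rfl : t = 1)
      rw [← haG2 k 1 s h1, haG1]
    refine this.mono ?_
    rintro ⟨⟨k, t⟩, s⟩ (h | h | h)
    exacts [Or.inr (Or.inl h), Or.inr (Or.inr h), Or.inl h]
  have haG0 : ∀ p ∈ cylinderBoundary (Cube.boundary (Fin n)), aG (p, 0) = a p := by
    rintro ⟨k, t⟩ (hk | hk | hk)
    · rw [haG2 k t 0 (Or.inl hk)]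
      simp [aC, haR' k t (Or.inl hk)]
    · rw [haG2 k t 0 (Or.inr hk)]
      simp [aC, haR' k t (Or.inr hk)]
    · change t = 1 at hk
      rw [hk, haG1, hG0]
  obtain ⟨β, hβ, hβ0, hβA, -⟩ := hK.cylinder.exists_homotopy_extension hb
    (a := fun p => f (aG p)) (f.continuous.comp_continuousOn haG)
    (fun p hp => by rw [haG0 p hp, hab p hp]) (fun _ => Set.mem_univ _)
    (fun _ _ _ => Set.mem_univ _)
  have key := LiftsUpToHomotopy.of_homotopy (f := f) f.continuous hK.cylinder
    (a := fun p => aG (p.1, σ p.2)) (β := fun p => β (p.1, σ p.2))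
    (haG.comp (f := fun p : ((Fin n → I) × I) × I => (p.1, σ p.2)) (by fun_prop) fun p hp => hp)
    (by fun_prop) (fun p hp t => (hβA p hp _).symm)
    (h.lifts_of_const_sides (x := aR (fun _ => 0, 0)) (α := fun k => G (k, 1)) (by fun_prop)
      (by fun_prop) (fun k => by rw [haG1]; simp)
      (fun k t hkt => by rw [haG2 k t _ hkt]; simp [aC]) (fun p hp => (hβA p hp _).symm))
  simp only [symm_one, hβ0] at key
  exact key.congr haG0

/-- A weak homotopy equivalence solves lifting problems on cubes up to homotopy. -/
lemma IsWeakHomotopyEquiv.hasCubeLifting {f : C(X, Y)} (h : IsWeakHomotopyEquiv f) :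
    HasCubeLifting f := by
  have h0 : ∀ y : Y, ∃ x, Joined (f x) y := fun y => by
    obtain ⟨⟨x⟩, hx⟩ := h.1.2 (Quotient.mk _ y)
    exact ⟨x, Quotient.exact hx⟩
  refine hasCubeLiftingOn_of_cubes (fun ⟨y, _⟩ => ⟨(h0 y).choose⟩)
    fun n a b ha hb _ hab => ?_
  cases n with
  | zero =>
    obtain ⟨x, ⟨γ⟩⟩ := h0 (b 0)
    exact ⟨fun _ => x, fun p => γ p.2, by fun_prop, by fun_prop, fun k hk => hk.elim fun i => i.elim0,
      fun k => by simp, fun k => by simp [Subsingleton.elim k 0],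
      fun k hk => hk.elim fun i => i.elim0, fun _ => Set.mem_univ _⟩
  | succ n =>
    obtain ⟨c, hc⟩ := exists_homeomorph_cylinder n
    refine LiftsUpToHomotopy.of_homeomorph c.symm (A' := cylinderBoundary (Cube.boundary (Fin n)))
      (fun k => by rw [hc]; simp) ?_
    exact h.lifts_cylinder (ha.comp (by fun_prop) fun k hk => (hc k).1 hk) (by fun_prop)
      fun k hk => hab _ ((hc k).1 hk)

end OfWeakEquiv

section Serre

variable {X B : Type*} [TopologicalSpace X] [TopologicalSpace B]

/-- A Serre fibration has the homotopy lifting property for cubes, as these are retracts of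
closed balls. -/
lemma IsSerreFibration.exists_lift_cube {p : C(X, B)} (hp : IsSerreFibration p) {n : ℕ}
    {u : (Fin n → I) → X} {v : (Fin n → I) × I → B} (hu : Continuous u) (hv : Continuous v)
    (huv : ∀ k, v (k, 0) = p (u k)) :
    ∃ w : (Fin n → I) × I → X, Continuous w ∧ (∀ k, w (k, 0) = u k) ∧ ∀ z, p (w z) = v z := by
  have hj : Continuous fun k : Fin n → I => WithLp.toLp 2 fun i => (k i : ℝ) := by fun_prop
  obtain ⟨C, hC⟩ := isCompact_univ.exists_bound_of_continuousOn hj.continuousOn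
  have hC' : 0 < |C| + 1 := by positivity
  let j : (Fin n → I) → (Metric.closedBall (0 : EuclideanSpace ℝ (Fin n)) 1 : Set _) := fun k =>
    ⟨(|C| + 1)⁻¹ • WithLp.toLp 2 fun i => (k i : ℝ), by
      rw [mem_closedBall_zero_iff, norm_smul, norm_inv, Real.norm_of_nonneg hC'.le,
        inv_mul_le_iff₀ hC', mul_one]
      exact (hC k (Set.mem_univ _)).trans ((le_abs_self C).trans (by linarith))⟩
  let r : (Metric.closedBall (0 : EuclideanSpace ℝ (Fin n)) 1 : Set _) → Fin n → I := fun y i =>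
    Set.projIcc 0 1 zero_le_one ((|C| + 1) * y.1 i)
  have hjc : Continuous j := Continuous.subtype_mk (by fun_prop) _
  have hr : Continuous r := continuous_pi fun i => continuous_projIcc.comp (by fun_prop)
  have hrj : ∀ k, r (j k) = k := fun k => funext fun i => projIcc_eq_of_val (by
    simp [j, hC'.ne'])
  obtain ⟨w, hw0, hw⟩ := hp n ⟨fun y => u (r y), by fun_prop⟩ ⟨fun q => v (r q.1, q.2), by fun_prop⟩
    fun y => huv _
  exact ⟨fun q => w (j q.1, q.2), by fun_prop, fun k => by simp [hw0, hrj],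
    fun q => by simp [hw, hrj]⟩

/-- The relative homotopy lifting property of a Serre fibration for cube pairs. -/
lemma IsSerreFibration.exists_relative_lift {p : C(X, B)} (hp : IsSerreFibration p) {K : Type}
    [TopologicalSpace K] {A : Set K} (hK : IsCubePair A) {u : K × I → X} {v : K × I → B}
    (hu : ContinuousOn u {q | q.1 ∈ A ∨ q.2 = 0}) (hv : Continuous v)
    (huv : ∀ q : K × I, q.1 ∈ A ∨ q.2 = 0 → p (u q) = v q) :
    ∃ w : K × I → X, Continuous w ∧ (∀ q : K × I, q.1 ∈ A ∨ q.2 = 0 → w q = u q) ∧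
      ∀ q, p (w q) = v q := by
  obtain ⟨n, e, he⟩ := hK
  obtain ⟨c, -⟩ := exists_homeomorph_cylinder n
  let ε : K × I ≃ₜ (Fin n → I) × I := e.prodCongr (Homeomorph.refl I)
  have hmem : ∀ k, (ε.symm (cubeRetract k)).1 ∈ A ∨ (ε.symm (cubeRetract k)).2 = 0 := fun k => by
    rw [he]
    simpa [ε] using cubeRetract_mem k
  have hc : Continuous fun q : ((Fin n → I) × I) × I => cubeContract (cubeRetract q.1) q.2 :=
    continuous_cubeContract.comp (f := fun q : ((Fin n → I) × I) × I => (cubeRetract q.1, q.2))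
      (by fun_prop)
  obtain ⟨w, hw, hw0, hwp⟩ := hp.exists_lift_cube (n := n + 1)
    (u := fun k => u (ε.symm (cubeRetract (c.symm k))))
    (v := fun q => v (ε.symm (cubeContract (cubeRetract (c.symm q.1)) q.2)))
    (hu.comp_continuous (by fun_prop) fun k => hmem _)
    (hv.comp (ε.symm.continuous.comp
      (hc.comp (f := fun q : (Fin (n + 1) → I) × I => (c.symm q.1, q.2)) (by fun_prop))))
    (fun k => by rw [huv _ (hmem _), cubeContract_zero])
  refine ⟨fun q => w (c (ε q), cubeDepth (ε q)), by fun_prop, fun q hq => ?_, fun q => ?_⟩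
  · have hq' : (ε q).1 ∈ Cube.boundary (Fin n) ∨ (ε q).2 = 0 := by
      rw [he] at hq
      exact hq
    have : cubeDepth (ε q) = 0 := Subtype.ext (by simp [cubeDepth, cubeRadius_eq_one hq'])
    simp [this, hw0, cubeRetract_eq_self hq']
  · simp [hwp, cubeContract_cubeRetract]

end Serre

section FiberProduct

variable {B X Y X' Y' : Type*} [TopologicalSpace B] [TopologicalSpace X] [TopologicalSpace Y]
  [TopologicalSpace X'] [TopologicalSpace Y']

/-- The map induced on fibre products by a pair of maps over the base. -/
def fiberProductMap (pX : C(X, B)) (pY : C(Y, B)) (pX' : C(X', B)) (pY' : C(Y', B))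
    (φ : C(X, X')) (ψ : C(Y, Y')) (hφ : ∀ x, pX' (φ x) = pX x) (hψ : ∀ y, pY' (ψ y) = pY y) :
    C({z : X × Y // pX z.1 = pY z.2}, {z : X' × Y' // pX' z.1 = pY' z.2}) :=
  ⟨fun z => ⟨(φ z.1.1, ψ z.1.2), by rw [hφ, hψ]; exact z.2⟩, by fun_prop⟩

lemma HasCubeLifting.exists_lift_fiberProduct_right {pX : C(X, B)} {pY : C(Y, B)} {pY' : C(Y', B)}
    {ψ : C(Y, Y')} (hψp : ∀ y, pY' (ψ y) = pY y) (hp : IsSerreFibration pX)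
    (hψ : HasCubeLifting ψ) {K : Type} [TopologicalSpace K] {A : Set K} (hK : IsCubePair A)
    {a : K → Y} {bX : K → X} {bY : K → Y'} (ha : ContinuousOn a A) (hbX : Continuous bX)
    (hbY : Continuous bY) (hb : ∀ k, pX (bX k) = pY' (bY k)) (hab : ∀ k ∈ A, ψ (a k) = bY k) :
    ∃ (y : K → Y) (G : K × I → X) (H : K × I → Y'), Continuous y ∧ Continuous G ∧ Continuous H ∧
      (∀ q, pX (G q) = pY' (H q)) ∧ (∀ k, pX (G (k, 0)) = pY (y k)) ∧ (∀ k ∈ A, y k = a k) ∧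
      (∀ k, H (k, 0) = ψ (y k)) ∧ (∀ k, G (k, 1) = bX k ∧ H (k, 1) = bY k) ∧
      ∀ k ∈ A, ∀ t, G (k, t) = bX k ∧ H (k, t) = bY k := by
  obtain ⟨y, H, hy, hH, hyA, hH0, hH1, hHA, -⟩ := hψ.lifts hK ha hbY hab
  obtain ⟨w, hw, hwu, hwp⟩ := hp.exists_relative_lift hK (u := fun q => bX q.1)
    (v := fun q => pY' (H (q.1, σ q.2))) (by fun_prop) (by fun_prop) (by
      rintro ⟨k, t⟩ (hk | hk)
      · simp only
        rw [hHA k hk, hb]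
      · change t = 0 at hk
        simp [hk, hH1, hb])
  refine ⟨y, fun q => w (q.1, σ q.2), H, hy, by fun_prop, hH, fun q => ?_, fun k => ?_, hyA, hH0,
    fun k => ⟨?_, hH1 k⟩, fun k hk t => ⟨?_, hHA k hk t⟩⟩
  · simp [hwp]
  · simp [hwp, hH0, hψp]
  · simp [hwu]
  · simp [hwu, hk]

lemma HasCubeLifting.exists_lift_fiberProduct_left {pX : C(X, B)} {pX' : C(X', B)} {pY : C(Y, B)}
    {φ : C(X, X')} (hφp : ∀ x, pX' (φ x) = pX x) (hp : IsSerreFibration pX)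
    (hp' : IsSerreFibration pX') (hφ : HasCubeLifting φ) {K : Type} [TopologicalSpace K]
    {A : Set K} (hK : IsCubePair A) {a : K → X} {bX : K → X'} {bY : K → Y}
    (ha : ContinuousOn a A) (hbX : Continuous bX) (hb : ∀ k, pX' (bX k) = pY (bY k))
    (hab : ∀ k ∈ A, φ (a k) = bX k) :
    ∃ (x : K → X) (G : K × I → X'), Continuous x ∧ Continuous G ∧
      (∀ q, pX' (G q) = pY (bY q.1)) ∧ (∀ k, pX (x k) = pY (bY k)) ∧ (∀ k ∈ A, x k = a k) ∧
      (∀ k, G (k, 0) = φ (x k)) ∧ (∀ k, G (k, 1) = bX k) ∧ ∀ k ∈ A, ∀ t, G (k, t) = bX k := by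
  classical
  obtain ⟨x, H, hx, hH, hxA, hH0, hH1, hHA, -⟩ := hφ.lifts hK ha hbX hab
  obtain ⟨w, hw, hwu, hwp⟩ := hp.exists_relative_lift hK (u := fun q => x q.1)
    (v := fun q => pX' (H q)) (by fun_prop) (by fun_prop) (by
      rintro ⟨k, t⟩ (hk | hk)
      · simp only
        rw [hHA k hk, hxA k hk, ← hφp, hab k hk]
      · change t = 0 at hk
        simp [hk, hH0, hφp])
  let u : (K × I) × I → X' := fun q => if q.1.2 = 0 then φ (w (q.1.1, q.2)) else H q.1
  have hu1 : ∀ k s, u ((k, 0), s) = φ (w (k, s)) := fun k s => if_pos rfl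
  have hu2 : ∀ k t s, k ∈ A ∨ t = 1 ∨ s = 0 → u ((k, t), s) = H (k, t) := fun k t s h => by
    by_cases ht : t = 0
    · subst ht
      rw [hu1]
      rcases h with h | h | h
      · rw [hwu (k, s) (Or.inl h), hxA k h, hHA k h, hab k h]
      · exact absurd h zero_ne_one
      · rw [hwu (k, s) (Or.inr h), hH0]
    · exact if_neg ht
  have hu : ContinuousOn u {q | q.1 ∈ cylinderBoundary A ∨ q.2 = 0} := by
    have : ContinuousOn u ({q | q.1.2 = 0} ∪ {q | q.1.1 ∈ A ∨ q.1.2 = 1 ∨ q.2 = 0}) := by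
      refine continuousOn_ite_of_isClosed (isClosed_eq (by fun_prop) continuous_const)
        ((hK.isClosed.preimage (by fun_prop)).union
          ((isClosed_eq (by fun_prop) continuous_const).union
            (isClosed_eq (by fun_prop) continuous_const)))
        (by fun_prop) (by fun_prop) ?_
      rintro ⟨⟨k, t⟩, s⟩ h1 (rfl : t = 0)
      exact (hu1 k s).symm.trans (hu2 k 0 s h1)
    refine this.mono ?_
    rintro ⟨⟨k, t⟩, s⟩ ((h | h | h) | h)
    exacts [Or.inr (Or.inl h), Or.inl h, Or.inr (Or.inr (Or.inl h)), Or.inr (Or.inr (Or.inr h))]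
  obtain ⟨G, hG, hGu, hGp⟩ := hp'.exists_relative_lift hK.cylinder hu
    (v := fun q => pX' (H (q.1.1, max q.2 q.1.2))) (by fun_prop) (by
      rintro ⟨⟨k, t⟩, s⟩ ((h | h | h) | h)
      · rw [hu2 k t s (Or.inl h)]
        simp only
        rw [hHA k h, hHA k h]
      · change t = 0 at h
        subst h
        rw [hu1, hφp, hwp, max_eq_left nonneg']
      · rw [hu2 k t s (Or.inr (Or.inl h))]
        change t = 1 at h
        subst h
        rw [max_eq_right le_one']
      · rw [hu2 k t s (Or.inr (Or.inr h))]
        change s = 0 at h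
        subst h
        rw [max_eq_right nonneg'])
  refine ⟨fun k => w (k, 1), fun q => G (q, 1), by fun_prop, by fun_prop, fun q => ?_, fun k => ?_,
    fun k hk => ?_, fun k => ?_, fun k => ?_, fun k hk t => ?_⟩
  · simp only [hGp]
    rw [max_eq_left le_one', hH1, hb]
  · simp only [hwp, hH1, hb]
  · exact (hwu (k, 1) (Or.inl hk)).trans (hxA k hk)
  · exact (hGu ((k, 0), 1) (Or.inl (Or.inr (Or.inl rfl)))).trans (hu1 k 1)
  · exact (hGu ((k, 1), 1) (Or.inl (Or.inr (Or.inr rfl)))).trans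
      ((hu2 k 1 1 (Or.inr (Or.inl rfl))).trans (hH1 k))
  · exact (hGu ((k, t), 1) (Or.inl (Or.inl hk))).trans
      ((hu2 k t 1 (Or.inl hk)).trans (hHA k hk t))

lemma hasCubeLifting_fiberProductMap_right {pX : C(X, B)} {pY : C(Y, B)} {pY' : C(Y', B)}
    {ψ : C(Y, Y')} (hψp : ∀ y, pY' (ψ y) = pY y) (hp : IsSerreFibration pX)
    (hψ : HasCubeLifting ψ) :
    HasCubeLifting (fiberProductMap pX pY pX pY' (ContinuousMap.id X) ψ (fun _ => rfl) hψp) := by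
  refine ⟨fun ⟨z, _⟩ => ?_, fun K _ A hK a b ha hb _ hab => ?_⟩
  · have : Nonempty Y' := ⟨z.1.2⟩
    obtain ⟨y, G, -, -, -, -, -, h, -⟩ := hψ.exists_lift_fiberProduct_right hψp hp
      (isCubePair_boundary (Fin 0)) (a := fun _ => Classical.choice hψ.nonempty)
      (bX := fun _ => z.1.1) (bY := fun _ => z.1.2) continuousOn_const continuous_const
      continuous_const (fun _ => z.2) (fun k hk => hk.elim fun i => i.elim0)
    exact ⟨⟨(G (0, 0), y 0), h 0⟩⟩
  · obtain ⟨y, G, H, hy, hG, hH, hGH, h, hyA, hH0, h1, hA⟩ :=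
      hψ.exists_lift_fiberProduct_right hψp hp hK (a := fun k => (a k).1.2)
        (bX := fun k => (b k).1.1) (bY := fun k => (b k).1.2) (by fun_prop) (by fun_prop)
        (by fun_prop) (fun k => (b k).2) (fun k hk => congrArg (fun z => z.1.2) (hab k hk))
    refine ⟨fun k => ⟨(G (k, 0), y k), h k⟩, fun q => ⟨(G q, H q), hGH q⟩, by fun_prop,
      by fun_prop, fun k hk => ?_, fun k => ?_, fun k => ?_, fun k hk t => ?_,
      fun _ => Set.mem_univ _⟩
    · refine Subtype.ext (Prod.ext ?_ (hyA k hk))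
      exact (hA k hk 0).1.trans (congrArg (fun z => z.1.1) (hab k hk)).symm
    · exact Subtype.ext (Prod.ext rfl (hH0 k))
    · exact Subtype.ext (Prod.ext (h1 k).1 (h1 k).2)
    · exact Subtype.ext (Prod.ext (hA k hk t).1 (hA k hk t).2)

lemma hasCubeLifting_fiberProductMap_left {pX : C(X, B)} {pX' : C(X', B)} {pY : C(Y, B)}
    {φ : C(X, X')} (hφp : ∀ x, pX' (φ x) = pX x) (hp : IsSerreFibration pX)
    (hp' : IsSerreFibration pX') (hφ : HasCubeLifting φ) :
    HasCubeLifting (fiberProductMap pX pY pX' pY φ (ContinuousMap.id Y) hφp (fun _ => rfl)) := by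
  refine ⟨fun ⟨z, _⟩ => ?_, fun K _ A hK a b ha hb _ hab => ?_⟩
  · have : Nonempty X' := ⟨z.1.1⟩
    obtain ⟨x, G, -, -, -, h, -⟩ := hφ.exists_lift_fiberProduct_left hφp hp hp' (pY := pY)
      (isCubePair_boundary (Fin 0)) (a := fun _ => Classical.choice hφ.nonempty)
      (bX := fun _ => z.1.1) (bY := fun _ => z.1.2) continuousOn_const continuous_const
      (fun _ => z.2) (fun k hk => hk.elim fun i => i.elim0)
    exact ⟨⟨(x 0, z.1.2), h 0⟩⟩
  · obtain ⟨x, G, hx, hG, hGp, h, hxA, hG0, h1, hA⟩ :=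
      hφ.exists_lift_fiberProduct_left hφp hp hp' (pY := pY) hK (a := fun k => (a k).1.1)
        (bX := fun k => (b k).1.1) (bY := fun k => (b k).1.2) (by fun_prop) (by fun_prop)
        (fun k => (b k).2) (fun k hk => congrArg (fun z => z.1.1) (hab k hk))
    refine ⟨fun k => ⟨(x k, (b k).1.2), h k⟩, fun q => ⟨(G q, (b q.1).1.2), hGp q⟩, by fun_prop,
      by fun_prop, fun k hk => ?_, fun k => ?_, fun k => ?_, fun k hk t => ?_,
      fun _ => Set.mem_univ _⟩
    · refine Subtype.ext (Prod.ext (hxA k hk) ?_)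
      exact (congrArg (fun z => z.1.2) (hab k hk)).symm
    · exact Subtype.ext (Prod.ext (hG0 k) rfl)
    · exact Subtype.ext (Prod.ext (h1 k) rfl)
    · exact Subtype.ext (Prod.ext (hA k hk t) rfl)

/-- Fibre products along Serre fibrations preserve weak equivalences. -/
lemma hasCubeLifting_fiberProductMap {pX : C(X, B)} {pY : C(Y, B)} {pX' : C(X', B)}
    {pY' : C(Y', B)} {φ : C(X, X')} {ψ : C(Y, Y')} (hφp : ∀ x, pX' (φ x) = pX x)
    (hψp : ∀ y, pY' (ψ y) = pY y) (hp : IsSerreFibration pX) (hp' : IsSerreFibration pX')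
    (hφ : HasCubeLifting φ) (hψ : HasCubeLifting ψ) :
    HasCubeLifting (fiberProductMap pX pY pX' pY' φ ψ hφp hψp) :=
  (hasCubeLifting_fiberProductMap_left hφp hp hp' hφ).comp
    (hasCubeLifting_fiberProductMap_right hψp hp hψ) (map_continuous _) (map_continuous _)

end FiberProduct

/-- Constructing a continuous map by induction over the skeleta of a finite closed cell
decomposition, subject to a condition `G` which is monotone in the cells. -/
lemma exists_continuous_of_cells {K E C : Type*} [TopologicalSpace K] [TopologicalSpace E]
    [Nonempty E] [Finite C] (cell bd : C → Set K) (dim : C → ℕ)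
    (hclosed : ∀ c, IsClosed (cell c))
    (hcover : ∀ x, ∃ c, x ∈ cell c)
    (hface : ∀ c, ∀ x ∈ bd c, ∃ c', dim c' < dim c ∧ cell c' ⊆ cell c ∧ x ∈ cell c')
    (hdisj : ∀ c c' x, x ∈ cell c → x ∈ cell c' → c' ≠ c → dim c' ≤ dim c → x ∈ bd c)
    (G : C → K → E → Prop)
    (hmono : ∀ c c' x y, cell c' ⊆ cell c → G c' x y → G c x y)
    (hext : ∀ c (e : K → E), ContinuousOn e (bd c) → (∀ x ∈ bd c, G c x (e x)) →
      ∃ e' : K → E, ContinuousOn e' (cell c) ∧ (∀ x ∈ bd c, e' x = e x) ∧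
        ∀ x ∈ cell c, G c x (e' x)) :
    ∃ e : K → E, Continuous e ∧ ∀ c, ∀ x ∈ cell c, G c x (e x) := by
  classical
  have key : ∀ d : ℕ, ∃ e : K → E, ∀ c, dim c < d →
      ContinuousOn e (cell c) ∧ ∀ x ∈ cell c, G c x (e x) := by
    intro d
    induction d with
    | zero => exact ⟨fun _ => Classical.arbitrary E, fun c hc => absurd hc (Nat.not_lt_zero _)⟩
    | succ d ih =>
      obtain ⟨e, he⟩ := ih
      have hlow : ∀ c x, x ∈ cell c → dim c < d → ∀ c', dim c' = d → x ∈ cell c' → x ∈ bd c' :=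
        fun c x hx hc c' hc' hx' => hdisj c' c x hx' hx (by rintro rfl; omega) (by omega)
      have hbdc : ∀ c, dim c = d → ContinuousOn e (bd c) := fun c hc => by
        have : bd c ⊆ ⋃ c' : {c' // dim c' < d}, cell c'.1 := fun x hx => by
          obtain ⟨c', h1, -, h3⟩ := hface c x hx
          exact Set.mem_iUnion.2 ⟨⟨c', hc ▸ h1⟩, h3⟩
        exact ((locallyFinite_of_finite
          fun c' : {c' // dim c' < d} => cell c'.1).continuousOn_iUnion
          (fun c' => hclosed c'.1) fun c' => (he c'.1 c'.2).1).mono this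
      have hex : ∀ c, ∃ e' : K → E, dim c = d → ContinuousOn e' (cell c) ∧
          (∀ x ∈ bd c, e' x = e x) ∧ ∀ x ∈ cell c, G c x (e' x) := fun c => by
        by_cases hc : dim c = d
        · obtain ⟨e', he'⟩ := hext c e (hbdc c hc) fun x hx => by
            obtain ⟨c', h1, h2, h3⟩ := hface c x hx
            exact hmono c c' x _ h2 ((he c' (hc ▸ h1)).2 x h3)
          exact ⟨e', fun _ => he'⟩
        · exact ⟨e, fun h => absurd h hc⟩
      choose e' he' using hex
      let e₁ : K → E := fun x =>
        if h : ∃ c, dim c = d ∧ x ∈ cell c ∧ x ∉ bd c then e' h.choose x else e x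
      have hold : ∀ c x, dim c < d → x ∈ cell c → e₁ x = e x := fun c x hc hx =>
        dif_neg fun ⟨c', h1, h2, h3⟩ => h3 (hlow c x hx hc c' h1 h2)
      have hnew : ∀ c x, dim c = d → x ∈ cell c → e₁ x = e' c x := fun c x hc hx => by
        by_cases hxb : x ∈ bd c
        · obtain ⟨c', h1, h2, h3⟩ := hface c x hxb
          rw [hold c' x (hc ▸ h1) h3, (he' c hc).2.1 x hxb]
        · have h : ∃ c, dim c = d ∧ x ∈ cell c ∧ x ∉ bd c := ⟨c, hc, hx, hxb⟩
          have : h.choose = c := by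
            by_contra hne
            exact hxb (hdisj c _ x hx h.choose_spec.2.1 hne (by rw [h.choose_spec.1, hc]))
          rw [show e₁ x = e' h.choose x from dif_pos h, this]
      refine ⟨e₁, fun c hc => ?_⟩
      rcases Nat.lt_succ_iff_lt_or_eq.1 hc with hc | hc
      · refine ⟨(he c hc).1.congr fun x hx => hold c x hc hx, fun x hx => ?_⟩
        rw [hold c x hc hx]
        exact (he c hc).2 x hx
      · refine ⟨(he' c hc).1.congr fun x hx => hnew c x hc hx, fun x hx => ?_⟩
        rw [hnew c x hc hx]
        exact (he' c hc).2.2 x hx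
  obtain ⟨M, hM⟩ := (Set.finite_range dim).bddAbove
  obtain ⟨e, he⟩ := key (M + 1)
  have hd : ∀ c, dim c < M + 1 := fun c => Nat.lt_succ_of_le (hM ⟨c, rfl⟩)
  exact ⟨e, (locallyFinite_of_finite _).continuous
    (Set.eq_univ_of_forall fun x => Set.mem_iUnion.2 (hcover x)) hclosed fun c => (he c (hd c)).1,
    fun c => (he c (hd c)).2⟩

section Grid

/-- The cells of the grid of mesh `1 / N`: the `i`-th coordinate is a grid point when `c i` is
even and runs over a grid interval when `c i` is odd. -/
def gridCell {n : ℕ} (N : ℕ) (c : Fin n → Fin (2 * N + 1)) : Set (Fin n → I) :=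
  {x | ∀ i, (((c i).1 / 2 : ℕ) : ℝ) ≤ N * x i ∧ (N * x i : ℝ) ≤ (((c i).1 + 1) / 2 : ℕ)}

/-- The boundary of a grid cell. -/
def gridBoundary {n : ℕ} (N : ℕ) (c : Fin n → Fin (2 * N + 1)) : Set (Fin n → I) :=
  {x | x ∈ gridCell N c ∧ ∃ i, (c i).1 % 2 = 1 ∧
    ((N * x i : ℝ) = ((c i).1 / 2 : ℕ) ∨ (N * x i : ℝ) = (((c i).1 + 1) / 2 : ℕ))}

/-- The dimension of a grid cell. -/
def gridDim {n : ℕ} (N : ℕ) (c : Fin n → Fin (2 * N + 1)) : ℕ :=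
  (Finset.univ.filter fun i => (c i).1 % 2 = 1).card

variable {n N : ℕ}

lemma isClosed_gridCell (c : Fin n → Fin (2 * N + 1)) : IsClosed (gridCell N c) := by
  have : gridCell N c = ⋂ i, {x : Fin n → I | (((c i).1 / 2 : ℕ) : ℝ) ≤ N * x i} ∩
      {x | (N * x i : ℝ) ≤ (((c i).1 + 1) / 2 : ℕ)} := by
    ext x; simp [gridCell]
  rw [this]
  exact isClosed_iInter fun i => (isClosed_le (by fun_prop) (by fun_prop)).inter
    (isClosed_le (by fun_prop) (by fun_prop))

lemma exists_gridCell_face (c : Fin n → Fin (2 * N + 1)) (i : Fin n) (hi : (c i).1 % 2 = 1)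
    (m : Fin (2 * N + 1)) (hm : m.1 + 1 = (c i).1 ∨ m.1 = (c i).1 + 1) (x : Fin n → I)
    (hx : x ∈ gridCell N c) (hxi : (N * x i : ℝ) = (m.1 / 2 : ℕ)) :
    ∃ c', gridDim N c' < gridDim N c ∧ gridCell N c' ⊆ gridCell N c ∧ x ∈ gridCell N c' := by
  have hm2 : (m.1 + 1) / 2 = m.1 / 2 := by omega
  refine ⟨Function.update c i m, ?_, fun y hy j => ?_, fun j => ?_⟩
  · refine Finset.card_lt_card (Finset.ssubset_iff_of_subset (fun j => ?_) |>.2 ⟨i, ?_, ?_⟩)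
    · simp only [Finset.mem_filter, Finset.mem_univ, true_and]
      by_cases hj : j = i
      · subst hj; simp [hi]
      · simp [hj]
    · simpa using hi
    · simp; omega
  · by_cases hj : j = i
    · subst hj
      have := hy j
      simp only [Function.update_self] at this
      rw [hm2] at this
      refine ⟨le_trans ?_ this.1, this.2.trans ?_⟩ <;> rw [Nat.cast_le] <;> omega
    · have := hy j
      simpa [hj] using this
  · by_cases hj : j = i
    · subst hj
      simp only [Function.update_self]
      rw [hm2, hxi]
      exact ⟨le_rfl, le_rfl⟩
    · simpa [hj] using hx j

lemma gridBoundary_face (c : Fin n → Fin (2 * N + 1)) (x : Fin n → I)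
    (hx : x ∈ gridBoundary N c) :
    ∃ c', gridDim N c' < gridDim N c ∧ gridCell N c' ⊆ gridCell N c ∧ x ∈ gridCell N c' := by
  obtain ⟨hxc, i, hi, h | h⟩ := hx
  · refine exists_gridCell_face c i hi ⟨(c i).1 - 1, by omega⟩ (Or.inl (by simp; omega)) x hxc ?_
    rw [h]; congr 1; simp; omega
  · exact exists_gridCell_face c i hi ⟨(c i).1 + 1, by omega⟩ (Or.inr rfl) x hxc h

lemma mem_gridBoundary_of_ne (c c' : Fin n → Fin (2 * N + 1)) (x : Fin n → I)
    (hx : x ∈ gridCell N c) (hx' : x ∈ gridCell N c') (hne : c' ≠ c)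
    (hd : gridDim N c' ≤ gridDim N c) : x ∈ gridBoundary N c := by
  by_contra hxb
  have hodd : ∀ i, (c i).1 % 2 = 1 → (c' i).1 = (c i).1 := fun i hi => by
    have h1 : (N * x i : ℝ) ≠ ((c i).1 / 2 : ℕ) := fun h => hxb ⟨hx, i, hi, Or.inl h⟩
    have h2 : (N * x i : ℝ) ≠ (((c i).1 + 1) / 2 : ℕ) := fun h => hxb ⟨hx, i, hi, Or.inr h⟩
    have h3 := lt_of_le_of_ne (hx i).1 h1.symm
    have h4 := lt_of_le_of_ne (hx i).2 h2
    have h5 := lt_of_lt_of_le h3 (hx' i).2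
    have h6 := lt_of_le_of_lt (hx' i).1 h4
    rw [Nat.cast_lt] at h5 h6
    omega
  have hsub : (Finset.univ.filter fun i => (c i).1 % 2 = 1) ⊆
      Finset.univ.filter fun i => (c' i).1 % 2 = 1 := fun i => by
    simp only [Finset.mem_filter, Finset.mem_univ, true_and]
    intro h
    rw [hodd i h, h]
  have heq := Finset.eq_of_subset_of_card_le hsub hd
  refine hne (funext fun i => Fin.ext ?_)
  by_cases hi : (c i).1 % 2 = 1
  · exact hodd i hi
  · have hi' : ¬ (c' i).1 % 2 = 1 := fun h => hi (by
      have : i ∈ Finset.univ.filter fun i => (c i).1 % 2 = 1 := by rw [heq]; simpa using h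
      simpa using this)
    have h1 := (hx i).1.trans (hx' i).2
    have h2 := (hx' i).1.trans (hx i).2
    rw [Nat.cast_le] at h1 h2
    omega

lemma exists_mem_gridCell (hN : 0 < N) (x : Fin n → I) : ∃ c : Fin n → Fin (2 * N + 1),
    x ∈ gridCell N c ∧ (x ∈ Cube.boundary (Fin n) → gridCell N c ⊆ Cube.boundary (Fin n)) := by
  classical
  have hNr : (0 : ℝ) < N := by exact_mod_cast hN
  have h : ∀ i, ∃ m : Fin (2 * N + 1), (((m.1 / 2 : ℕ) : ℝ) ≤ N * x i ∧
      (N * x i : ℝ) ≤ ((m.1 + 1) / 2 : ℕ)) ∧ (x i = 0 → m.1 = 0) ∧ (x i = 1 → m.1 = 2 * N) := by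
    intro i
    by_cases h0 : x i = 0
    · exact ⟨0, by simp [h0]⟩
    by_cases h1 : x i = 1
    · refine ⟨Fin.last _, ?_, fun h => absurd h h0, fun _ => rfl⟩
      simp only [Fin.val_last]
      rw [show 2 * N / 2 = N by omega, show (2 * N + 1) / 2 = N by omega, h1]
      simp
    · have hlt : (x i : ℝ) < 1 := lt_of_le_of_ne (x i).2.2 fun h => h1 (Subtype.ext h)
      have hpos : (0 : ℝ) ≤ N * x i := mul_nonneg hNr.le (x i).2.1
      have hfl : ⌊(N * x i : ℝ)⌋₊ < N := (Nat.floor_lt hpos).2 (by nlinarith)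
      refine ⟨⟨2 * ⌊(N * x i : ℝ)⌋₊ + 1, by omega⟩, ?_, fun h => absurd h h0, fun h => absurd h h1⟩
      simp only
      rw [show (2 * ⌊(N * x i : ℝ)⌋₊ + 1) / 2 = ⌊(N * x i : ℝ)⌋₊ by omega,
        show (2 * ⌊(N * x i : ℝ)⌋₊ + 1 + 1) / 2 = ⌊(N * x i : ℝ)⌋₊ + 1 by omega]
      refine ⟨Nat.floor_le hpos, ?_⟩
      push_cast
      exact (Nat.lt_floor_add_one _).le
  choose c hc using h
  refine ⟨c, fun i => (hc i).1, fun ⟨i, hi⟩ y hy => ⟨i, ?_⟩⟩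
  have hyi := hy i
  rcases hi with hi | hi
  · rw [(hc i).2.1 hi] at hyi
    simp only [Nat.zero_div, Nat.cast_zero, zero_add] at hyi
    left
    refine Subtype.ext (le_antisymm ?_ (y i).2.1)
    have := hyi.2
    norm_num at this
    simp only [Set.Icc.coe_zero]
    nlinarith
  · rw [(hc i).2.2 hi, show 2 * N / 2 = N by omega] at hyi
    right
    refine Subtype.ext (le_antisymm (y i).2.2 ?_)
    have := hyi.1
    simp only [Set.Icc.coe_one]
    nlinarith

/-- A grid cell is a retract of the ambient cube and is a cube with the expected boundary. -/
lemma exists_gridCell_chart (hN : 0 < N) (c : Fin n → Fin (2 * N + 1)) :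
    ∃ (L : Type) (_ : TopologicalSpace L) (A : Set L) (θ : L → Fin n → I) (ρ : (Fin n → I) → L),
      IsCubePair A ∧ Continuous θ ∧ Continuous ρ ∧ (∀ l, θ l ∈ gridCell N c) ∧
      (∀ x ∈ gridCell N c, θ (ρ x) = x) ∧ (∀ l ∈ A, θ l ∈ gridBoundary N c) ∧
      ∀ x ∈ gridBoundary N c, ρ x ∈ A := by
  have hNr : (0 : ℝ) < N := by exact_mod_cast hN
  let S := {i : Fin n // (c i).1 % 2 = 1}
  let s : (S → I) → Fin n → I := fun l i => if h : (c i).1 % 2 = 1 then l ⟨i, h⟩ else 0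
  have hs : Continuous s := continuous_pi fun i => by
    by_cases h : (c i).1 % 2 = 1
    · simp only [s, h, dite_true]; fun_prop
    · simp only [s, h, dite_false]; fun_prop
  let θ : (S → I) → Fin n → I := fun l i =>
    Set.projIcc 0 1 zero_le_one ((((c i).1 / 2 : ℕ) + (s l i : ℝ)) / N)
  let ρ : (Fin n → I) → S → I := fun x i =>
    Set.projIcc 0 1 zero_le_one (N * (x i.1 : ℝ) - ((c i.1).1 / 2 : ℕ))
  have hsle : ∀ l i, (s l i : ℝ) ≤ (((c i).1 + 1) / 2 : ℕ) - ((c i).1 / 2 : ℕ) := fun l i => by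
    by_cases h : (c i).1 % 2 = 1
    · rw [show ((c i).1 + 1) / 2 = (c i).1 / 2 + 1 by omega]
      push_cast
      linarith [(s l i).2.2]
    · rw [show ((c i).1 + 1) / 2 = (c i).1 / 2 by omega]
      simp [s, h]
  have hval : ∀ l i, N * (θ l i : ℝ) = ((c i).1 / 2 : ℕ) + (s l i : ℝ) := fun l i => by
    have h1 : (0 : ℝ) ≤ ((c i).1 / 2 : ℕ) + (s l i : ℝ) :=
      add_nonneg (Nat.cast_nonneg _) (s l i).2.1
    have h2 : (((c i).1 / 2 : ℕ) + (s l i : ℝ)) ≤ N := by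
      have h3 : ((((c i).1 + 1) / 2 : ℕ) : ℝ) ≤ N := by
        rw [Nat.cast_le]
        have := (c i).2
        omega
      linarith [hsle l i]
    have : (θ l i : ℝ) = (((c i).1 / 2 : ℕ) + (s l i : ℝ)) / N := by
      simp only [θ]
      rw [Set.projIcc_of_mem zero_le_one ⟨div_nonneg h1 hNr.le, (div_le_one hNr).2 h2⟩]
    rw [this]
    field_simp
  have hθρ : ∀ x ∈ gridCell N c, ∀ i, ((c i).1 / 2 : ℕ) + (s (ρ x) i : ℝ) = N * (x i : ℝ) := by
    intro x hx i
    have hxi := hx i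
    by_cases h : (c i).1 % 2 = 1
    · rw [show ((c i).1 + 1) / 2 = (c i).1 / 2 + 1 by omega] at hxi
      push_cast at hxi
      have : (s (ρ x) i : ℝ) = N * (x i : ℝ) - ((c i).1 / 2 : ℕ) := by
        simp only [s, h, dite_true, ρ]
        rw [Set.projIcc_of_mem zero_le_one]
        exact ⟨by linarith [hxi.1], by linarith [hxi.2]⟩
      rw [this]; ring
    · rw [show ((c i).1 + 1) / 2 = (c i).1 / 2 by omega] at hxi
      simp only [s, h, dite_false, Set.Icc.coe_zero, add_zero]
      linarith [hxi.1, hxi.2]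
  have hcell : ∀ l, θ l ∈ gridCell N c := fun l i => by
    rw [hval]
    exact ⟨by linarith [(s l i).2.1], by linarith [hsle l i]⟩
  refine ⟨S → I, inferInstance, Cube.boundary S, θ, ρ, isCubePair_boundary S,
    continuous_pi fun i => continuous_projIcc.comp (by fun_prop),
    continuous_pi fun i => continuous_projIcc.comp (by fun_prop), hcell, fun x hx => ?_,
    fun l ⟨i, hi⟩ => ⟨hcell l, i.1, i.2, ?_⟩, fun x ⟨hx, i, hi, hxi⟩ => ⟨⟨i, hi⟩, ?_⟩⟩
  · refine funext fun i => Subtype.ext (mul_left_cancel₀ hNr.ne' ?_)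
    rw [hval, hθρ x hx]
  · rw [hval, show ((c i.1).1 + 1) / 2 = (c i.1).1 / 2 + 1 by have := i.2; omega]
    have : s l i.1 = l i := by simp [s, i.2]
    rw [this]
    rcases hi with hi | hi
    · left; simp [hi]
    · right; simp [hi]
  · have h := hθρ x hx i
    have : s (ρ x) i = ρ x ⟨i, hi⟩ := by simp [s, hi]
    rw [this] at h
    rw [show ((c i).1 + 1) / 2 = (c i).1 / 2 + 1 by omega] at hxi
    push_cast at hxi
    rcases hxi with hxi | hxi
    · left; apply Subtype.ext; simp only [Set.Icc.coe_zero]; linarith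
    · right; apply Subtype.ext; simp only [Set.Icc.coe_one]; linarith

/-- Sufficiently fine grids are subordinate to a given open cover. -/
lemma exists_grid_subordinate {J : Type*} (U : J → Set (Fin n → I)) (hU : ∀ j, IsOpen (U j))
    (hcov : Set.univ ⊆ ⋃ j, U j) : ∃ N : ℕ, 0 < N ∧ ∀ c : Fin n → Fin (2 * N + 1),
      (gridCell N c).Nonempty → ∃ j, gridCell N c ⊆ U j := by
  obtain ⟨δ, hδ, h⟩ := lebesgue_number_lemma_of_metric isCompact_univ hU hcov
  obtain ⟨M, hM⟩ := exists_nat_one_div_lt hδ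
  refine ⟨M + 1, Nat.succ_pos _, fun c ⟨x, hx⟩ => ?_⟩
  obtain ⟨j, hj⟩ := h x (Set.mem_univ _)
  refine ⟨j, fun y hy => hj ?_⟩
  rw [Metric.mem_ball]
  refine lt_of_le_of_lt ((dist_pi_le_iff (by positivity)).2 fun i => ?_) hM
  have hMr : (0 : ℝ) < (M : ℝ) + 1 := by positivity
  have h1 := hx i
  have h2 := hy i
  have h3 : ((((c i).1 + 1) / 2 : ℕ) : ℝ) ≤ ((c i).1 / 2 : ℕ) + 1 := by
    rw [← Nat.cast_succ, Nat.cast_le]; omega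
  push_cast at h1 h2 h3
  rw [Subtype.dist_eq, Real.dist_eq, le_div_iff₀ hMr, ← abs_of_pos hMr, ← abs_mul, abs_le]
  constructor <;> nlinarith [h1.1, h1.2, h2.1, h2.2]

end Grid

section OpenCover

variable {X Y : Type*} [TopologicalSpace X] [TopologicalSpace Y]

/-- Lifting up to homotopy is local in the target for a two-element open cover. -/
lemma HasCubeLiftingOn.union {f : X → Y} (hf : Continuous f) {O₁ O₂ : Set Y} (ho₁ : IsOpen O₁)
    (ho₂ : IsOpen O₂) (h₁ : HasCubeLiftingOn f O₁) (h₂ : HasCubeLiftingOn f O₂)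
    (h₁₂ : HasCubeLiftingOn f (O₁ ∩ O₂)) : HasCubeLiftingOn f (O₁ ∪ O₂) := by
  classical
  have hne : (O₁ ∪ O₂).Nonempty → Nonempty X := by
    rintro ⟨y, hy | hy⟩
    exacts [h₁.1 ⟨y, hy⟩, h₂.1 ⟨y, hy⟩]
  refine hasCubeLiftingOn_of_cubes hne fun n a b ha hb hbO hab => ?_
  have : Nonempty X := hne ⟨b 0, hbO 0⟩
  have : Nonempty Y := ⟨b 0⟩
  obtain ⟨N, hN, hsub⟩ := exists_grid_subordinate
    (fun j : Bool => if j then b ⁻¹' O₁ else b ⁻¹' O₂)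
    (by rintro (_ | _)
        exacts [ho₂.preimage hb, ho₁.preimage hb])
    (fun k _ => Set.mem_iUnion.2 (by
      rcases hbO k with h | h
      exacts [⟨true, h⟩, ⟨false, h⟩]))
  have hsub' : ∀ c, gridCell N c ⊆ b ⁻¹' O₁ ∨ gridCell N c ⊆ b ⁻¹' O₂ := fun c => by
    by_cases hc : (gridCell N c).Nonempty
    · obtain ⟨_ | _, hj⟩ := hsub c hc
      exacts [Or.inr hj, Or.inl hj]
    · rw [Set.not_nonempty_iff_eq_empty] at hc
      simp [hc]
  let O : (Fin n → Fin (2 * N + 1)) → Set Y := fun c =>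
    {y | (gridCell N c ⊆ b ⁻¹' O₁ → y ∈ O₁) ∧ (gridCell N c ⊆ b ⁻¹' O₂ → y ∈ O₂)}
  have hOsub : ∀ c, O c ⊆ O₁ ∪ O₂ := fun c y hy =>
    (hsub' c).elim (fun h => Or.inl (hy.1 h)) fun h => Or.inr (hy.2 h)
  have hO : ∀ c, HasCubeLiftingOn f (O c) := fun c => by
    by_cases c1 : gridCell N c ⊆ b ⁻¹' O₁ <;> by_cases c2 : gridCell N c ⊆ b ⁻¹' O₂
    · have : O c = O₁ ∩ O₂ := by ext y; simp [O, c1, c2]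
      rwa [this]
    · have : O c = O₁ := by ext y; simp [O, c1, c2]
      rwa [this]
    · have : O c = O₂ := by ext y; simp [O, c1, c2]
      rwa [this]
    · exact absurd (hsub' c) (by tauto)
  have hbOc : ∀ c, ∀ k ∈ gridCell N c, b k ∈ O c := fun c k hk => ⟨fun h => h hk, fun h => h hk⟩
  have : Nonempty (X × C(I, Y)) := ⟨(Classical.arbitrary X, ContinuousMap.const I (b 0))⟩
  obtain ⟨e, he, heG⟩ := exists_continuous_of_cells (E := X × C(I, Y)) (gridCell N)
    (gridBoundary N) (gridDim N) isClosed_gridCell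
    (fun x => (exists_mem_gridCell hN x).imp fun _ h => h.1) gridBoundary_face
    mem_gridBoundary_of_ne
    (fun c k z => z.2 0 = f z.1 ∧ z.2 1 = b k ∧ (∀ t, z.2 t ∈ O c) ∧
      (gridCell N c ⊆ Cube.boundary (Fin n) → z.1 = a k ∧ ∀ t, z.2 t = b k))
    (fun c c' k z hcc' hz => ⟨hz.1, hz.2.1, fun t => ⟨fun h => (hz.2.2.1 t).1 (hcc'.trans h),
      fun h => (hz.2.2.1 t).2 (hcc'.trans h)⟩, fun h => hz.2.2.2 (hcc'.trans h)⟩)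
    (by
      intro c e hec heG
      by_cases hc : gridCell N c ⊆ Cube.boundary (Fin n)
      · refine ⟨fun k => (a k, ContinuousMap.const I (b k)), (ha.mono hc).prodMk
          (ContinuousMap.continuous_const'.comp hb).continuousOn, fun k hk => ?_, fun k hk =>
          ⟨(hab k (hc hk)).symm, rfl, fun t => hbOc c k hk, fun _ => ⟨rfl, fun _ => rfl⟩⟩⟩
        obtain ⟨-, -, -, h⟩ := heG k hk
        exact Prod.ext (h hc).1.symm (ContinuousMap.ext fun t => ((h hc).2 t).symm)
      · obtain ⟨L, _, A, θ, ρ, hL, hθ, hρ, hθc, hθρ, hθA, hρA⟩ := exists_gridCell_chart hN c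
        have heθ : ContinuousOn (fun l => e (θ l)) A := hec.comp hθ.continuousOn hθA
        obtain ⟨x, H, hx, hH, hxA, hH0, hH1, hHA, hHO⟩ := (hO c).exists_rel hf hL
          (a := fun l => (e (θ l)).1) (b := fun l => b (θ l)) (η := fun q => (e (θ q.1)).2 q.2)
          (continuous_fst.comp_continuousOn heθ) (by fun_prop)
          (ContinuousEval.continuous_eval.comp_continuousOn
            ((continuous_snd.comp_continuousOn (heθ.comp continuousOn_fst fun q hq => hq)).prodMk
              continuousOn_snd))
          (fun l => hbOc c _ (hθc l)) (fun l hl t => (heG _ (hθA l hl)).2.2.1 t)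
          (fun l hl => (heG _ (hθA l hl)).1) (fun l hl => (heG _ (hθA l hl)).2.1)
        refine ⟨fun k => (x (ρ k), (ContinuousMap.curry ⟨H, hH⟩) (ρ k)),
          Continuous.continuousOn (by fun_prop), fun k hk => ?_, fun k hk => ⟨?_, ?_, ?_, ?_⟩⟩
        · have hk' := hρA k hk
          refine Prod.ext ?_ (ContinuousMap.ext fun t => ?_)
          · simp only [hxA _ hk', hθρ k hk.1]
          · refine (hHA _ hk' t).trans ?_
            simp only [hθρ k hk.1]
        · exact hH0 _
        · refine (hH1 _).trans ?_
          rw [hθρ k hk]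
        · exact fun t => hHO _
        · exact fun h => absurd h hc)
  have hcell : ∀ k : Fin n → I, ∃ c, k ∈ gridCell N c := fun k =>
    (exists_mem_gridCell hN k).imp fun _ h => h.1
  refine ⟨fun k => (e k).1, fun q => (e q.1).2 q.2, by fun_prop, by fun_prop, fun k hk => ?_,
    fun k => ?_, fun k => ?_, fun k hk t => ?_, fun q => ?_⟩
  · obtain ⟨c, hc, hc'⟩ := exists_mem_gridCell hN k
    exact ((heG c k hc).2.2.2 (hc' hk)).1
  · obtain ⟨c, hc⟩ := hcell k
    exact (heG c k hc).1
  · obtain ⟨c, hc⟩ := hcell k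
    exact (heG c k hc).2.1
  · obtain ⟨c, hc, hc'⟩ := exists_mem_gridCell hN k
    exact ((heG c k hc).2.2.2 (hc' hk)).2 t
  · obtain ⟨c, hc⟩ := hcell q.1
    exact hOsub c ((heG c q.1 hc).2.2.1 q.2)

/-- A map which restricts to a weak equivalence over the image of an embedding. -/
lemma HasCubeLifting.on_range {Z Z' : Type*} [TopologicalSpace Z] [TopologicalSpace Z']
    {f : X → Y} {g : Z → Z'} (hg : HasCubeLifting g) {j : Z → X} {j' : Z' → Y}
    (hj : IsEmbedding j) (hj' : IsEmbedding j') (hfj : ∀ z, f (j z) = j' (g z))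
    (hr : ∀ x, f x ∈ Set.range j' → x ∈ Set.range j) : HasCubeLiftingOn f (Set.range j') := by
  classical
  refine ⟨?_, fun K _ A hK a b ha hb hbO hab => ?_⟩
  · rintro ⟨-, z, rfl⟩
    exact (hg.1 ⟨z, Set.mem_univ _⟩).map j
  choose b' hb' using hbO
  have hb'c : Continuous b' := by
    rw [hj'.continuous_iff]
    exact hb.congr fun k => (hb' k).symm
  have : Nonempty K := hK.nonempty
  have : Nonempty Z := hg.1 ⟨b' (Classical.arbitrary K), Set.mem_univ _⟩
  have haj : ∀ k, ∃ z, k ∈ A → j z = a k := fun k => by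
    by_cases hk : k ∈ A
    · obtain ⟨z, hz⟩ := hr (a k) (by rw [hab k hk, ← hb' k]; exact ⟨_, rfl⟩)
      exact ⟨z, fun _ => hz⟩
    · exact ⟨Classical.arbitrary Z, fun h => absurd h hk⟩
  choose a' ha' using haj
  obtain ⟨x, H, hx, hH, hxA, hH0, hH1, hHA, -⟩ := hg.lifts hK (a := a') (b := b')
    (hj.isInducing.continuousOn_iff.2 (ha.congr ha')) hb'c
    (fun k hk => hj'.injective (by rw [← hfj, ha' k hk, hab k hk, hb']))
  exact ⟨fun k => j (x k), fun q => j' (H q), hj.continuous.comp hx, hj'.continuous.comp hH,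
    fun k hk => by simp only [hxA k hk, ha' k hk], fun k => by simp only [hH0, hfj],
    fun k => by simp only [hH1, hb'], fun k hk t => by simp only [hHA k hk, hb'], fun q => ⟨_, rfl⟩⟩

end OpenCover

section Shrinkable

variable {A C A' C' B : Type*} [TopologicalSpace A] [TopologicalSpace C] [TopologicalSpace A']
  [TopologicalSpace C'] [TopologicalSpace B]

/-- A map is *shrinkable* if it has a section which is a fibrewise deformation retract. -/
def IsShrinkable (q : C(A, C)) : Prop :=
  ∃ (s : C(C, A)) (l : C(A × I, A)), (∀ c, q (s c) = c) ∧ (∀ a, l (a, 0) = a) ∧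
    (∀ a, l (a, 1) = s (q a)) ∧ ∀ a t, q (l (a, t)) = q a

lemma IsShrinkable.hasCubeLifting {q : C(A, C)} (h : IsShrinkable q) : HasCubeLifting q := by
  obtain ⟨s, l, hs, hl0, hl1, hl⟩ := h
  exact hasCubeLifting_of_shrinkable q.continuous s.continuous hs l.continuous hl0 hl1 hl

lemma isShrinkable_id : IsShrinkable (ContinuousMap.id A) :=
  ⟨ContinuousMap.id A, ContinuousMap.fst, fun _ => rfl, fun _ => rfl, fun _ => rfl, fun _ _ => rfl⟩

lemma IsShrinkable.fiberProductMap {pA : C(A, B)} {pA' : C(A', B)} {pC : C(C, B)} {pC' : C(C', B)}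
    {q : C(A, C)} {q' : C(A', C')} (hq : IsShrinkable q) (hq' : IsShrinkable q')
    (hqp : ∀ a, pC (q a) = pA a) (hqp' : ∀ a, pC' (q' a) = pA' a) :
    IsShrinkable (fiberProductMap pA pA' pC pC' q q' hqp hqp') := by
  obtain ⟨s, l, hs, hl0, hl1, hl⟩ := hq
  obtain ⟨s', l', hs', hl0', hl1', hl'⟩ := hq'
  have h₁ (c : {z : C × C' // pC z.1 = pC' z.2}) : pA (s c.1.1) = pA' (s' c.1.2) := by
    rw [← hqp, ← hqp', hs, hs', c.2]
  have h₂ (a : {z : A × A' // pA z.1 = pA' z.2}) (t : I) :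
      pA (l (a.1.1, t)) = pA' (l' (a.1.2, t)) := by
    rw [← hqp, ← hqp', hl, hl', hqp, hqp', a.2]
  exact ⟨⟨fun c => ⟨(s c.1.1, s' c.1.2), h₁ c⟩, by fun_prop⟩,
    ⟨fun a => ⟨(l (a.1.1.1, a.2), l' (a.1.1.2, a.2)), h₂ a.1 a.2⟩,
      Continuous.subtype_mk (by fun_prop) _⟩,
    fun _ => Subtype.ext (Prod.ext (hs _) (hs' _)),
    fun _ => Subtype.ext (Prod.ext (hl0 _) (hl0' _)),
    fun _ => Subtype.ext (Prod.ext (hl1 _) (hl1' _)),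
    fun _ _ => Subtype.ext (Prod.ext (hl _ _) (hl' _ _))⟩

/-- Weak equivalences can be recognised after composing with weak equivalences. -/
lemma HasCubeLifting.of_square {q : A → C} {q' : A' → C'} {f : A → A'} {F : C → C'}
    (hq : HasCubeLifting q) (hq' : HasCubeLifting q') (hF : HasCubeLifting F) (hqc : Continuous q)
    (hqc' : Continuous q') (hf : Continuous f) (hFc : Continuous F)
    (h : ∀ a, q' (f a) = F (q a)) : HasCubeLifting f := by
  have : q' ∘ f = F ∘ q := funext h
  exact hq'.of_comp (this ▸ hF.comp hq hFc hqc) hqc' hf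

lemma isSerreFibration_id : IsSerreFibration (ContinuousMap.id B) :=
  fun _ _ v h => ⟨v, h, fun _ => rfl⟩

lemma isOpenEmbedding_fiberProductMap {pA : C(A, B)} {pA' : C(A', B)} {pC : C(C, B)}
    {pC' : C(C', B)} {q : C(A, C)} {q' : C(A', C')} (hq : IsOpenEmbedding q)
    (hq' : IsOpenEmbedding q') (hqp : ∀ a, pC (q a) = pA a) (hqp' : ∀ a, pC' (q' a) = pA' a) :
    IsOpenEmbedding (fiberProductMap pA pA' pC pC' q q' hqp hqp') := by
  refine ⟨IsEmbedding.of_comp (map_continuous _) continuous_subtype_val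
    ((hq.isEmbedding.prodMap hq'.isEmbedding).comp IsEmbedding.subtypeVal), ?_⟩
  have : Set.range (fiberProductMap pA pA' pC pC' q q' hqp hqp') =
      Subtype.val ⁻¹' (Set.range q ×ˢ Set.range q') := by
    ext ⟨⟨c, c'⟩, h⟩
    constructor
    · rintro ⟨a, ha⟩
      exact ⟨⟨a.1.1, congrArg (fun z => z.1.1) ha⟩, ⟨a.1.2, congrArg (fun z => z.1.2) ha⟩⟩
    · rintro ⟨⟨a, rfl⟩, ⟨a', rfl⟩⟩
      exact ⟨⟨(a, a'), by simpa [hqp, hqp'] using h⟩, rfl⟩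
  rw [this]
  exact (hq.isOpen_range.prod hq'.isOpen_range).preimage continuous_subtype_val

end Shrinkable

section SmashHomotopy

variable {B X Y X' Y' : Type*} [TopologicalSpace B] [TopologicalSpace X]
  [TopologicalSpace Y] [TopologicalSpace X'] [TopologicalSpace Y']

/-- Fibrewise pointed homotopies induce homotopies of internal smash products. -/
lemma exists_iSmash_homotopy (iX : C(B, X)) (pX : C(X, B)) (iY : C(B, Y)) (pY : C(Y, B))
    (iX' : C(B, X')) (pX' : C(X', B)) (iY' : C(B, Y')) (pY' : C(Y', B))
    (F : C(X × I, X')) (G : C(Y × I, Y'))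
    (hFi : ∀ b t, F (iX b, t) = iX' b) (hFp : ∀ x t, pX' (F (x, t)) = pX x)
    (hGi : ∀ b t, G (iY b, t) = iY' b) (hGp : ∀ y t, pY' (G (y, t)) = pY y) :
    ∃ K : C(ISmash iX pX iY pY × I, ISmash iX' pX' iY' pY'),
      ∀ z t, K (Quot.mk _ z, t) = Quot.mk _ ⟨(F (z.1.1, t), G (z.1.2, t)), by
        rw [hFp, hGp]; exact z.2⟩ := by
  refine ⟨⟨fun q => iSmashMap iX pX iY pY iX' pX' iY' pY' ⟨fun x => F (x, q.2), by fun_prop⟩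
    ⟨fun y => G (y, q.2), by fun_prop⟩ (fun b => hFi b q.2) (fun x => hFp x q.2)
    (fun b => hGi b q.2) (fun y => hGp y q.2) q.1, ?_⟩, fun z t => rfl⟩
  refine isQuotientMap_quot_mk.continuous_lift_prod_left ?_
  exact continuous_quot_mk.comp (Continuous.subtype_mk
    (f := fun p : {z : X × Y // pX z.1 = pY z.2} × I => (F (p.1.1.1, p.2), G (p.1.1.2, p.2)))
    (by fun_prop) _)

end SmashHomotopy

section Whisker

variable {B X Y X' Y' : Type*} [TopologicalSpace B] [TopologicalSpace X]
  [TopologicalSpace Y] [TopologicalSpace X'] [TopologicalSpace Y']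

/-- The retractive space obtained by growing a whisker along the section: the subspace
`(X × {0}) ∪ (i(B) × [0,1])` of `X × [0,1]`. -/
abbrev Whisker (i : C(B, X)) : Type _ := {z : X × I // z.2 = 0 ∨ z.1 ∈ Set.range i}

/-- The section of the whiskered space, at the far end of the whiskers. -/
def whiskerSection (i : C(B, X)) : C(B, Whisker i) :=
  ⟨fun b => ⟨(i b, 1), Or.inr ⟨b, rfl⟩⟩, by fun_prop⟩

/-- The projection of the whiskered space to the base. -/
def whiskerProj (i : C(B, X)) (p : C(X, B)) : C(Whisker i, B) :=
  ⟨fun z => p z.1.1, by fun_prop⟩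

/-- The map collapsing the whiskers. -/
def whiskerForget (i : C(B, X)) : C(Whisker i, X) := ⟨fun z => z.1.1, by fun_prop⟩

/-- The map of whiskered spaces induced by a map of retractive spaces. -/
def whiskerMap (i : C(B, X)) (i' : C(B, X')) (φ : C(X, X')) (h : ∀ b, φ (i b) = i' b) :
    C(Whisker i, Whisker i') :=
  ⟨fun z => ⟨(φ z.1.1, z.1.2), z.2.imp id fun ⟨b, hb⟩ => ⟨b, by rw [← h, hb]⟩⟩, by fun_prop⟩

lemma Whisker.fst_eq {i : C(B, X)} {p : C(X, B)} (hr : ∀ b, p (i b) = b) (z : Whisker i)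
    (hz : z.1.2 ≠ 0) : z.1.1 = i (p z.1.1) := by
  obtain ⟨b, hb⟩ := z.2.resolve_left hz
  rw [← hb, hr]

lemma Whisker.eq_section {i : C(B, X)} {p : C(X, B)} (hr : ∀ b, p (i b) = b) (z : Whisker i)
    (hz : z.1.2 = 1) : z = whiskerSection i (whiskerProj i p z) :=
  Subtype.ext (Prod.ext (z.fst_eq hr (by rw [hz]; exact one_ne_zero)) hz)

/-- For f-cofibrant retractive spaces, collapsing the whiskers is a fibrewise pointed homotopy
equivalence. -/
lemma IsFCofibration.exists_whiskerForget_inverse {i : C(B, X)} {p : C(X, B)}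
    (h : IsFCofibration i p) :
    ∃ (g : C(X, Whisker i)) (k : C(X × I, X)) (l : C(Whisker i × I, Whisker i)),
      (∀ b, g (i b) = whiskerSection i b) ∧ (∀ x, whiskerProj i p (g x) = p x) ∧
      (∀ b t, k (i b, t) = i b) ∧ (∀ x t, p (k (x, t)) = p x) ∧
      (∀ b t, l (whiskerSection i b, t) = whiskerSection i b) ∧
      (∀ z t, whiskerProj i p (l (z, t)) = whiskerProj i p z) ∧
      (∀ x, k (x, 0) = x) ∧ (∀ x, k (x, 1) = whiskerForget i (g x)) ∧
      (∀ z, l (z, 0) = z) ∧ (∀ z, l (z, 1) = g (whiskerForget i z)) ∧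
      ∀ z t, whiskerForget i (l (z, t)) = k (whiskerForget i z, t) := by
  obtain ⟨-, r, hr, hfix, hp⟩ := h
  refine ⟨⟨fun x => ⟨r (x, 1), hr _⟩, by fun_prop⟩, ⟨fun q => (r q).1, by fun_prop⟩,
    ⟨fun q => ⟨r (q.1.1.1, max q.1.1.2 q.2), hr _⟩, by fun_prop⟩, fun b => ?_, fun x => hp _,
    fun b t => ?_, fun x t => hp _, fun b t => ?_, fun z t => hp _, fun x => ?_, fun x => rfl,
    fun z => ?_, fun z => ?_, fun z t => ?_⟩
  · exact Subtype.ext (hfix _ (Or.inr ⟨b, rfl⟩))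
  · exact congrArg Prod.fst (hfix (i b, t) (Or.inr ⟨b, rfl⟩))
  · refine Subtype.ext ((hfix _ (Or.inr ⟨b, rfl⟩)).trans ?_)
    simp [whiskerSection, le_one']
  · exact congrArg Prod.fst (hfix (x, 0) (Or.inl rfl))
  · refine Subtype.ext ?_
    have : max z.1.2 0 = z.1.2 := max_eq_left nonneg'
    simp only [ContinuousMap.coe_mk, this]
    exact hfix _ z.2
  · refine Subtype.ext ?_
    have : max z.1.2 1 = 1 := max_eq_right le_one'
    simp only [ContinuousMap.coe_mk, this]
    rfl
  · obtain ⟨⟨x, s⟩, hs | hx⟩ := z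
    · obtain rfl : s = 0 := hs
      simp [whiskerForget]
    · have h₁ := hfix (x, max s t) (Or.inr hx)
      have h₂ := hfix (x, t) (Or.inr hx)
      simp [whiskerForget, h₁, h₂]

/-- The internal smash product of whiskered spaces. -/
abbrev WhiskerSmash (iX : C(B, X)) (pX : C(X, B)) (iY : C(B, Y)) (pY : C(Y, B)) : Type _ :=
  ISmash (whiskerSection iX) (whiskerProj iX pX) (whiskerSection iY) (whiskerProj iY pY)

/-- The map of internal smash products of whiskered spaces induced by maps of retractive
spaces. -/
def whiskerSmashMap (iX : C(B, X)) (pX : C(X, B)) (iY : C(B, Y)) (pY : C(Y, B))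
    (iX' : C(B, X')) (pX' : C(X', B)) (iY' : C(B, Y')) (pY' : C(Y', B))
    (φ : C(X, X')) (ψ : C(Y, Y'))
    (hφi : ∀ b, φ (iX b) = iX' b) (hφp : ∀ x, pX' (φ x) = pX x)
    (hψi : ∀ b, ψ (iY b) = iY' b) (hψp : ∀ y, pY' (ψ y) = pY y) :
    C(WhiskerSmash iX pX iY pY, WhiskerSmash iX' pX' iY' pY') :=
  iSmashMap _ _ _ _ _ _ _ _ (whiskerMap iX iX' φ hφi) (whiskerMap iY iY' ψ hψi)
    (fun b => Subtype.ext (Prod.ext (hφi b) rfl)) (fun z => hφp z.1.1)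
    (fun b => Subtype.ext (Prod.ext (hψi b) rfl)) (fun z => hψp z.1.1)

/-- Collapsing the whiskers in both factors of an internal smash product. -/
def iSmashForget (iX : C(B, X)) (pX : C(X, B)) (iY : C(B, Y)) (pY : C(Y, B)) :
    C(WhiskerSmash iX pX iY pY, ISmash iX pX iY pY) :=
  iSmashMap _ _ _ _ iX pX iY pY (whiskerForget iX) (whiskerForget iY) (fun _ => rfl)
    (fun _ => rfl) (fun _ => rfl) (fun _ => rfl)

lemma exists_iSmashForget_inverse {iX : C(B, X)} {pX : C(X, B)} {iY : C(B, Y)} {pY : C(Y, B)}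
    (hX : IsFCofibration iX pX) (hY : IsFCofibration iY pY) :
    ∃ (g : C(ISmash iX pX iY pY, WhiskerSmash iX pX iY pY))
      (k : C(ISmash iX pX iY pY × I, ISmash iX pX iY pY))
      (l : C(WhiskerSmash iX pX iY pY × I, WhiskerSmash iX pX iY pY)),
      (∀ q, k (q, 0) = q) ∧ (∀ q, k (q, 1) = iSmashForget iX pX iY pY (g q)) ∧
      (∀ q, l (q, 0) = q) ∧ (∀ q, l (q, 1) = g (iSmashForget iX pX iY pY q)) ∧
      ∀ q t, iSmashForget iX pX iY pY (l (q, t)) = k (iSmashForget iX pX iY pY q, t) := by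
  obtain ⟨g, k, l, hgi, hgp, hki, hkp, hli, hlp, hk0, hk1, hl0, hl1, h⟩ :=
    hX.exists_whiskerForget_inverse
  obtain ⟨g', k', l', hgi', hgp', hki', hkp', hli', hlp', hk0', hk1', hl0', hl1', h'⟩ :=
    hY.exists_whiskerForget_inverse
  obtain ⟨K, hK⟩ := exists_iSmash_homotopy iX pX iY pY iX pX iY pY k k' hki hkp hki' hkp'
  obtain ⟨L, hL⟩ := exists_iSmash_homotopy _ _ _ _ _ _ _ _ l l' hli hlp hli' hlp'
  refine ⟨iSmashMap _ _ _ _ _ _ _ _ g g' hgi hgp hgi' hgp', K, L, ?_, ?_, ?_, ?_, ?_⟩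
  · rintro ⟨z⟩
    exact (hK z 0).trans (congrArg (Quot.mk _) (Subtype.ext (Prod.ext (hk0 _) (hk0' _))))
  · rintro ⟨z⟩
    exact (hK z 1).trans (congrArg (Quot.mk _) (Subtype.ext (Prod.ext (hk1 _) (hk1' _))))
  · rintro ⟨z⟩
    exact (hL z 0).trans (congrArg (Quot.mk _) (Subtype.ext (Prod.ext (hl0 _) (hl0' _))))
  · rintro ⟨z⟩
    exact (hL z 1).trans (congrArg (Quot.mk _) (Subtype.ext (Prod.ext (hl1 _) (hl1' _))))
  · rintro ⟨z⟩ t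
    refine ((congrArg (iSmashForget iX pX iY pY) (hL z t)).trans ?_).trans (hK _ t).symm
    exact congrArg (Quot.mk _) (Subtype.ext (Prod.ext (h _ _) (h' _ _)))

/-- It suffices to prove that the map of smash products of whiskered spaces is a weak
equivalence. -/
lemma hasCubeLifting_iSmashMap_of_whisker {iX : C(B, X)} {pX : C(X, B)} {iY : C(B, Y)}
    {pY : C(Y, B)} {iX' : C(B, X')} {pX' : C(X', B)} {iY' : C(B, Y')} {pY' : C(Y', B)}
    (hXf : IsFCofibration iX pX) (hYf : IsFCofibration iY pY)
    (hX'f : IsFCofibration iX' pX') (hY'f : IsFCofibration iY' pY')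
    (φ : C(X, X')) (ψ : C(Y, Y'))
    (hφi : ∀ b, φ (iX b) = iX' b) (hφp : ∀ x, pX' (φ x) = pX x)
    (hψi : ∀ b, ψ (iY b) = iY' b) (hψp : ∀ y, pY' (ψ y) = pY y)
    (h : HasCubeLifting (whiskerSmashMap iX pX iY pY iX' pX' iY' pY' φ ψ hφi hφp hψi hψp)) :
    HasCubeLifting (iSmashMap iX pX iY pY iX' pX' iY' pY' φ ψ hφi hφp hψi hψp) := by
  obtain ⟨g, k, -, hk0, hk1, -⟩ := exists_iSmashForget_inverse hXf hYf
  obtain ⟨g', k', l', hk0', hk1', hl0', hl1', h'⟩ := exists_iSmashForget_inverse hX'f hY'f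
  have he' : HasCubeLifting (iSmashForget iX' pX' iY' pY') :=
    hasCubeLifting_of_homotopyInverse (map_continuous _) g'.continuous k'.continuous
      l'.continuous hk0' hk1' hl0' hl1' h'
  have hcomp := he'.comp h (map_continuous _) (map_continuous _)
  refine HasCubeLifting.of_comp_right (e := iSmashForget iX pX iY pY) ?_ (map_continuous _)
    g.continuous (map_continuous _) k.continuous hk0 hk1
  convert hcomp using 1
  ext ⟨z⟩
  rfl

end Whisker

section WhiskerSmash

variable {B X Y X' Y' : Type*} [TopologicalSpace B] [TopologicalSpace X]
  [TopologicalSpace Y] [TopologicalSpace X'] [TopologicalSpace Y']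

/-- The larger of the two whisker coordinates; it is `1` precisely on the image of the base. -/
def whiskerLevel (iX : C(B, X)) (pX : C(X, B)) (iY : C(B, Y)) (pY : C(Y, B)) :
    C(WhiskerSmash iX pX iY pY, I) :=
  ⟨Quot.lift (fun z => max z.1.1.1.2 z.1.2.1.2) (by
      rintro ⟨z, hz⟩ ⟨w, hw⟩ (⟨x, rfl, rfl⟩ | ⟨y, rfl, rfl⟩) <;> simp [whiskerSection, le_one']),
    continuous_quot_lift _ (by fun_prop)⟩

lemma whiskerLevel_mk {iX : C(B, X)} {pX : C(X, B)} {iY : C(B, Y)} {pY : C(Y, B)}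
    (z : {z : Whisker iX × Whisker iY // whiskerProj iX pX z.1 = whiskerProj iY pY z.2}) :
    whiskerLevel iX pX iY pY (Quot.mk _ z) = max z.1.1.1.2 z.1.2.1.2 := rfl

/-- The class of a point below the end of the whiskers is a singleton. -/
lemma eq_of_mk_eq_of_whiskerLevel_lt {iX : C(B, X)} {pX : C(X, B)} {iY : C(B, Y)} {pY : C(Y, B)}
    {z w : {z : Whisker iX × Whisker iY // whiskerProj iX pX z.1 = whiskerProj iY pY z.2}}
    (hz : max z.1.1.1.2 z.1.2.1.2 < 1)
    (h : (Quot.mk _ z : WhiskerSmash iX pX iY pY) = Quot.mk _ w) : z = w := by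
  have hrel : ∀ u v, ISmashRel (whiskerSection iX) (whiskerProj iX pX) (whiskerSection iY)
      (whiskerProj iY pY) u v → (z = u) = (z = v) := fun u v huv => by
    have hu : z ≠ u := by
      rintro rfl
      obtain ⟨x, hx, -⟩ | ⟨y, hy, -⟩ := huv
      · simp [hx, whiskerSection] at hz
      · simp [hy, whiskerSection] at hz
    have hv : z ≠ v := by
      rintro rfl
      obtain ⟨x, -, hx⟩ | ⟨y, -, hy⟩ := huv
      · simp [hx, whiskerSection] at hz
      · simp [hy, whiskerSection] at hz
    simp [hu, hv]
  exact (congrArg (Quot.lift (fun u => z = u) hrel) h).mp rfl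

lemma isOpenEmbedding_mk_comp {iX : C(B, X)} {pX : C(X, B)} {iY : C(B, Y)} {pY : C(Y, B)}
    {Z : Type*} [TopologicalSpace Z]
    {j : Z → {z : Whisker iX × Whisker iY // whiskerProj iX pX z.1 = whiskerProj iY pY z.2}}
    (hj : IsOpenEmbedding j) (h : ∀ z, max (j z).1.1.1.2 (j z).1.2.1.2 < 1) :
    IsOpenEmbedding fun z => (Quot.mk _ (j z) : WhiskerSmash iX pX iY pY) := by
  refine .of_continuous_injective_isOpenMap (continuous_quot_mk.comp hj.continuous)
    (fun z w hzw => hj.injective (eq_of_mk_eq_of_whiskerLevel_lt (h z) hzw)) fun W hW => ?_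
  rw [← isQuotientMap_quot_mk.isOpen_preimage]
  convert hj.isOpenMap W hW using 1
  ext w
  constructor
  · rintro ⟨z, hz, hzw⟩
    exact ⟨z, hz, eq_of_mk_eq_of_whiskerLevel_lt (h z) hzw⟩
  · rintro ⟨z, hz, rfl⟩
    exact ⟨z, hz, rfl⟩

lemma mk_eq_of_whiskerLevel_eq_one {iX : C(B, X)} {pX : C(X, B)} {iY : C(B, Y)} {pY : C(Y, B)}
    (hXr : ∀ b, pX (iX b) = b) (hYr : ∀ b, pY (iY b) = b)
    {z : {z : Whisker iX × Whisker iY // whiskerProj iX pX z.1 = whiskerProj iY pY z.2}}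
    (hz : max z.1.1.1.2 z.1.2.1.2 = 1) :
    (Quot.mk _ z : WhiskerSmash iX pX iY pY) =
      Quot.mk _ ⟨(whiskerSection iX (whiskerProj iX pX z.1.1),
        whiskerSection iY (whiskerProj iX pX z.1.1)), (hXr _).trans (hYr _).symm⟩ := by
  refine Quot.sound ?_
  have h : z.1.1.1.2 = 1 ∨ z.1.2.1.2 = 1 := by
    rcases max_choice z.1.1.1.2 z.1.2.1.2 with h | h
    exacts [Or.inl (h.symm.trans hz), Or.inr (h.symm.trans hz)]
  rcases h with h | h
  · refine Or.inr ⟨z.1.2, Prod.ext ?_ rfl, ?_⟩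
    · rw [← z.2]
      exact z.1.1.eq_section hXr h
    · rw [← z.2]
  · refine Or.inl ⟨z.1.1, Prod.ext rfl ?_, rfl⟩
    rw [z.2]
    exact z.1.2.eq_section hYr h

/-- The projection of the smash product of whiskered spaces to the base. -/
def whiskerSmashProj (iX : C(B, X)) (pX : C(X, B)) (iY : C(B, Y)) (pY : C(Y, B))
    (hXr : ∀ b, pX (iX b) = b) :
    C(WhiskerSmash iX pX iY pY, B) :=
  ⟨Quot.lift (fun z => whiskerProj iX pX z.1.1) (by
      rintro ⟨z, hz⟩ ⟨w, hw⟩ (⟨x, rfl, rfl⟩ | ⟨y, rfl, rfl⟩) <;>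
        simp [whiskerSection, whiskerProj, hXr]),
    continuous_quot_lift _ (by fun_prop)⟩

/-- Stretching the interval by the factor `1 + t`, truncated at `1`. -/
noncomputable def stretch : C(I × I, I) :=
  ⟨fun q => Set.projIcc 0 1 zero_le_one ((1 + q.2 : ℝ) * q.1), by fun_prop⟩

lemma coe_stretch (s t : I) : (stretch (s, t) : ℝ) = min 1 ((1 + (t : ℝ)) * s) := by
  have : (0 : ℝ) ≤ (1 + (t : ℝ)) * s := mul_nonneg (by linarith [t.2.1]) s.2.1
  simp [stretch, Set.coe_projIcc, this]

lemma stretch_zero_left (t : I) : stretch (0, t) = 0 := by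
  ext; simp [coe_stretch]

lemma stretch_one_left (t : I) : stretch (1, t) = 1 := by
  ext; simp [coe_stretch, t.2.1]

lemma stretch_zero_right (s : I) : stretch (s, 0) = s := by
  ext; simp [coe_stretch, s.2.2]

lemma le_stretch (s t : I) : s ≤ stretch (s, t) := by
  rw [← Subtype.coe_le_coe, coe_stretch]
  exact le_min s.2.2 (by nlinarith [s.2.1, t.2.1])

lemma stretch_one_right {s : I} (hs : 1 / 2 < (s : ℝ)) : stretch (s, 1) = 1 := by
  ext
  rw [coe_stretch]
  exact min_eq_left (by simp; linarith)

/-- Stretching the whiskers. -/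
noncomputable def whiskerStretch (i : C(B, X)) : C(Whisker i × I, Whisker i) :=
  ⟨fun q => ⟨(q.1.1.1, stretch (q.1.1.2, q.2)), q.1.2.imp (fun h => by
    simp only [h, stretch_zero_left]) id⟩, by fun_prop⟩

/-- The part of the smash product near the image of the base deforms to the base. -/
lemma isShrinkable_whiskerSmashProj (iX : C(B, X)) (pX : C(X, B)) (iY : C(B, Y)) (pY : C(Y, B))
    (hXr : ∀ b, pX (iX b) = b) (hYr : ∀ b, pY (iY b) = b) :
    IsShrinkable ((whiskerSmashProj iX pX iY pY hXr).restrict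
      {q | 1 / 2 < (whiskerLevel iX pX iY pY q : ℝ)}) := by
  have hsec : ∀ (i : C(B, X)) b t, whiskerStretch i (whiskerSection i b, t) = whiskerSection i b :=
    fun i b t => Subtype.ext (Prod.ext rfl (stretch_one_left t))
  have hsec' : ∀ (i : C(B, Y)) b t, whiskerStretch i (whiskerSection i b, t) = whiskerSection i b :=
    fun i b t => Subtype.ext (Prod.ext rfl (stretch_one_left t))
  obtain ⟨K, hK⟩ := exists_iSmash_homotopy (whiskerSection iX) (whiskerProj iX pX)
    (whiskerSection iY) (whiskerProj iY pY) _ (whiskerProj iX pX) _ (whiskerProj iY pY)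
    (whiskerStretch iX) (whiskerStretch iY) (hsec iX) (fun _ _ => rfl) (hsec' iY) (fun _ _ => rfl)
  have hlevel : ∀ q t, whiskerLevel iX pX iY pY q ≤ whiskerLevel iX pX iY pY (K (q, t)) := by
    rintro ⟨z⟩ t
    rw [hK, whiskerLevel_mk]
    exact max_le_max (le_stretch _ _) (le_stretch _ _)
  have hmem : ∀ (q : {q | 1 / 2 < (whiskerLevel iX pX iY pY q : ℝ)}) (t : I),
      1 / 2 < (whiskerLevel iX pX iY pY (K (q.1, t)) : ℝ) :=
    fun q t => lt_of_lt_of_le q.2 (Subtype.coe_le_coe.2 (hlevel q.1 t))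
  refine ⟨⟨fun b => ⟨Quot.mk _ ⟨(whiskerSection iX b, whiskerSection iY b),
      (hXr _).trans (hYr _).symm⟩, ?_⟩, ?_⟩,
    ⟨fun q => ⟨K (q.1.1, q.2), hmem q.1 q.2⟩,
      Continuous.subtype_mk (by fun_prop) _⟩, hXr, ?_, ?_, ?_⟩
  · change (1 / 2 : ℝ) < (max (1 : I) 1 : I)
    rw [max_self]
    norm_num
  · exact Continuous.subtype_mk (continuous_quot_mk.comp (by fun_prop)) _
  · rintro ⟨⟨z⟩, hz⟩
    refine Subtype.ext ((hK z 0).trans (congrArg (Quot.mk _) (Subtype.ext (Prod.ext ?_ ?_))))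
    all_goals exact Subtype.ext (Prod.ext rfl (stretch_zero_right _))
  · rintro ⟨⟨z⟩, hz⟩
    refine Subtype.ext ((hK z 1).trans (mk_eq_of_whiskerLevel_eq_one hXr hYr ?_))
    have h : 1 / 2 < (z.1.1.1.2 : ℝ) ∨ 1 / 2 < (z.1.2.1.2 : ℝ) := by
      rcases max_choice z.1.1.1.2 z.1.2.1.2 with h | h
      · exact Or.inl (by simpa [whiskerLevel, h] using hz)
      · exact Or.inr (by simpa [whiskerLevel, h] using hz)
    rcases h with h | h
    · simp [whiskerStretch, stretch_one_right h, le_one']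
    · simp [whiskerStretch, stretch_one_right h, le_one']
  · rintro ⟨⟨z⟩, hz⟩ t
    exact congrArg (whiskerSmashProj iX pX iY pY hXr) (hK z t)

end WhiskerSmash

section WhiskerPart

/-- Weak equivalences of fibre products can be checked after shrinking each factor. -/
lemma hasCubeLifting_fiberProductMap_of_isShrinkable {A A' C C' D D' E E' B : Type*}
    [TopologicalSpace A] [TopologicalSpace A'] [TopologicalSpace C] [TopologicalSpace C']
    [TopologicalSpace D] [TopologicalSpace D'] [TopologicalSpace E] [TopologicalSpace E']
    [TopologicalSpace B] {pA : C(A, B)} {pA' : C(A', B)} {pC : C(C, B)} {pC' : C(C', B)}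
    {pD : C(D, B)} {pD' : C(D', B)} {pE : C(E, B)} {pE' : C(E', B)}
    {q : C(A, C)} {q' : C(A', C')} {f : C(A, A')} {F : C(C, C')}
    {r : C(D, E)} {r' : C(D', E')} {g : C(D, D')} {G : C(E, E')}
    (hq : IsShrinkable q) (hq' : IsShrinkable q') (hr : IsShrinkable r) (hr' : IsShrinkable r')
    (hqp : ∀ a, pC (q a) = pA a) (hqp' : ∀ a, pC' (q' a) = pA' a)
    (hrp : ∀ d, pE (r d) = pD d) (hrp' : ∀ d, pE' (r' d) = pD' d)
    (hf : ∀ a, pA' (f a) = pA a) (hFp : ∀ c, pC' (F c) = pC c)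
    (hg : ∀ d, pD' (g d) = pD d) (hGp : ∀ e, pE' (G e) = pE e)
    (hFq : ∀ a, q' (f a) = F (q a)) (hGr : ∀ d, r' (g d) = G (r d))
    (hpC : IsSerreFibration pC) (hpC' : IsSerreFibration pC')
    (hF : HasCubeLifting F) (hG : HasCubeLifting G) :
    HasCubeLifting (fiberProductMap pA pD pA' pD' f g hf hg) :=
  (hq.fiberProductMap hr hqp hrp).hasCubeLifting.of_square
    (hq'.fiberProductMap hr' hqp' hrp').hasCubeLifting
    (hasCubeLifting_fiberProductMap hFp hGp hpC hpC' hF hG)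
    (map_continuous _) (map_continuous _) (map_continuous _) (map_continuous _)
    fun z => Subtype.ext (Prod.ext (hFq z.1.1) (hGr z.1.2))

variable {B X Y X' Y' : Type*} [TopologicalSpace B] [TopologicalSpace X]
  [TopologicalSpace Y] [TopologicalSpace X'] [TopologicalSpace Y']

/-- The part of a whiskered space where the whisker coordinate lies in `J`. -/
abbrev WhiskerPart (i : C(B, X)) (J : Set I) : Type _ := {z : Whisker i // z.1.2 ∈ J}

/-- The projection of a part of a whiskered space to the base. -/
def whiskerPartProj (i : C(B, X)) (p : C(X, B)) (J : Set I) : C(WhiskerPart i J, B) :=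
  ⟨fun z => p z.1.1.1, by fun_prop⟩

/-- The restriction of a map of whiskered spaces. -/
def whiskerPartMap (i : C(B, X)) (i' : C(B, X')) (φ : C(X, X')) (h : ∀ b, φ (i b) = i' b)
    (J : Set I) : C(WhiskerPart i J, WhiskerPart i' J) :=
  ⟨fun z => ⟨whiskerMap i i' φ h z.1, z.2⟩, by fun_prop⟩

/-- The map collapsing the whiskers on a part of a whiskered space. -/
def whiskerPartForget (i : C(B, X)) (J : Set I) : C(WhiskerPart i J, X) :=
  ⟨fun z => z.1.1.1, by fun_prop⟩

/-- The points in the open middle of the whiskers. -/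
def midWhisker : Set I := {s | 1 / 2 < (s : ℝ) ∧ s < 1}

lemma isOpen_midWhisker : IsOpen midWhisker :=
  (isOpen_lt continuous_const continuous_subtype_val).inter (isOpen_Iio (a := (1 : I)))

lemma isShrinkable_whiskerPartForget (i : C(B, X)) :
    IsShrinkable (whiskerPartForget i (Set.Iio 1)) := by
  have hzero : (0 : I) ∈ Set.Iio (1 : I) := Set.mem_Iio.2 zero_lt_one
  have hmem : ∀ (z : WhiskerPart i (Set.Iio 1)) (t : I), z.1.1.2 * σ t < 1 := fun z t =>
    lt_of_le_of_lt (mul_le_left) z.2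
  refine ⟨⟨fun x => ⟨⟨(x, 0), Or.inl rfl⟩, hzero⟩, by fun_prop⟩,
    ⟨fun q => ⟨⟨(q.1.1.1.1, q.1.1.1.2 * σ q.2), q.1.1.2.imp (fun h => ?_) id⟩, hmem q.1 q.2⟩, ?_⟩,
    fun _ => rfl, fun z => ?_, fun z => ?_, fun _ _ => rfl⟩
  · exact (congrArg (· * σ q.2) h).trans (zero_mul _)
  · exact Continuous.subtype_mk (Continuous.subtype_mk (by fun_prop) _) _
  · exact Subtype.ext (Subtype.ext (Prod.ext rfl (by simp)))
  · exact Subtype.ext (Subtype.ext (Prod.ext rfl (by simp)))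

/-- The linear homotopy from the identity of the interval to the constant map `3 / 4`. -/
noncomputable def contractMid : C(I × I, I) :=
  ⟨fun q => ⟨(1 - q.2) * q.1 + q.2 * (3 / 4), by
    have h₁ := q.1.2
    have h₂ := q.2.2
    constructor <;> nlinarith [h₁.1, h₁.2, h₂.1, h₂.2]⟩, by fun_prop⟩

lemma contractMid_mem {s : I} (hs : s ∈ midWhisker) (t : I) : contractMid (s, t) ∈ midWhisker := by
  obtain ⟨h₁, h₂⟩ := hs
  have h₂' : (s : ℝ) < 1 := h₂
  refine ⟨?_, Subtype.coe_lt_coe.1 ?_⟩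
  · change 1 / 2 < (1 - (t : ℝ)) * s + t * (3 / 4)
    nlinarith [t.2.1, t.2.2]
  · change (1 - (t : ℝ)) * s + t * (3 / 4) < 1
    nlinarith [t.2.1, t.2.2]

lemma ne_zero_of_mem_midWhisker {s : I} (hs : s ∈ midWhisker) : s ≠ 0 := by
  rintro rfl
  have h := hs.1
  norm_num at h

lemma isShrinkable_whiskerPartProj {i : C(B, X)} {p : C(X, B)} (hr : ∀ b, p (i b) = b) :
    IsShrinkable (whiskerPartProj i p midWhisker) := by
  have hmid : (⟨3 / 4, by norm_num, by norm_num⟩ : I) ∈ midWhisker := by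
    refine ⟨by norm_num, Subtype.coe_lt_coe.1 ?_⟩
    norm_num
  refine ⟨⟨fun b => ⟨⟨(i b, ⟨3 / 4, by norm_num, by norm_num⟩), Or.inr ⟨b, rfl⟩⟩, hmid⟩,
      by fun_prop⟩,
    ⟨fun q => ⟨⟨(q.1.1.1.1, contractMid (q.1.1.1.2, q.2)), Or.inr
      (q.1.1.2.resolve_left (ne_zero_of_mem_midWhisker q.1.2))⟩, contractMid_mem q.1.2 q.2⟩,
      Continuous.subtype_mk (Continuous.subtype_mk (by fun_prop) _) _⟩,
    hr, fun z => ?_, fun z => ?_, fun _ _ => rfl⟩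
  · exact Subtype.ext (Subtype.ext (Prod.ext rfl (Subtype.ext (by simp [contractMid]))))
  · exact Subtype.ext (Subtype.ext (Prod.ext
      (z.1.fst_eq hr (ne_zero_of_mem_midWhisker z.2)) (Subtype.ext (by simp [contractMid]))))

/-- The part of the smash product with whisker coordinates in `J` and `K`. -/
def whiskerBox (iX : C(B, X)) (pX : C(X, B)) (iY : C(B, Y)) (pY : C(Y, B)) (J K : Set I) :
    Set (WhiskerSmash iX pX iY pY) :=
  Quot.mk _ '' {z | z.1.1.1.2 ∈ J ∧ z.1.2.1.2 ∈ K}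

/-- The inclusion of a box into the smash product. -/
def whiskerBoxIncl (iX : C(B, X)) (pX : C(X, B)) (iY : C(B, Y)) (pY : C(Y, B)) (J K : Set I)
    (z : {z : WhiskerPart iX J × WhiskerPart iY K //
      whiskerPartProj iX pX J z.1 = whiskerPartProj iY pY K z.2}) : WhiskerSmash iX pX iY pY :=
  Quot.mk _ ⟨(z.1.1.1, z.1.2.1), z.2⟩

lemma range_whiskerBoxIncl {iX : C(B, X)} {pX : C(X, B)} {iY : C(B, Y)} {pY : C(Y, B)}
    {J K : Set I} : Set.range (whiskerBoxIncl iX pX iY pY J K) = whiskerBox iX pX iY pY J K := by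
  ext q
  constructor
  · rintro ⟨z, rfl⟩
    exact ⟨_, ⟨z.1.1.2, z.1.2.2⟩, rfl⟩
  · rintro ⟨z, hz, rfl⟩
    exact ⟨⟨(⟨z.1.1, hz.1⟩, ⟨z.1.2, hz.2⟩), z.2⟩, rfl⟩

lemma isOpenEmbedding_whiskerBoxIncl {iX : C(B, X)} {pX : C(X, B)} {iY : C(B, Y)} {pY : C(Y, B)}
    {J K : Set I} (hJ : IsOpen J) (hK : IsOpen K) (hJ1 : 1 ∉ J) (hK1 : 1 ∉ K) :
    IsOpenEmbedding (whiskerBoxIncl iX pX iY pY J K) := by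
  refine isOpenEmbedding_mk_comp (j := fiberProductMap (whiskerPartProj iX pX J)
    (whiskerPartProj iY pY K) (whiskerProj iX pX) (whiskerProj iY pY)
    ⟨Subtype.val, continuous_subtype_val⟩ ⟨Subtype.val, continuous_subtype_val⟩
    (fun _ => rfl) (fun _ => rfl))
    (isOpenEmbedding_fiberProductMap ?_ ?_ _ _) fun z => max_lt ?_ ?_
  · exact (hJ.preimage (f := fun z : Whisker iX => z.1.2) (by fun_prop)).isOpenEmbedding_subtypeVal
  · exact (hK.preimage (f := fun z : Whisker iY => z.1.2) (by fun_prop)).isOpenEmbedding_subtypeVal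
  · exact lt_of_le_of_ne le_one' fun h => hJ1 (h ▸ z.1.1.2)
  · exact lt_of_le_of_ne le_one' fun h => hK1 (h ▸ z.1.2.2)

lemma hasCubeLiftingOn_whiskerBox {iX : C(B, X)} {pX : C(X, B)} {iY : C(B, Y)} {pY : C(Y, B)}
    {iX' : C(B, X')} {pX' : C(X', B)} {iY' : C(B, Y')} {pY' : C(Y', B)}
    {φ : C(X, X')} {ψ : C(Y, Y')} (hφi : ∀ b, φ (iX b) = iX' b) (hφp : ∀ x, pX' (φ x) = pX x)
    (hψi : ∀ b, ψ (iY b) = iY' b) (hψp : ∀ y, pY' (ψ y) = pY y)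
    {J K : Set I} (hJ : IsOpen J) (hK : IsOpen K) (hJ1 : 1 ∉ J) (hK1 : 1 ∉ K)
    (h : HasCubeLifting (fiberProductMap (whiskerPartProj iX pX J) (whiskerPartProj iY pY K)
      (whiskerPartProj iX' pX' J) (whiskerPartProj iY' pY' K) (whiskerPartMap iX iX' φ hφi J)
      (whiskerPartMap iY iY' ψ hψi K) (fun z => hφp z.1.1.1) (fun z => hψp z.1.1.1))) :
    HasCubeLiftingOn (whiskerSmashMap iX pX iY pY iX' pX' iY' pY' φ ψ hφi hφp hψi hψp)
      (whiskerBox iX' pX' iY' pY' J K) := by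
  rw [← range_whiskerBoxIncl]
  refine h.on_range (isOpenEmbedding_whiskerBoxIncl hJ hK hJ1 hK1).isEmbedding
    (isOpenEmbedding_whiskerBoxIncl hJ hK hJ1 hK1).isEmbedding (fun _ => rfl) ?_
  rintro ⟨z⟩ ⟨w, hw⟩
  have hlt : max w.1.1.1.1.2 w.1.2.1.1.2 < 1 :=
    max_lt (lt_of_le_of_ne le_one' fun h => hJ1 (h ▸ w.1.1.2))
      (lt_of_le_of_ne le_one' fun h => hK1 (h ▸ w.1.2.2))
  have hzw := eq_of_mk_eq_of_whiskerLevel_lt (iX := iX') (pX := pX') (iY := iY') (pY := pY')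
    (z := ⟨(w.1.1.1, w.1.2.1), w.2⟩) hlt hw
  rw [range_whiskerBoxIncl]
  refine ⟨z, ⟨?_, ?_⟩, rfl⟩
  · have := congrArg (fun u => u.1.1.1.2) hzw
    exact (show w.1.1.1.1.2 = z.1.1.1.2 from this) ▸ w.1.1.2
  · have := congrArg (fun u => u.1.2.1.2) hzw
    exact (show w.1.2.1.1.2 = z.1.2.1.2 from this) ▸ w.1.2.2

end WhiskerPart

section WhiskerSmashMap

variable {B X Y X' Y' : Type*} [TopologicalSpace B] [TopologicalSpace X]
  [TopologicalSpace Y] [TopologicalSpace X'] [TopologicalSpace Y']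

lemma whiskerBox_mid_union {iX : C(B, X)} {pX : C(X, B)} {iY : C(B, Y)} {pY : C(Y, B)} :
    whiskerBox iX pX iY pY midWhisker (Set.Iio 1) ∪ whiskerBox iX pX iY pY (Set.Iio 1) midWhisker =
      {q | 1 / 2 < (whiskerLevel iX pX iY pY q : ℝ)} ∩
        whiskerBox iX pX iY pY (Set.Iio 1) (Set.Iio 1) := by
  ext q
  constructor
  · rintro (⟨z, ⟨h₁, h₂⟩, rfl⟩ | ⟨z, ⟨h₁, h₂⟩, rfl⟩)
    · exact ⟨lt_of_lt_of_le h₁.1 (Subtype.coe_le_coe.2 (le_max_left _ _)), z, ⟨h₁.2, h₂⟩, rfl⟩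
    · exact ⟨lt_of_lt_of_le h₂.1 (Subtype.coe_le_coe.2 (le_max_right _ _)), z, ⟨h₁, h₂.2⟩, rfl⟩
  · rintro ⟨h, z, ⟨h₁, h₂⟩, rfl⟩
    rw [Set.mem_ofPred_eq, whiskerLevel_mk] at h
    rcases max_choice z.1.1.1.2 z.1.2.1.2 with hm | hm <;> rw [hm] at h
    exacts [Or.inl ⟨z, ⟨⟨h, h₁⟩, h₂⟩, rfl⟩, Or.inr ⟨z, ⟨h₁, ⟨h, h₂⟩⟩, rfl⟩]

lemma whiskerBox_mid_inter {iX : C(B, X)} {pX : C(X, B)} {iY : C(B, Y)} {pY : C(Y, B)} :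
    whiskerBox iX pX iY pY midWhisker (Set.Iio 1) ∩ whiskerBox iX pX iY pY (Set.Iio 1) midWhisker =
      whiskerBox iX pX iY pY midWhisker midWhisker := by
  ext q
  constructor
  · rintro ⟨⟨z, ⟨h₁, h₂⟩, rfl⟩, ⟨w, ⟨h₁', h₂'⟩, hwz⟩⟩
    obtain rfl := eq_of_mk_eq_of_whiskerLevel_lt (max_lt h₁' h₂'.2) hwz
    exact ⟨w, ⟨h₁, h₂'⟩, rfl⟩
  · rintro ⟨z, ⟨h₁, h₂⟩, rfl⟩
    exact ⟨⟨z, ⟨h₁, h₂.2⟩, rfl⟩, ⟨z, ⟨h₁.2, h₂⟩, rfl⟩⟩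

lemma whiskerLevel_union_whiskerBox {iX : C(B, X)} {pX : C(X, B)} {iY : C(B, Y)} {pY : C(Y, B)} :
    {q | 1 / 2 < (whiskerLevel iX pX iY pY q : ℝ)} ∪
      whiskerBox iX pX iY pY (Set.Iio 1) (Set.Iio 1) = Set.univ := by
  refine Set.eq_univ_of_forall ?_
  rintro ⟨z⟩
  rcases (le_one' : max z.1.1.1.2 z.1.2.1.2 ≤ 1).lt_or_eq with h | h
  · exact Or.inr ⟨z, ⟨lt_of_le_of_lt (le_max_left _ _) h, lt_of_le_of_lt (le_max_right _ _) h⟩, rfl⟩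
  · left
    change (1 / 2 : ℝ) < (max z.1.1.1.2 z.1.2.1.2 : I)
    rw [h]
    norm_num

lemma isOpen_whiskerBox {iX : C(B, X)} {pX : C(X, B)} {iY : C(B, Y)} {pY : C(Y, B)}
    {J K : Set I} (hJ : IsOpen J) (hK : IsOpen K) (hJ1 : 1 ∉ J) (hK1 : 1 ∉ K) :
    IsOpen (whiskerBox iX pX iY pY J K) := by
  rw [← range_whiskerBoxIncl]
  exact (isOpenEmbedding_whiskerBoxIncl hJ hK hJ1 hK1).isOpen_range

/-- The weak equivalence near the image of the base. -/
lemma hasCubeLiftingOn_whiskerLevel {iX : C(B, X)} {pX : C(X, B)} {iY : C(B, Y)} {pY : C(Y, B)}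
    {iX' : C(B, X')} {pX' : C(X', B)} {iY' : C(B, Y')} {pY' : C(Y', B)}
    (hXr : ∀ b, pX (iX b) = b) (hYr : ∀ b, pY (iY b) = b)
    (hX'r : ∀ b, pX' (iX' b) = b) (hY'r : ∀ b, pY' (iY' b) = b)
    {φ : C(X, X')} {ψ : C(Y, Y')} (hφi : ∀ b, φ (iX b) = iX' b) (hφp : ∀ x, pX' (φ x) = pX x)
    (hψi : ∀ b, ψ (iY b) = iY' b) (hψp : ∀ y, pY' (ψ y) = pY y) :
    HasCubeLiftingOn (whiskerSmashMap iX pX iY pY iX' pX' iY' pY' φ ψ hφi hφp hψi hψp)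
      {q | 1 / 2 < (whiskerLevel iX' pX' iY' pY' q : ℝ)} := by
  set f := whiskerSmashMap iX pX iY pY iX' pX' iY' pY' φ ψ hφi hφp hψi hψp
  have hlevel : ∀ q, whiskerLevel iX' pX' iY' pY' (f q) = whiskerLevel iX pX iY pY q := by
    rintro ⟨z⟩
    rfl
  have hproj : ∀ q, whiskerSmashProj iX' pX' iY' pY' hX'r (f q) =
      whiskerSmashProj iX pX iY pY hXr q := by
    rintro ⟨z⟩
    exact hφp _
  have hmem : ∀ q : {q | 1 / 2 < (whiskerLevel iX pX iY pY q : ℝ)},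
      1 / 2 < (whiskerLevel iX' pX' iY' pY' (f q.1) : ℝ) := fun q => by
    rw [hlevel]
    exact q.2
  have h := (isShrinkable_whiskerSmashProj iX pX iY pY hXr hYr).hasCubeLifting.of_square
    (isShrinkable_whiskerSmashProj iX' pX' iY' pY' hX'r hY'r).hasCubeLifting
    (isShrinkable_id (A := B)).hasCubeLifting (map_continuous _) (map_continuous _)
    (f := fun q => ⟨f q.1, hmem q⟩) (Continuous.subtype_mk (by fun_prop) _) (map_continuous _)
    fun q => hproj q.1
  rw [← Subtype.range_coe (s := {q | 1 / 2 < (whiskerLevel iX' pX' iY' pY' q : ℝ)})]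
  refine h.on_range IsEmbedding.subtypeVal IsEmbedding.subtypeVal (fun _ => rfl) fun q hq => ?_
  rw [Subtype.range_coe] at hq ⊢
  rwa [Set.mem_ofPred_eq, hlevel] at hq

/-- The map of smash products of whiskered spaces is a weak equivalence. -/
lemma hasCubeLifting_whiskerSmashMap {iX : C(B, X)} {pX : C(X, B)} {iY : C(B, Y)} {pY : C(Y, B)}
    {iX' : C(B, X')} {pX' : C(X', B)} {iY' : C(B, Y')} {pY' : C(Y', B)}
    (hXr : ∀ b, pX (iX b) = b) (hYr : ∀ b, pY (iY b) = b)
    (hX'r : ∀ b, pX' (iX' b) = b) (hY'r : ∀ b, pY' (iY' b) = b)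
    (hpX : IsSerreFibration pX) (hpX' : IsSerreFibration pX')
    {φ : C(X, X')} {ψ : C(Y, Y')} (hφi : ∀ b, φ (iX b) = iX' b) (hφp : ∀ x, pX' (φ x) = pX x)
    (hψi : ∀ b, ψ (iY b) = iY' b) (hψp : ∀ y, pY' (ψ y) = pY y)
    (hφ : HasCubeLifting φ) (hψ : HasCubeLifting ψ) :
    HasCubeLifting (whiskerSmashMap iX pX iY pY iX' pX' iY' pY' φ ψ hφi hφp hψi hψp) := by
  have hlow : (1 : I) ∉ Set.Iio (1 : I) := Set.self_notMem_Iio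
  have hmid : (1 : I) ∉ midWhisker := fun h => lt_irrefl _ h.2
  have hid : HasCubeLifting (ContinuousMap.id B) := isShrinkable_id.hasCubeLifting
  have hc := map_continuous (whiskerSmashMap iX pX iY pY iX' pX' iY' pY' φ ψ hφi hφp hψi hψp)
  have hV := hasCubeLiftingOn_whiskerBox hφi hφp hψi hψp isOpen_Iio isOpen_Iio hlow hlow
    (hasCubeLifting_fiberProductMap_of_isShrinkable (isShrinkable_whiskerPartForget iX)
      (isShrinkable_whiskerPartForget iX') (isShrinkable_whiskerPartForget iY)
      (isShrinkable_whiskerPartForget iY') (pC := pX) (pC' := pX') (pE := pY) (pE' := pY')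
      (fun _ => rfl) (fun _ => rfl) (fun _ => rfl) (fun _ => rfl) _ hφp _ hψp
      (fun _ => rfl) (fun _ => rfl) hpX hpX' hφ hψ)
  have hX := hasCubeLiftingOn_whiskerBox hφi hφp hψi hψp isOpen_Iio isOpen_midWhisker hlow hmid
    (hasCubeLifting_fiberProductMap_of_isShrinkable (isShrinkable_whiskerPartForget iX)
      (isShrinkable_whiskerPartForget iX') (isShrinkable_whiskerPartProj hYr)
      (isShrinkable_whiskerPartProj hY'r) (pC := pX) (pC' := pX') (pE := .id B) (pE' := .id B)
      (G := .id B) (fun _ => rfl) (fun _ => rfl) (fun _ => rfl) (fun _ => rfl) _ hφp _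
      (fun _ => rfl) (fun _ => rfl) (fun _ => hψp _) hpX hpX' hφ hid)
  have hY := hasCubeLiftingOn_whiskerBox hφi hφp hψi hψp isOpen_midWhisker isOpen_Iio hmid hlow
    (hasCubeLifting_fiberProductMap_of_isShrinkable (isShrinkable_whiskerPartProj hXr)
      (isShrinkable_whiskerPartProj hX'r) (isShrinkable_whiskerPartForget iY)
      (isShrinkable_whiskerPartForget iY') (pC := .id B) (pC' := .id B) (pE := pY) (pE' := pY')
      (F := .id B) (fun _ => rfl) (fun _ => rfl) (fun _ => rfl) (fun _ => rfl) _ (fun _ => rfl) _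
      hψp (fun _ => hφp _) (fun _ => rfl) isSerreFibration_id isSerreFibration_id hid hψ)
  have hB := hasCubeLiftingOn_whiskerBox hφi hφp hψi hψp isOpen_midWhisker isOpen_midWhisker
    hmid hmid
    (hasCubeLifting_fiberProductMap_of_isShrinkable (isShrinkable_whiskerPartProj hXr)
      (isShrinkable_whiskerPartProj hX'r) (isShrinkable_whiskerPartProj hYr)
      (isShrinkable_whiskerPartProj hY'r) (pC := .id B) (pC' := .id B) (pE := .id B)
      (pE' := .id B) (F := .id B) (G := .id B) (fun _ => rfl) (fun _ => rfl) (fun _ => rfl)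
      (fun _ => rfl) _ (fun _ => rfl) _ (fun _ => rfl) (fun _ => hφp _) (fun _ => hψp _)
      isSerreFibration_id isSerreFibration_id hid hid)
  have hUV := hY.union hc (isOpen_whiskerBox isOpen_midWhisker isOpen_Iio hmid hlow)
    (isOpen_whiskerBox isOpen_Iio isOpen_midWhisker hlow hmid) hX (by rwa [whiskerBox_mid_inter])
  rw [whiskerBox_mid_union] at hUV
  have hU := hasCubeLiftingOn_whiskerLevel hXr hYr hX'r hY'r hφi hφp hψi hψp
  have hUo : IsOpen {q | 1 / 2 < (whiskerLevel iX' pX' iY' pY' q : ℝ)} :=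
    isOpen_lt continuous_const (continuous_subtype_val.comp (map_continuous _))
  have h := hU.union hc hUo (isOpen_whiskerBox isOpen_Iio isOpen_Iio hlow hlow) hV hUV
  rwa [whiskerLevel_union_whiskerBox] at h

end WhiskerSmashMap

/-- If `φ : X → X'` and `ψ : Y → Y'` are weak equivalences of f-cofibrant retractive spaces
over `B` and the projections `p_X`, `p_X'` are Serre fibrations, then
`φ ∧_B ψ : X ∧_B Y → X' ∧_B Y'` is a weak equivalence. -/
theorem isWeakHomotopyEquiv_iSmashMap
    (iX : C(B, X)) (pX : C(X, B)) (hXr : ∀ b, pX (iX b) = b)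
    (iY : C(B, Y)) (pY : C(Y, B)) (hYr : ∀ b, pY (iY b) = b)
    (iX' : C(B, X')) (pX' : C(X', B)) (hX'r : ∀ b, pX' (iX' b) = b)
    (iY' : C(B, Y')) (pY' : C(Y', B)) (hY'r : ∀ b, pY' (iY' b) = b)
    (hXf : IsFCofibration iX pX) (hYf : IsFCofibration iY pY)
    (hX'f : IsFCofibration iX' pX') (hY'f : IsFCofibration iY' pY')
    (hpX : IsSerreFibration pX) (hpX' : IsSerreFibration pX')
    (φ : C(X, X')) (ψ : C(Y, Y'))
    (hφi : ∀ b, φ (iX b) = iX' b) (hφp : ∀ x, pX' (φ x) = pX x)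
    (hψi : ∀ b, ψ (iY b) = iY' b) (hψp : ∀ y, pY' (ψ y) = pY y)
    (hφ : IsWeakHomotopyEquiv φ) (hψ : IsWeakHomotopyEquiv ψ) :
    IsWeakHomotopyEquiv
      (iSmashMap iX pX iY pY iX' pX' iY' pY' φ ψ hφi hφp hψi hψp) := by
  exact (hasCubeLifting_iSmashMap_of_whisker hXf hYf hX'f hY'f φ ψ hφi hφp hψi hψp
    (hasCubeLifting_whiskerSmashMap hXr hYr hX'r hY'r hpX hpX' hφi hφp hψi hψp
      hφ.hasCubeLifting hψ.hasCubeLifting)).isWeakHomotopyEquiv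

end InternalSmash
end

section
/- Let C and D be categories each equipped with a class of weak equivalences containing all isomorphisms and closed under 2-out-of-3, and let (F ⊣ G) be an adjunction with F : C → D and G : D → C. Suppose F is left deformable: there are a full subcategory A_C ⊆ C on which F sends weak equivalences to weak equivalences and a left deformation retract (Q, q) of C into A_C; and suppose G is right deformable: there are a full subcategory A_D ⊆ D on which G sends weak equivalences to weak equivalences and a right deformation retract (R, r) of D into A_D. Then the total derived functors L F : ho C → ho D (induced by F ∘ Q) and R G : ho D → ho C (induced by G ∘ R) exist and form an adjunction (L F ⊣ R G), whose unit and counit are induced by deriving the composites X → G F X → G R F X and F Q G Y → F G Y → Y built from the unit and counit of (F ⊣ G) and the transformations q and r. -/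
open CategoryTheory

namespace CategoryTheory

variable {C D H : Type*} [Category C] [Category D] [Category H]

/-- A natural transformation `α : L ⋙ LF ⟶ F` exhibits `LF` as a left derived functor of `F` if
it is invertible on the values of a left deformation `(Q, q)`. -/
lemma isLeftDerivedFunctor_of_leftDeformation {L : C ⥤ D} (W : MorphismProperty C)
    [L.IsLocalization W] {F : C ⥤ H} {LF : D ⥤ H} (α : L ⋙ LF ⟶ F)
    {Q : C ⥤ C} (q : Q ⟶ 𝟭 C) (hq : ∀ X, W (q.app X)) (hα : ∀ X, IsIso (α.app (Q.obj X))) :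
    LF.IsLeftDerivedFunctor α W where
  isRightKanExtension := by
    have hLq (X : C) : IsIso (L.map (q.app X)) := Localization.inverts L W _ (hq X)
    have ext_of_whisker {K : D ⥤ H} {γ₁ γ₂ : K ⟶ LF}
        (h : Functor.whiskerLeft L γ₁ ≫ α = Functor.whiskerLeft L γ₂ ≫ α) : γ₁ = γ₂ := by
      refine Localization.natTrans_ext L W fun X ↦ ?_
      have h' : γ₁.app (L.obj (Q.obj X)) = γ₂.app (L.obj (Q.obj X)) := by
        rw [← cancel_mono (α.app (Q.obj X))]
        exact NatTrans.congr_app h (Q.obj X)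
      rw [← cancel_epi (K.map (L.map (q.app X)))]
      simpa using! h' =≫ LF.map (L.map (q.app X))
    have exists_lift (K : D ⥤ H) (β : L ⋙ K ⟶ F) :
        ∃ γ : K ⟶ LF, Functor.whiskerLeft L γ ≫ α = β := by
      have := Localization.full_whiskeringLeft L W H
      let τ : L ⋙ K ⟶ L ⋙ LF :=
        { app := fun X ↦ inv (K.map (L.map (q.app X))) ≫ β.app (Q.obj X) ≫
            inv (α.app (Q.obj X)) ≫ LF.map (L.map (q.app X))
          naturality := fun X Y f ↦ by
            have hK : K.map (L.map (q.app X)) ≫ K.map (L.map f) =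
                K.map (L.map (Q.map f)) ≫ K.map (L.map (q.app Y)) := by
              simp [← Functor.map_comp]
            have hLF : LF.map (L.map (q.app X)) ≫ LF.map (L.map f) =
                LF.map (L.map (Q.map f)) ≫ LF.map (L.map (q.app Y)) := by
              simp [← Functor.map_comp]
            have hβ := β.naturality (Q.map f)
            have hα' : inv (α.app (Q.obj X)) ≫ LF.map (L.map (Q.map f)) =
                F.map (Q.map f) ≫ inv (α.app (Q.obj Y)) := by
              simpa using! α.naturality (Q.map f)
            dsimp at hβ ⊢
            rw [← cancel_epi (K.map (L.map (q.app X))), reassoc_of% hK]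
            simp only [Category.assoc, IsIso.hom_inv_id_assoc, hLF, reassoc_of% hα',
              reassoc_of% hβ] }
      obtain ⟨γ, hγ⟩ := ((Functor.whiskeringLeft C D H).obj L).map_surjective τ
      refine ⟨γ, ?_⟩
      change ((Functor.whiskeringLeft C D H).obj L).map γ ≫ α = β
      rw [hγ]
      ext X
      have h₁ := α.naturality (q.app X)
      have h₂ := β.naturality (q.app X)
      dsimp at h₁ h₂
      simp [τ, h₁, ← h₂]
    choose lift hlift using exists_lift
    exact ⟨⟨Limits.IsTerminal.ofUniqueHom
      (fun K ↦ CostructuredArrow.homMk (lift K.left K.hom) (hlift K.left K.hom))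
      (fun K m ↦ by
        ext1
        exact ext_of_whisker ((CostructuredArrow.w m).trans (hlift K.left K.hom).symm))⟩⟩

/-- A natural transformation `α : F ⟶ L ⋙ RF` exhibits `RF` as a right derived functor of `F` if
it is invertible on the values of a right deformation `(R, r)`. -/
lemma isRightDerivedFunctor_of_rightDeformation {L : C ⥤ D} (W : MorphismProperty C)
    [L.IsLocalization W] {F : C ⥤ H} {RF : D ⥤ H} (α : F ⟶ L ⋙ RF)
    {R : C ⥤ C} (r : 𝟭 C ⟶ R) (hr : ∀ X, W (r.app X)) (hα : ∀ X, IsIso (α.app (R.obj X))) :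
    RF.IsRightDerivedFunctor α W where
  isLeftKanExtension := by
    have hLr (X : C) : IsIso (L.map (r.app X)) := Localization.inverts L W _ (hr X)
    have ext_of_whisker {K : D ⥤ H} {γ₁ γ₂ : RF ⟶ K}
        (h : α ≫ Functor.whiskerLeft L γ₁ = α ≫ Functor.whiskerLeft L γ₂) : γ₁ = γ₂ := by
      refine Localization.natTrans_ext L W fun X ↦ ?_
      have h' : γ₁.app (L.obj (R.obj X)) = γ₂.app (L.obj (R.obj X)) := by
        rw [← cancel_epi (α.app (R.obj X))]
        exact NatTrans.congr_app h (R.obj X)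
      rw [← cancel_mono (K.map (L.map (r.app X)))]
      simpa using! RF.map (L.map (r.app X)) ≫= h'
    have exists_desc (K : D ⥤ H) (β : F ⟶ L ⋙ K) :
        ∃ γ : RF ⟶ K, α ≫ Functor.whiskerLeft L γ = β := by
      have := Localization.full_whiskeringLeft L W H
      let τ : L ⋙ RF ⟶ L ⋙ K :=
        { app := fun X ↦ RF.map (L.map (r.app X)) ≫ inv (α.app (R.obj X)) ≫
            β.app (R.obj X) ≫ inv (K.map (L.map (r.app X)))
          naturality := fun X Y f ↦ by
            have hK : K.map (L.map f) ≫ K.map (L.map (r.app Y)) =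
                K.map (L.map (r.app X)) ≫ K.map (L.map (R.map f)) := by
              simp [← Functor.map_comp, ← r.naturality]
            have hRF : RF.map (L.map f) ≫ RF.map (L.map (r.app Y)) =
                RF.map (L.map (r.app X)) ≫ RF.map (L.map (R.map f)) := by
              simp [← Functor.map_comp, ← r.naturality]
            have hβ := β.naturality (R.map f)
            have hα' : RF.map (L.map (R.map f)) ≫ inv (α.app (R.obj Y)) =
                inv (α.app (R.obj X)) ≫ F.map (R.map f) := by
              rw [IsIso.comp_inv_eq, Category.assoc, IsIso.eq_inv_comp]
              exact (α.naturality (R.map f)).symm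
            dsimp at hβ ⊢
            rw [← cancel_mono (K.map (L.map (r.app Y)))]
            simp only [Category.assoc, IsIso.inv_hom_id, IsIso.inv_hom_id_assoc, Category.comp_id,
              hK, reassoc_of% hRF, reassoc_of% hα', hβ] }
      obtain ⟨γ, hγ⟩ := ((Functor.whiskeringLeft C D H).obj L).map_surjective τ
      refine ⟨γ, ?_⟩
      change α ≫ ((Functor.whiskeringLeft C D H).obj L).map γ = β
      rw [hγ]
      ext X
      have h₁ := α.naturality (r.app X)
      have h₂ := β.naturality (r.app X)
      dsimp at h₁ h₂
      simp [τ, ← reassoc_of% h₁, reassoc_of% h₂]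
    choose desc hdesc using exists_desc
    exact ⟨⟨Limits.IsInitial.ofUniqueHom
      (fun K ↦ StructuredArrow.homMk (desc K.right K.hom) (hdesc K.right K.hom))
      (fun K m ↦ by
        ext1
        exact ext_of_whisker ((StructuredArrow.w m).trans (hdesc K.right K.hom).symm))⟩⟩

end CategoryTheory

/-- **Derived adjunction.**  Let `(F ⊣ G)` be an adjunction between categories with weak
equivalences (containing the isomorphisms and with the two-out-of-three property).  If `F`
is left deformable (via a left deformation retract `(Q, q)` into a full subcategory on which
`F` preserves weak equivalences) and `G` is right deformable (via a right deformation
retract `(R, r)`), then the total derived functors `L F` (induced by `F ∘ Q`) and `R G`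
(induced by `G ∘ R`) exist and form an adjunction `(L F ⊣ R G)`. -/
theorem derived_adjunction
    {C D : Type*} [Category C] [Category D]
    (W : MorphismProperty C) (W' : MorphismProperty D)
    (hWiso : MorphismProperty.isomorphisms C ≤ W) [W.HasTwoOutOfThreeProperty]
    (hW'iso : MorphismProperty.isomorphisms D ≤ W') [W'.HasTwoOutOfThreeProperty]
    (F : C ⥤ D) (G : D ⥤ C) (adj : F ⊣ G)
    (PC : C → Prop)
    (hF : ∀ ⦃X Y : C⦄ (f : X ⟶ Y), PC X → PC Y → W f → W' (F.map f))
    (Q : C ⥤ C) (q : Q ⟶ 𝟭 C) (hQP : ∀ X, PC (Q.obj X)) (hq : ∀ X, W (q.app X))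
    (PD : D → Prop)
    (hG : ∀ ⦃X Y : D⦄ (f : X ⟶ Y), PD X → PD Y → W' f → W (G.map f))
    (R : D ⥤ D) (r : 𝟭 D ⟶ R) (hRP : ∀ X, PD (R.obj X)) (hr : ∀ X, W' (r.app X)) :
    ∃ (hinvF : W.IsInvertedBy (Q ⋙ F ⋙ W'.Q))
      (hinvG : W'.IsInvertedBy (R ⋙ G ⋙ W.Q)),
      Nonempty
        (Localization.Construction.lift (Q ⋙ F ⋙ W'.Q) hinvF ⊣
          Localization.Construction.lift (R ⋙ G ⋙ W.Q) hinvG) := by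
  have hQ {X Y : C} (f : X ⟶ Y) (hf : W f) : W (Q.map f) := by
    refine W.of_postcomp _ (q.app Y) (hq Y) ?_
    rw [q.naturality]
    exact W.comp_mem _ _ (hq X) hf
  have hR {X Y : D} (f : X ⟶ Y) (hf : W' f) : W' (R.map f) := by
    refine W'.of_precomp (r.app X) _ (hr X) ?_
    rw [← r.naturality]
    exact W'.comp_mem _ _ hf (hr Y)
  have hinvF : W.IsInvertedBy (Q ⋙ F ⋙ W'.Q) := fun X Y f hf ↦
    Localization.inverts W'.Q W' _ (hF _ (hQP X) (hQP Y) (hQ f hf))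
  have hinvG : W'.IsInvertedBy (R ⋙ G ⋙ W.Q) := fun X Y f hf ↦
    Localization.inverts W.Q W _ (hG _ (hRP X) (hRP Y) (hR f hf))
  refine ⟨hinvF, hinvG, ⟨?_⟩⟩
  let α : W.Q ⋙ Localization.Construction.lift (Q ⋙ F ⋙ W'.Q) hinvF ⟶ F ⋙ W'.Q :=
    (eqToIso (Localization.Construction.fac _ hinvF)).hom ≫ Functor.whiskerRight q (F ⋙ W'.Q)
  let β : G ⋙ W.Q ⟶ W'.Q ⋙ Localization.Construction.lift (R ⋙ G ⋙ W.Q) hinvG :=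
    Functor.whiskerRight r (G ⋙ W.Q) ≫ (eqToIso (Localization.Construction.fac _ hinvG)).inv
  have hα (X : C) : IsIso (α.app (Q.obj X)) := by
    have : IsIso (W'.Q.map (F.map (q.app (Q.obj X)))) :=
      Localization.inverts W'.Q W' _ (hF _ (hQP _) (hQP _) (hq _))
    exact IsIso.comp_isIso' inferInstance this
  have hβ (X : D) : IsIso (β.app (R.obj X)) := by
    have : IsIso (W.Q.map (G.map (r.app (R.obj X)))) :=
      Localization.inverts W.Q W _ (hG _ (hRP _) (hRP _) (hr _))
    exact IsIso.comp_isIso' this inferInstance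
  have := isLeftDerivedFunctor_of_leftDeformation W α q hq hα
  have := isRightDerivedFunctor_of_rightDeformation W' β r hr hβ
  have := isLeftDerivedFunctor_of_leftDeformation W
    ((Functor.associator _ _ _).inv ≫ Functor.whiskerRight α
      (Localization.Construction.lift (R ⋙ G ⋙ W.Q) hinvG)) q hq
    (fun X ↦ by dsimp; infer_instance)
  have := isRightDerivedFunctor_of_rightDeformation W'
    (Functor.whiskerRight β (Localization.Construction.lift (Q ⋙ F ⋙ W'.Q) hinvF) ≫
      (Functor.associator _ _ _).hom) r hr
    (fun X ↦ by dsimp; infer_instance)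
  exact adj.derived W W' α β
end

section
/- Let X ⊆ ℝⁿ be a compact subset and let N ⊆ ℝⁿ be any neighborhood of X (a subset containing X in its interior). Then the maps induced by inclusions of pairs are homotopy equivalences: (a) C^u(N, N∖X) → C^u(ℝⁿ, ℝⁿ∖X); and (b) C^u(N, N∖X) → C(Sⁿ, Sⁿ∖X), where Sⁿ denotes the one-point compactification of ℝⁿ based at the point at infinity. -/
open unitInterval Topology

/-- A continuous map is a homotopy equivalence if it admits a two-sided homotopy inverse. -/
def IsHomotopyEquiv {X Y : Type*} [TopologicalSpace X] [TopologicalSpace Y]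
    (f : C(X, Y)) : Prop :=
  ∃ g : C(Y, X), (g.comp f).Homotopic (ContinuousMap.id X) ∧
    (f.comp g).Homotopic (ContinuousMap.id Y)

section Cones

variable {P P' : Type*} [TopologicalSpace P] [TopologicalSpace P']

/-- The relation generating the unreduced mapping cone `C^u(P, Q)` of a pair `Q ⊆ P`:
the quotient of `{*} ⊔ (Q × [0,1]) ⊔ P` identifying `(q, 1)` with `q ∈ P` and `(q, 0)`
with the cone point `*`. -/
def UConeRel (P : Type*) (Q : Set P) :
    (Unit ⊕ (Q × I) ⊕ P) → (Unit ⊕ (Q × I) ⊕ P) → Prop := fun u v =>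
  (∃ q : Q, u = Sum.inr (Sum.inl (q, 1)) ∧ v = Sum.inr (Sum.inr (q : P))) ∨
  (∃ q : Q, u = Sum.inr (Sum.inl (q, 0)) ∧ v = Sum.inl ())

/-- The unreduced mapping cone of a pair `Q ⊆ P`. -/
abbrev UCone (P : Type*) [TopologicalSpace P] (Q : Set P) : Type _ :=
  Quot (UConeRel P Q)

/-- The relation generating the reduced mapping cone `C(P, Q)` of a pair `Q ⊆ P` with
basepoint `b ∈ Q`: the unreduced cone with the cone on the basepoint collapsed. -/
def RConeRel (P : Type*) (Q : Set P) (b : P) (hb : b ∈ Q) :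
    (Unit ⊕ (Q × I) ⊕ P) → (Unit ⊕ (Q × I) ⊕ P) → Prop := fun u v =>
  UConeRel P Q u v ∨
  (∃ t : I, u = Sum.inr (Sum.inl (⟨b, hb⟩, t)) ∧ v = Sum.inl ()) ∨
  (u = Sum.inr (Sum.inr b) ∧ v = Sum.inl ())

/-- The reduced mapping cone of a pair `Q ⊆ P` with basepoint `b ∈ Q`. -/
abbrev RCone (P : Type*) [TopologicalSpace P] (Q : Set P) (b : P) (hb : b ∈ Q) : Type _ :=
  Quot (RConeRel P Q b hb)

/-- The map of unreduced mapping cones induced by a map of pairs. -/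
def UCone.map {Q : Set P} {Q' : Set P'} (F : C(P, P')) (hF : Set.MapsTo F Q Q') :
    C(UCone P Q, UCone P' Q') :=
  ⟨Quot.lift
      (fun u => Quot.mk _
        (Sum.map id (Sum.map (fun qt => (⟨F qt.1, hF qt.1.2⟩, qt.2)) F) u))
      (by
        rintro u v (⟨q, rfl, rfl⟩ | ⟨q, rfl, rfl⟩) <;> apply Quot.sound
        · exact Or.inl ⟨⟨F q, hF q.2⟩, rfl, rfl⟩
        · exact Or.inr ⟨⟨F q, hF q.2⟩, rfl, rfl⟩),
    continuous_quot_lift _ (continuous_quot_mk.comp (by fun_prop))⟩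

/-- The map from an unreduced mapping cone to a reduced mapping cone induced by a map of
pairs. -/
def UCone.mapToR {Q : Set P} {Q' : Set P'} (F : C(P, P')) (hF : Set.MapsTo F Q Q')
    (b : P') (hb : b ∈ Q') :
    C(UCone P Q, RCone P' Q' b hb) :=
  ⟨Quot.lift
      (fun u => Quot.mk _
        (Sum.map id (Sum.map (fun qt => (⟨F qt.1, hF qt.1.2⟩, qt.2)) F) u))
      (by
        rintro u v (⟨q, rfl, rfl⟩ | ⟨q, rfl, rfl⟩) <;> apply Quot.sound
        · exact Or.inl (Or.inl ⟨⟨F q, hF q.2⟩, rfl, rfl⟩)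
        · exact Or.inl (Or.inr ⟨⟨F q, hF q.2⟩, rfl, rfl⟩)),
    continuous_quot_lift _ (continuous_quot_mk.comp (by fun_prop))⟩

end Cones

section Excision

open Set

variable {P N T : Type*}

/-- The relation on `{*} ⊔ (Q × [0,1]) ⊔ P` whose quotient is the mapping cone of `(P, Q)` with
the cone on `B ∩ Q` collapsed to the cone point. -/
def CollapsedConeRel (P : Type*) (Q B : Set P) (u v : Unit ⊕ (Q × I) ⊕ P) : Prop :=
  UConeRel P Q u v ∨
  (∃ q : Q, (q : P) ∈ B ∧ ∃ t : I, u = Sum.inr (Sum.inl (q, t)) ∧ v = Sum.inl ()) ∨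
  (∃ q : Q, (q : P) ∈ B ∧ u = Sum.inr (Sum.inr (q : P)) ∧ v = Sum.inl ())

theorem collapsedConeRel_empty (Q : Set P) : CollapsedConeRel P Q ∅ = UConeRel P Q := by
  funext u v
  simp [CollapsedConeRel]

theorem collapsedConeRel_singleton (Q : Set P) (b : P) (hb : b ∈ Q) :
    CollapsedConeRel P Q {b} = RConeRel P Q b hb := by
  funext u v
  simp [CollapsedConeRel, RConeRel, hb]

open Classical in
/-- The point of a quotient of `{*} ⊔ (Q × [0,1]) ⊔ P` at height `t` above `p`; over points
outside `Q` the height is ignored. -/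
noncomputable def conePoint {Q : Set P} (r : (Unit ⊕ (Q × I) ⊕ P) → (Unit ⊕ (Q × I) ⊕ P) → Prop)
    (p : P) (t : I) : Quot r :=
  if h : p ∈ Q then Quot.mk r (Sum.inr (Sum.inl (⟨p, h⟩, t))) else Quot.mk r (Sum.inr (Sum.inr p))

section ConePoint

variable {Q B : Set P} {r : (Unit ⊕ (Q × I) ⊕ P) → (Unit ⊕ (Q × I) ⊕ P) → Prop}

theorem conePoint_of_mem {p : P} (h : p ∈ Q) (t : I) :
    conePoint r p t = Quot.mk r (Sum.inr (Sum.inl (⟨p, h⟩, t))) := dif_pos h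

theorem conePoint_one (hr : r = CollapsedConeRel P Q B) (p : P) :
    conePoint r p 1 = Quot.mk r (Sum.inr (Sum.inr p)) := by
  subst hr
  by_cases h : p ∈ Q
  · rw [conePoint_of_mem h]
    exact Quot.sound (Or.inl (Or.inl ⟨⟨p, h⟩, rfl, rfl⟩))
  · exact dif_neg h

theorem conePoint_zero (hr : r = CollapsedConeRel P Q B) {p : P} (h : p ∈ Q) :
    conePoint r p 0 = Quot.mk r (Sum.inl ()) := by
  subst hr
  rw [conePoint_of_mem h]
  exact Quot.sound (Or.inl (Or.inr ⟨⟨p, h⟩, rfl, rfl⟩))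

theorem conePoint_of_mem_collapsed (hr : r = CollapsedConeRel P Q B) {p : P} (h : p ∈ Q)
    (hB : p ∈ B) (t : I) : conePoint r p t = Quot.mk r (Sum.inl ()) := by
  subst hr
  rw [conePoint_of_mem h]
  exact Quot.sound (Or.inr (Or.inl ⟨⟨p, h⟩, hB, t, rfl, rfl⟩))

variable [TopologicalSpace P] [TopologicalSpace T]

theorem continuous_conePoint (hr : r = CollapsedConeRel P Q B) (hQ : IsOpen Q)
    {a : T → P} {τ : T → I} (ha : Continuous a) (hτ : Continuous τ) {W : Set T} (hW : IsOpen W)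
    (hW1 : ∀ z ∈ W, τ z = 1) (hWQ : ∀ z ∉ W, a z ∈ Q) :
    Continuous fun z => conePoint r (a z) (τ z) := by
  rw [continuous_iff_continuousAt]
  intro z
  by_cases hz : z ∈ W
  · have hc : Continuous fun z => Quot.mk r (Sum.inr (Sum.inr (a z))) :=
      continuous_quot_mk.comp (by fun_prop)
    refine hc.continuousAt.congr ?_
    filter_upwards [hW.mem_nhds hz] with y hy
    rw [hW1 y hy, conePoint_one hr]
  · have hO : IsOpen (a ⁻¹' Q) := hQ.preimage ha
    refine ContinuousOn.continuousAt ?_ (hO.mem_nhds (hWQ z hz))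
    rw [continuousOn_iff_continuous_domRestrict]
    have hc : Continuous fun y : a ⁻¹' Q =>
        Quot.mk r (Sum.inr (Sum.inl ((⟨a y, y.2⟩ : Q), τ y))) :=
      continuous_quot_mk.comp (by fun_prop)
    exact hc.congr fun y => (conePoint_of_mem (p := a y) y.2 _).symm

/-- Rescaling the cone coordinate by a function that is `1` near the complement of `Q` is
homotopic to the identity. -/
theorem homotopic_id_of_rescale (hr : r = CollapsedConeRel P Q B) (hQ : IsOpen Q)
    (φ : C(P, I)) {W : Set P} (hW : IsOpen W) (hQW : Qᶜ ⊆ W) (hφ : ∀ x ∈ W, φ x = 1)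
    (k : C(Quot r, Quot r)) (hk : k (Quot.mk r (Sum.inl ())) = Quot.mk r (Sum.inl ()))
    (hkQ : ∀ (q : Q) (t : I), k (Quot.mk r (Sum.inr (Sum.inl (q, t)))) = conePoint r q (t * φ q))
    (hkP : ∀ x : P, k (Quot.mk r (Sum.inr (Sum.inr x))) = conePoint r x (φ x)) :
    k.Homotopic (ContinuousMap.id _) := by
  let ψ : P → I → I := fun x s => unitInterval.symm (s * unitInterval.symm (φ x))
  have hψ : Continuous fun xs : P × I => ψ xs.1 xs.2 := by fun_prop
  have hψ0 : ∀ x, ψ x 0 = 1 := fun x => by simp [ψ]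
  have hψ1 : ∀ x, ψ x 1 = φ x := fun x => by simp [ψ]
  let onBase : C(P × I, Quot r) := ⟨fun xs => conePoint r xs.1 (ψ xs.1 xs.2),
    continuous_conePoint hr hQ continuous_fst hψ (hW.preimage continuous_fst)
      (fun z hz => by simp [ψ, hφ z.1 hz]) (fun z hz => by_contra fun h => hz (hQW h))⟩
  let onCone : C((Q × I) × I, Quot r) :=
    ⟨fun z => Quot.mk r (Sum.inr (Sum.inl (z.1.1, z.1.2 * ψ z.1.1 z.2))),
      continuous_quot_mk.comp (by
        have : Continuous fun z : (Q × I) × I => ψ z.1.1 z.2 :=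
          hψ.comp (f := fun z : (Q × I) × I => ((z.1.1 : P), z.2)) (by fun_prop)
        fun_prop)⟩
  have hcone : ∀ (q : Q) (t s : I), onCone ((q, t), s) = conePoint r q (t * ψ q s) :=
    fun q t s => (conePoint_of_mem q.2 _).symm
  have hbase : ∀ (x : P) (s : I), onBase (x, s) = conePoint r x (ψ x s) := fun _ _ => rfl
  let H : Unit ⊕ (Q × I) ⊕ P → C(I, Quot r) :=
    Sum.elim (fun _ => ContinuousMap.const I (Quot.mk r (Sum.inl ())))
      (Sum.elim onCone.curry onBase.curry)
  have hH : Continuous H := by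
    refine continuous_const.sumElim (Continuous.sumElim ?_ ?_) <;> exact ContinuousMap.continuous _
  have hHr : ∀ u v, r u v → H u = H v := by
    intro u v huv
    ext s
    rw [hr] at huv
    rcases huv with (⟨q, rfl, rfl⟩ | ⟨q, rfl, rfl⟩) | ⟨q, hq, t, rfl, rfl⟩ | ⟨q, hq, rfl, rfl⟩
    · change onCone ((q, 1), s) = onBase (q, s)
      rw [hcone, hbase, one_mul]
    · change onCone ((q, 0), s) = _
      rw [hcone, zero_mul]
      exact conePoint_zero hr q.2
    · change onCone ((q, t), s) = _
      rw [hcone]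
      exact conePoint_of_mem_collapsed hr q.2 hq _
    · exact conePoint_of_mem_collapsed hr q.2 hq _
  let K : C(Quot r, C(I, Quot r)) := ⟨Quot.lift H hHr, continuous_quot_lift _ hH⟩
  refine ContinuousMap.Homotopic.symm ⟨⟨K.uncurry.comp ContinuousMap.prodSwap, ?_, ?_⟩⟩
  · rintro ⟨_ | ⟨q, t⟩ | x⟩
    · rfl
    · change onCone ((q, t), 0) = _
      rw [hcone, hψ0, mul_one]
      exact conePoint_of_mem q.2 t
    · change conePoint r x (ψ x 0) = _
      rw [hψ0]
      exact conePoint_one hr x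
  · rintro ⟨_ | ⟨q, t⟩ | x⟩
    · exact hk.symm
    · change onCone ((q, t), 1) = _
      rw [hcone, hψ1]
      exact (hkQ q t).symm
    · change conePoint r x (ψ x 1) = _
      rw [hψ1]
      exact (hkP x).symm

end ConePoint

variable [TopologicalSpace N]

open Classical in
/-- The point at height `t` above `x ∈ P` in the cone of a pair mapping to `P` by `j`, or the cone
point if `x` is not in the range of `j`. -/
noncomputable def extendedConePoint (QN : Set N) (j : N → P) (x : P) (t : I) : UCone N QN :=
  if h : x ∈ range j then conePoint (UConeRel N QN) h.choose t else Quot.mk _ (Sum.inl ())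

section ExtendedConePoint

variable {Q : Set P} {QN : Set N} {j : N → P}

theorem extendedConePoint_apply (hj : Function.Injective j) (z : N) (t : I) :
    extendedConePoint QN j (j z) t = conePoint (UConeRel N QN) z t := by
  have h : j z ∈ range j := mem_range_self z
  rw [extendedConePoint, dif_pos h, hj h.choose_spec]

theorem extendedConePoint_of_notMem {x : P} (h : x ∉ range j) (t : I) :
    extendedConePoint QN j x t = Quot.mk _ (Sum.inl ()) := dif_neg h

theorem extendedConePoint_zero (hj : Function.Injective j) (hQ : ∀ z, z ∈ QN ↔ j z ∈ Q)
    {x : P} (hx : x ∈ Q) : extendedConePoint QN j x 0 = Quot.mk _ (Sum.inl ()) := by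
  by_cases h : x ∈ range j
  · obtain ⟨z, rfl⟩ := h
    rw [extendedConePoint_apply hj]
    exact conePoint_zero (collapsedConeRel_empty QN).symm ((hQ z).2 hx)
  · exact extendedConePoint_of_notMem h 0

variable [TopologicalSpace P] [TopologicalSpace T]

theorem continuous_extendedConePoint (hj : IsEmbedding j) (hQ : ∀ z, z ∈ QN ↔ j z ∈ Q)
    (hQo : IsOpen Q) {a : T → P} {τ : T → I} (ha : Continuous a) (hτ : Continuous τ)
    {W V : Set T} (hW : IsOpen W) (hV : IsOpen V) (hW1 : ∀ z ∈ W, τ z = 1)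
    (hWQ : ∀ z ∉ W, a z ∈ Q) (hV0 : ∀ z ∈ V, τ z = 0)
    (hVj : ∀ z ∉ V, a z ∈ interior (range j)) :
    Continuous fun z => extendedConePoint QN j (a z) (τ z) := by
  rw [continuous_iff_continuousAt]
  intro z
  by_cases hz : z ∈ V
  · refine (continuousAt_const (y := Quot.mk _ (Sum.inl ()))).congr ?_
    filter_upwards [hV.mem_nhds hz] with y hy
    have hyQ : a y ∈ Q := hWQ y fun h => by simpa [hV0 y hy] using hW1 y h
    rw [hV0 y hy, extendedConePoint_zero hj.injective hQ hyQ]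
  · have hO : IsOpen (a ⁻¹' interior (range j)) := isOpen_interior.preimage ha
    refine ContinuousOn.continuousAt ?_ (hO.mem_nhds (hVj z hz))
    rw [continuousOn_iff_continuous_domRestrict]
    choose lift hlift using fun y : a ⁻¹' interior (range j) => interior_subset y.2
    have hlc : Continuous lift := by
      rw [hj.continuous_iff, show j ∘ lift = a ∘ Subtype.val from funext hlift]
      fun_prop
    have hQN : IsOpen QN := by
      rw [show QN = j ⁻¹' Q from Set.ext hQ]
      exact hQo.preimage hj.continuous
    refine (continuous_conePoint (collapsedConeRel_empty QN).symm hQN hlc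
      (hτ.comp continuous_subtype_val) (hW.preimage continuous_subtype_val)
      (fun y hy => hW1 y hy) (fun y hy => ?_)).congr fun y => ?_
    · rw [hQ, hlift]
      exact hWQ y hy
    · rw [← extendedConePoint_apply hj.injective, hlift]
      rfl

end ExtendedConePoint

variable [TopologicalSpace P]

/-- Excision for mapping cones with the cone on `B` collapsed in the target, given a cutoff
function `φ` that is `1` near the complement of `Q` and `0` near the complement of the interior of
`N` and on `B`. -/
theorem isHomotopyEquiv_of_cutoff {Q B : Set P} {QN : Set N}
    {r : (Unit ⊕ (Q × I) ⊕ P) → (Unit ⊕ (Q × I) ⊕ P) → Prop} (hr : r = CollapsedConeRel P Q B)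
    {j : N → P} (hj : IsEmbedding j) (hQ : ∀ z, z ∈ QN ↔ j z ∈ Q) (hQo : IsOpen Q)
    (φ : C(P, I)) {W V : Set P} (hW : IsOpen W) (hV : IsOpen V) (hQW : Qᶜ ⊆ W)
    (hφW : ∀ x ∈ W, φ x = 1) (hφV : ∀ x ∈ V, φ x = 0) (hVj : ∀ x ∉ V, x ∈ interior (range j))
    (hφB : ∀ x ∈ B, φ x = 0) (f : C(UCone N QN, Quot r))
    (hf : f (Quot.mk _ (Sum.inl ())) = Quot.mk r (Sum.inl ()))
    (hfQ : ∀ (q : QN) (t : I), f (Quot.mk _ (Sum.inr (Sum.inl (q, t)))) =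
      Quot.mk r (Sum.inr (Sum.inl (⟨j q, (hQ q).1 q.2⟩, t))))
    (hfN : ∀ z : N, f (Quot.mk _ (Sum.inr (Sum.inr z))) = Quot.mk r (Sum.inr (Sum.inr (j z)))) :
    IsHomotopyEquiv f := by
  have hWQ : ∀ x ∉ W, x ∈ Q := fun x hx => by_contra fun h => hx (hQW h)
  have hfc : ∀ z t, f (conePoint _ z t) = conePoint r (j z) t := by
    intro z t
    by_cases h : z ∈ QN
    · rw [conePoint_of_mem h, hfQ, conePoint_of_mem ((hQ z).1 h)]
    · rw [conePoint, dif_neg h, hfN, conePoint, dif_neg (mt (hQ z).2 h)]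
  have hrange : ∀ x ∉ range j, φ x = 0 := fun x hx =>
    hφV x (by_contra fun h => hx (interior_subset (hVj x h)))
  have hfe : ∀ x ∈ Q, ∀ t, f (extendedConePoint QN j x (t * φ x)) = conePoint r x (t * φ x) := by
    intro x hx t
    by_cases h : x ∈ range j
    · obtain ⟨z, rfl⟩ := h
      rw [extendedConePoint_apply hj.injective, hfc]
    · rw [extendedConePoint_of_notMem h, hf, hrange x h, mul_zero, conePoint_zero hr hx]
  let onCone : C(Q × I, UCone N QN) := ⟨fun z => extendedConePoint QN j z.1 (z.2 * φ z.1),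
    continuous_extendedConePoint (W := ∅) hj hQ hQo (by fun_prop) (by fun_prop) isOpen_empty
      (hV.preimage (continuous_subtype_val.comp continuous_fst)) (by simp) (fun z _ => z.1.2)
      (fun z hz => by rw [hφV z.1 hz, mul_zero]) (fun z hz => hVj z.1 hz)⟩
  let onBase : C(P, UCone N QN) := ⟨fun x => extendedConePoint QN j x (φ x),
    continuous_extendedConePoint hj hQ hQo continuous_id φ.continuous hW hV hφW hWQ hφV hVj⟩
  let G : Unit ⊕ (Q × I) ⊕ P → UCone N QN :=
    Sum.elim (fun _ => Quot.mk _ (Sum.inl ())) (Sum.elim onCone onBase)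
  have hG : Continuous G := continuous_const.sumElim (onCone.continuous.sumElim onBase.continuous)
  have hGr : ∀ u v, r u v → G u = G v := by
    intro u v huv
    rw [hr] at huv
    rcases huv with (⟨q, rfl, rfl⟩ | ⟨q, rfl, rfl⟩) | ⟨q, hq, t, rfl, rfl⟩ | ⟨q, hq, rfl, rfl⟩
    · change extendedConePoint QN j q (1 * φ q) = extendedConePoint QN j q (φ q)
      rw [one_mul]
    · change extendedConePoint QN j q (0 * φ q) = _
      rw [zero_mul]
      exact extendedConePoint_zero hj.injective hQ q.2
    · change extendedConePoint QN j q (t * φ q) = _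
      rw [hφB q hq, mul_zero]
      exact extendedConePoint_zero hj.injective hQ q.2
    · change extendedConePoint QN j q (φ q) = _
      rw [hφB q hq]
      exact extendedConePoint_zero hj.injective hQ q.2
  let g : C(Quot r, UCone N QN) := ⟨Quot.lift G hGr, continuous_quot_lift _ hG⟩
  refine ⟨g, ?_, ?_⟩
  · have hQN : IsOpen QN := by
      rw [show QN = j ⁻¹' Q from Set.ext hQ]
      exact hQo.preimage hj.continuous
    refine homotopic_id_of_rescale (collapsedConeRel_empty QN).symm hQN
      (φ.comp ⟨j, hj.continuous⟩) (hW.preimage hj.continuous)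
      (fun z hz => hQW (mt (hQ z).2 hz)) (fun z hz => hφW _ hz) _ ?_ ?_ ?_
    · rw [ContinuousMap.comp_apply, hf]
      rfl
    · intro q t
      rw [ContinuousMap.comp_apply, hfQ]
      exact extendedConePoint_apply hj.injective _ _
    · intro z
      rw [ContinuousMap.comp_apply, hfN]
      exact extendedConePoint_apply hj.injective _ _
  · refine homotopic_id_of_rescale hr hQo φ hW hQW hφW _ hf (fun q t => hfe q q.2 t) fun x => ?_
    change f (extendedConePoint QN j x (φ x)) = _
    by_cases hx : x ∈ range j
    · obtain ⟨z, rfl⟩ := hx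
      rw [extendedConePoint_apply hj.injective, hfc]
    · have hxQ : x ∈ Q := hWQ x fun h => by simpa [hrange x hx] using hφW x h
      simpa using hfe x hxQ 1

theorem exists_cutoff [NormalSpace P] {A U : Set P} (hA : IsClosed A) (hU : IsOpen U)
    (hAU : A ⊆ U) : ∃ (φ : C(P, I)) (W V : Set P), IsOpen W ∧ IsOpen V ∧ A ⊆ W ∧
      (∀ x ∈ W, φ x = 1) ∧ (∀ x ∈ V, φ x = 0) ∧ ∀ x ∉ V, x ∈ U := by
  obtain ⟨W, hW, hAW, hWU⟩ := normal_exists_closure_subset hA hU hAU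
  obtain ⟨O, hO, hWO, hOU⟩ := normal_exists_closure_subset isClosed_closure hU hWU
  obtain ⟨φ, hφ0, hφ1, hφI⟩ := exists_continuous_zero_one_of_isClosed hO.isClosed_compl
    isClosed_closure (disjoint_compl_left_iff_subset.2 hWO)
  refine ⟨⟨fun x => ⟨φ x, hφI x⟩, by fun_prop⟩, W, (closure O)ᶜ, hW,
    isClosed_closure.isOpen_compl, hAW, fun x hx => Subtype.ext (hφ1 (subset_closure hx)),
    fun x hx => Subtype.ext (hφ0 fun h => hx (subset_closure h)), fun x hx => hOU ?_⟩
  simpa using hx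

end Excision

/-- Excision for mapping cones: if `X ⊆ ℝⁿ` is compact and `N` is any neighborhood of `X`,
then the maps of mapping cones induced by the inclusions of pairs
`(N, N∖X) → (ℝⁿ, ℝⁿ∖X)` and `(N, N∖X) → (Sⁿ, Sⁿ∖X)` are homotopy equivalences, where
`Sⁿ` is the one-point compactification of `ℝⁿ` based at `∞`. -/
theorem cone_inclusions_homotopyEquiv (n : ℕ)
    (X N : Set (EuclideanSpace ℝ (Fin n))) (hX : IsCompact X) (hN : X ⊆ interior N) :
    IsHomotopyEquiv
      (UCone.map (P := N) (Q := {z : N | (z : EuclideanSpace ℝ (Fin n)) ∉ X})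
        (Q' := {z : EuclideanSpace ℝ (Fin n) | z ∉ X})
        ⟨Subtype.val, continuous_subtype_val⟩ (fun z hz => hz)) ∧
    IsHomotopyEquiv
      (UCone.mapToR (P := N) (Q := {z : N | (z : EuclideanSpace ℝ (Fin n)) ∉ X})
        (Q' := {z : OnePoint (EuclideanSpace ℝ (Fin n)) |
          z ∉ (fun x : EuclideanSpace ℝ (Fin n) => (x : OnePoint (EuclideanSpace ℝ (Fin n)))) '' X})
        ⟨fun z => ((z : EuclideanSpace ℝ (Fin n)) : OnePoint (EuclideanSpace ℝ (Fin n))),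
          OnePoint.continuous_coe.comp continuous_subtype_val⟩
        (fun z hz => by
          simp only [Set.mem_setOf_eq, Set.mem_image, not_exists, not_and]
          intro x hx hxz
          exact hz (OnePoint.coe_injective hxz ▸ hx))
        OnePoint.infty
        (by
          simp only [Set.mem_setOf_eq, Set.mem_image, not_exists, not_and]
          intro x _ hx
          exact (OnePoint.coe_ne_infty x) hx)) := by
  constructor
  · obtain ⟨φ, W, V, hW, hV, hXW, hφW, hφV, hVN⟩ :=
      exists_cutoff hX.isClosed isOpen_interior hN
    refine isHomotopyEquiv_of_cutoff (collapsedConeRel_empty _).symm IsEmbedding.subtypeVal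
      (fun z => Iff.rfl) hX.isClosed.isOpen_compl φ hW hV ?_ hφW hφV ?_ (by simp) _ rfl
      (fun _ _ => rfl) (fun _ => rfl)
    · exact fun x hx => hXW (not_not.1 hx)
    · simpa using hVN
  · have hX' : IsClosed ((fun x : EuclideanSpace ℝ (Fin n) =>
        (x : OnePoint (EuclideanSpace ℝ (Fin n)))) '' X) :=
      (hX.image OnePoint.continuous_coe).isClosed
    have hU : IsOpen ((fun x : EuclideanSpace ℝ (Fin n) =>
        (x : OnePoint (EuclideanSpace ℝ (Fin n)))) '' interior N) :=
      OnePoint.isOpenEmbedding_coe.isOpenMap _ isOpen_interior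
    obtain ⟨φ, W, V, hW, hV, hXW, hφW, hφV, hVN⟩ := exists_cutoff hX' hU (Set.image_mono hN)
    refine isHomotopyEquiv_of_cutoff (collapsedConeRel_singleton _ _ _).symm
      (OnePoint.isOpenEmbedding_coe.isEmbedding.comp IsEmbedding.subtypeVal)
      (fun z => ?_) hX'.isOpen_compl φ hW hV ?_ hφW hφV ?_ ?_ _ rfl
      (fun _ _ => rfl) (fun _ => rfl)
    · simp
    · exact fun x hx => hXW (not_not.1 hx)
    · refine fun x hx => interior_maximal ?_ hU (hVN x hx)
      rintro _ ⟨y, hy, rfl⟩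
      exact ⟨⟨y, interior_subset hy⟩, rfl⟩
    · rintro _ rfl
      refine hφV _ (by_contra fun h => ?_)
      obtain ⟨y, -, hy⟩ := hVN _ h
      exact OnePoint.coe_ne_infty y hy
end
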